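/- arXiv:2202.13014 — 7 statements merged into one kernel-verified Lean document; each statement's English description precedes it below -/
import Mathlib

section
/- For every first-order formula φ(x,y) in the language of graphs there exist natural numbers r and t such that every finite graph G admits a coloring c : V(G) → {1,…,t} with the following property: for all vertices u, v, u', v' ∈ V(G) with dist^G(u,v) > r, dist^G(u',v') > r, c(u) = c(u') and c(v) = c(v'), one has G ⊨ φ(u,v) if and only if G ⊨ φ(u',v'). (That is, for any two vertices at distance greater than r, whether φ holds of them depends only on their colors.) -/
open FirstOrder

namespace GaifmanAux

/-- `u` and `v` are at distance at most `r`. -/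
def Near {V : Type} (G : SimpleGraph V) (r : ℕ) (u v : V) : Prop := G.edist u v ≤ (r : ℕ∞)

lemma Near.symm {V : Type} {G : SimpleGraph V} {r : ℕ} {u v : V} (h : Near G r u v) :
    Near G r v u := by
  unfold Near at *
  rwa [SimpleGraph.edist_comm]

lemma Near.mono {V : Type} {G : SimpleGraph V} {r s : ℕ} {u v : V} (h : Near G r u v)
    (hrs : r ≤ s) : Near G s u v :=
  le_trans h (by exact_mod_cast hrs)

lemma Near.trans {V : Type} {G : SimpleGraph V} {r s : ℕ} {u v w : V} (h : Near G r u v)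
    (h' : Near G s v w) : Near G (r + s) u w := by
  unfold Near at *
  push_cast
  exact le_trans SimpleGraph.edist_triangle (add_le_add h h')

/-- The part of the tuple `a` with label `k`. -/
def mask {I V : Type} (p : I → ℕ) (k : ℕ) (a : I → V) : I → Option V :=
  fun i => if p i = k then some (a i) else none

/-- A property of tuples in graphs is determined by colors of far-apart parts. -/
def Loc {I : Type} (P : ∀ V : Type, SimpleGraph V → (I → V) → Prop) : Prop :=
  ∃ (r : ℕ) (K : Type) (_ : Finite K), ∀ (V : Type) (G : SimpleGraph V),
    ∃ C : (I → Option V) → K, ∀ (p : I → ℕ) (a b : I → V),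
      (∀ i j, p i ≠ p j → ¬ Near G r (a i) (a j)) →
      (∀ i j, p i ≠ p j → ¬ Near G r (b i) (b j)) →
      (∀ k, C (mask p k a) = C (mask p k b)) →
      (P V G a ↔ P V G b)

lemma Loc.reindex {I J : Type} (e : I → J)
    {P : ∀ V : Type, SimpleGraph V → (I → V) → Prop} (h : Loc P) :
    Loc (fun V G (a : J → V) => P V G (a ∘ e)) := by
  obtain ⟨r, K, hK, h⟩ := h
  refine ⟨r, K, hK, fun V G => ?_⟩
  obtain ⟨C, hC⟩ := h V G
  refine ⟨fun f => C (f ∘ e), fun p a b ha hb hab => ?_⟩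
  exact hC (p ∘ e) (a ∘ e) (b ∘ e) (fun i j => ha _ _) (fun i j => hb _ _) hab

lemma Loc.congr {I : Type} {P Q : ∀ V : Type, SimpleGraph V → (I → V) → Prop} (h : Loc P)
    (hPQ : ∀ V G a, P V G a ↔ Q V G a) : Loc Q := by
  have : P = Q := by
    funext V G a
    exact propext (hPQ V G a)
  rwa [← this]

lemma Loc.falsum {I : Type} : Loc (fun V _ (_ : I → V) => False) :=
  ⟨0, Unit, inferInstance, fun _ _ => ⟨fun _ => (), fun _ _ _ _ _ _ => Iff.rfl⟩⟩

lemma Loc.imp {I : Type} {P Q : ∀ V : Type, SimpleGraph V → (I → V) → Prop} (hP : Loc P)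
    (hQ : Loc Q) : Loc (fun V G a => P V G a → Q V G a) := by
  obtain ⟨r, K, hK, h⟩ := hP
  obtain ⟨r', K', hK', h'⟩ := hQ
  refine ⟨max r r', K × K', inferInstance, fun V G => ?_⟩
  obtain ⟨C, hC⟩ := h V G
  obtain ⟨C', hC'⟩ := h' V G
  refine ⟨fun f => (C f, C' f), fun p a b ha hb hab => ?_⟩
  have h1 := hC p a b (fun i j hij hn => ha i j hij (hn.mono (le_max_left _ _)))
    (fun i j hij hn => hb i j hij (hn.mono (le_max_left _ _))) (fun k => (Prod.ext_iff.1 (hab k)).1)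
  have h2 := hC' p a b (fun i j hij hn => ha i j hij (hn.mono (le_max_right _ _)))
    (fun i j hij hn => hb i j hij (hn.mono (le_max_right _ _)))
    (fun k => (Prod.ext_iff.1 (hab k)).2)
  exact imp_congr h1 h2

lemma Loc.atom {I : Type} (i j : I) (R : ∀ V : Type, SimpleGraph V → V → V → Prop)
    (hR : ∀ V G u v, R V G u v → Near G 1 u v) :
    Loc (fun V G (a : I → V) => R V G (a i) (a j)) := by
  refine ⟨1, Prop, inferInstance, fun V G => ?_⟩
  refine ⟨fun f => ∃ x y, f i = some x ∧ f j = some y ∧ R V G x y, fun p a b ha hb hab => ?_⟩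
  by_cases hij : p i = p j
  · have := hab (p j)
    simpa [mask, hij] using this
  · exact iff_of_false (fun h => ha i j hij (hR _ _ _ _ h)) (fun h => hb i j hij (hR _ _ _ _ h))

lemma scatter {V : Type} [Nonempty V] (G : SimpleGraph V) (S : Set V) (d n : ℕ) :
    (∃ s : Fin (n + 1) → V, (∀ j, s j ∈ S) ∧ ∀ i j, i ≠ j → ¬ Near G d (s i) (s j)) ∨
    (∃ s : Fin n → V, ∀ y ∈ S, ∃ j, Near G d y (s j)) := by
  induction n with
  | zero =>
    by_cases hS : ∃ y, y ∈ S
    · obtain ⟨y, hy⟩ := hS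
      refine Or.inl ⟨fun _ => y, fun _ => hy, fun i j hij => ?_⟩
      exact absurd (Subsingleton.elim (α := Fin 1) i j) hij
    · exact Or.inr ⟨fun _ => Classical.arbitrary V, fun y hy => absurd ⟨y, hy⟩ hS⟩
  | succ n ih =>
    rcases ih with ⟨s, hs, hd⟩ | ⟨s, hs⟩
    · by_cases hc : ∀ y ∈ S, ∃ j, Near G d y (s j)
      · exact Or.inr ⟨s, hc⟩
      · push Not at hc
        obtain ⟨y, hy, hf⟩ := hc
        refine Or.inl ⟨Fin.cons y s, fun j => ?_, fun i j hij => ?_⟩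
        · refine Fin.cases ?_ (fun j => ?_) j
          · simpa using hy
          · simpa using hs j
        · revert hij
          refine Fin.cases ?_ (fun i => ?_) i <;> refine Fin.cases ?_ (fun j => ?_) j
          · simp
          · intro _
            simpa using hf j
          · intro _ h
            exact hf i (by simpa using h.symm)
          · intro hij
            simpa using hd i j (fun h => hij (by rw [h]))
    · refine Or.inr ⟨Fin.cons (Classical.arbitrary V) s, fun y hy => ?_⟩
      obtain ⟨j, hj⟩ := hs y hy
      exact ⟨j.succ, by simpa using hj⟩

/-- Extension of a function by a value at `none`. -/
def ext {I V : Type} (a : I → V) (y : V) : Option I → V := fun o => o.elim y a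

lemma mask_ext_eq {I V : Type} (p : I → ℕ) (k : ℕ) (a : I → V) (y : V) :
    mask (ext p k) k (ext a y) = ext (mask p k a) (some y) := by
  funext o
  cases o with
  | none => simp [mask, ext]
  | some i => rfl

lemma mask_ext_ne {I V : Type} (p : I → ℕ) (k l : ℕ) (h : l ≠ k) (a : I → V) (y : V) :
    mask (ext p k) l (ext a y) = ext (mask p l a) none := by
  funext o
  cases o with
  | none => simp [mask, ext, h.symm]
  | some i => rfl

lemma sep_ext {I V : Type} {G : SimpleGraph V} {r : ℕ} {p : I → ℕ} {k : ℕ} {a : I → V} {y : V}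
    (ha : ∀ i j, p i ≠ p j → ¬ Near G r (a i) (a j))
    (hy : ∀ i, p i ≠ k → ¬ Near G r (a i) y) :
    ∀ i j, ext p k i ≠ ext p k j → ¬ Near G r (ext a y i) (ext a y j) := by
  intro i j hij hn
  cases i with
  | none =>
    cases j with
    | none => exact hij rfl
    | some j => exact hy j (fun h => hij h.symm) hn.symm
  | some i =>
    cases j with
    | none => exact hy i hij hn
    | some j => exact ha i j hij hn

/-- Far from every entry of the partial tuple `f`. -/
def Far {I V : Type} (G : SimpleGraph V) (r : ℕ) (f : I → Option V) (y : V) : Prop :=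
  ∀ i x, f i = some x → ¬ Near G r x y

lemma exists_far_iff {I V : Type} [Finite I] [Nonempty V] (G : SimpleGraph V) (S : Set V) (r : ℕ) :
    ∃ F : (I → Option V) → Fin (Nat.card I) → Prop, ∀ (p : I → ℕ) (a b : I → V),
      (∀ i j, p i ≠ p j → ¬ Near G (6 * r) (b i) (b j)) →
      (∀ k, F (mask p k a) = F (mask p k b)) →
      (∃ y ∈ S, ∀ i, ¬ Near G r (a i) y) → (∃ y ∈ S, ∀ i, ¬ Near G r (b i) y) := by
  rcases scatter G S (2 * r) (Nat.card I) with ⟨s, hs, hd⟩ | ⟨s, hs⟩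
  · refine ⟨fun _ _ => True, fun p a b _ _ _ => ?_⟩
    by_contra! hc
    choose f hf using fun j => hc (s j) (hs j)
    have hinj : Function.Injective f := by
      intro i j hij
      by_contra hne
      have h1 := hf i
      have h2 := hf j
      rw [hij] at h1
      exact hd i j hne ((h1.symm.trans h2).mono (by omega))
    have := Nat.card_le_card_of_injective f hinj
    simp at this
  · refine ⟨fun f j => ∃ y ∈ S, Near G (2 * r) y (s j) ∧ Far G r f y,
      fun p a b hb hab => ?_⟩
    rintro ⟨y, hy, hf⟩
    obtain ⟨j, hj⟩ := hs y hy
    have key : ∀ k, ∃ y ∈ S, Near G (2 * r) y (s j) ∧ Far G r (mask p k b) y := by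
      intro k
      refine cast (congrFun (hab k) j) ?_
      refine ⟨y, hy, hj, fun i x hx => ?_⟩
      have : a i = x := by
        by_cases h : p i = k
        · simpa [mask, h] using hx
        · simp [mask, h] at hx
      exact this ▸ hf i
    by_cases hcl : ∃ i, Near G (3 * r) (b i) (s j)
    · obtain ⟨i, hi⟩ := hcl
      obtain ⟨z, hz, hzj, hzf⟩ := key (p i)
      refine ⟨z, hz, fun i' hn => ?_⟩
      by_cases h : p i' = p i
      · exact hzf i' (b i') (by simp [mask, h]) hn
      · exact hb i' i h (((hn.trans hzj).trans hi.symm).mono (by omega))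
    · obtain ⟨z, hz, hzj, hzf⟩ := key 0
      exact ⟨z, hz, fun i' hn => hcl ⟨i', (hn.trans hzj).mono (by omega)⟩⟩

lemma Loc.all {I : Type} [Finite I] {Q : ∀ V : Type, SimpleGraph V → (Option I → V) → Prop}
    (hQ : Loc Q) : Loc (fun V G (a : I → V) => ∀ y, Q V G (ext a y)) := by
  obtain ⟨r, K, hK, h⟩ := hQ
  refine ⟨6 * r, K × Set K × (K → Fin (Nat.card I) → Prop), inferInstance, fun V G => ?_⟩
  obtain ⟨C, hC⟩ := h V G
  rcases isEmpty_or_nonempty V with hV | hV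
  · refine ⟨fun f => (C (ext f none), ∅, fun _ _ => True), fun p a b _ _ _ => ?_⟩
    exact iff_of_true (fun y => hV.elim y) (fun y => hV.elim y)
  choose F hF using fun τ : K =>
    exists_far_iff (I := I) G {y | C (ext (fun _ => none) (some y)) = τ} r
  refine ⟨fun f => (C (ext f none), {τ | ∃ y, ¬ Far G r f y ∧ C (ext f (some y)) = τ},
    fun τ => F τ f), ?_⟩
  have main : ∀ (p : I → ℕ) (a b : I → V),
      (∀ i j, p i ≠ p j → ¬ Near G (6 * r) (a i) (a j)) →
      (∀ i j, p i ≠ p j → ¬ Near G (6 * r) (b i) (b j)) →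
      (∀ k, C (ext (mask p k a) none) = C (ext (mask p k b) none)) →
      (∀ k, {τ | ∃ y, ¬ Far G r (mask p k a) y ∧ C (ext (mask p k a) (some y)) = τ} =
        {τ | ∃ y, ¬ Far G r (mask p k b) y ∧ C (ext (mask p k b) (some y)) = τ}) →
      (∀ k τ, F τ (mask p k a) = F τ (mask p k b)) →
      ∀ y, ∃ y', (Q V G (ext a y) ↔ Q V G (ext b y')) := by
    intro p a b ha hb h1 h2 h3 y
    have ha' : ∀ i j, p i ≠ p j → ¬ Near G r (a i) (a j) :=
      fun i j hij hn => ha i j hij (hn.mono (by omega))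
    have hb' : ∀ i j, p i ≠ p j → ¬ Near G r (b i) (b j) :=
      fun i j hij hn => hb i j hij (hn.mono (by omega))
    have near_far : ∀ (c : I → V), (∀ i j, p i ≠ p j → ¬ Near G (6 * r) (c i) (c j)) →
        ∀ k z, ¬ Far G r (mask p k c) z → ∀ i, p i ≠ k → ¬ Near G r (c i) z := by
      intro c hc k z hz i hi hn
      unfold Far at hz
      push Not at hz
      obtain ⟨i', x, hx, hxz⟩ := hz
      by_cases h : p i' = k
      · have hx' : c i' = x := by simpa [mask, h] using hx
        subst hx'
        exact hc i i' (by rw [h]; exact hi) ((hn.trans hxz.symm).mono (by omega))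
      · simp [mask, h] at hx
    by_cases hy : ∃ i, Near G r (a i) y
    · obtain ⟨i, hi⟩ := hy
      have hnf : ¬ Far G r (mask p (p i) a) y := fun hf => hf i (a i) (by simp [mask]) hi
      have hmem : C (ext (mask p (p i) a) (some y)) ∈
          {τ | ∃ y, ¬ Far G r (mask p (p i) b) y ∧ C (ext (mask p (p i) b) (some y)) = τ} := by
        rw [← h2]
        exact ⟨y, hnf, rfl⟩
      obtain ⟨y', hy', hcol⟩ := hmem
      refine ⟨y', hC (ext p (p i)) _ _ (sep_ext ha' (near_far a ha _ _ hnf))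
        (sep_ext hb' (near_far b hb _ _ hy')) fun k => ?_⟩
      by_cases hk : k = p i
      · subst hk
        rw [mask_ext_eq, mask_ext_eq, hcol]
      · rw [mask_ext_ne _ _ _ hk, mask_ext_ne _ _ _ hk, h1]
    · push Not at hy
      obtain ⟨y', hy'S, hy'⟩ := hF (C (ext (fun _ => none) (some y))) p a b hb
        (fun k => h3 k _) ⟨y, rfl, hy⟩
      obtain ⟨l, hl⟩ := (Set.finite_range p).exists_notMem
      have hm : ∀ c : I → V, mask p l c = fun _ => none := by
        intro c
        funext i
        have : p i ≠ l := fun h => hl ⟨i, h⟩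
        simp [mask, this]
      refine ⟨y', hC (ext p l) _ _ (sep_ext ha' fun i _ => hy i)
        (sep_ext hb' fun i _ => hy' i) fun k => ?_⟩
      by_cases hk : k = l
      · subst hk
        rw [mask_ext_eq, mask_ext_eq, hm, hm]
        exact hy'S.symm
      · rw [mask_ext_ne _ _ _ hk, mask_ext_ne _ _ _ hk, h1]
  intro p a b ha hb hab
  have h1 := fun k => (Prod.ext_iff.1 (hab k)).1
  have h2 := fun k => (Prod.ext_iff.1 (Prod.ext_iff.1 (hab k)).2).1
  have h3 := fun k τ => congrFun (Prod.ext_iff.1 (Prod.ext_iff.1 (hab k)).2).2 τ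
  constructor
  · intro hall y
    obtain ⟨y', hy'⟩ := main p b a hb ha (fun k => (h1 k).symm) (fun k => (h2 k).symm)
      (fun k τ => (h3 k τ).symm) y
    exact hy'.2 (hall y')
  · intro hall y
    obtain ⟨y', hy'⟩ := main p a b ha hb h1 h2 h3 y
    exact hy'.2 (hall y')

lemma term_var {β : Type} (t : Language.graph.Term β) : ∃ i, t = Language.Term.var i := by
  cases t with
  | var i => exact ⟨i, rfl⟩
  | func f _ => exact isEmptyElim f

/-- Realization of a bounded formula as a property of tuples. -/
def Real {α : Type} {n : ℕ} (φ : Language.graph.BoundedFormula α n) (V : Type)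
    (G : SimpleGraph V) (a : α ⊕ Fin n → V) : Prop :=
  letI := G.structure
  φ.Realize (a ∘ Sum.inl) (a ∘ Sum.inr)

theorem loc_real {α : Type} [Finite α] {n : ℕ} (φ : Language.graph.BoundedFormula α n) :
    Loc (Real φ) := by
  induction φ with
  | falsum => exact Loc.falsum
  | equal t₁ t₂ =>
    obtain ⟨i, rfl⟩ := term_var t₁
    obtain ⟨j, rfl⟩ := term_var t₂
    refine (Loc.atom i j (fun V G u v => u = v) ?_).congr ?_
    · rintro V G u v rfl
      simp [Near]
    · intro V G a
      cases i <;> cases j <;> simp [Real, Language.BoundedFormula.Realize]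
  | rel R ts =>
    cases R
    obtain ⟨i, hi⟩ := term_var (ts 0)
    obtain ⟨j, hj⟩ := term_var (ts 1)
    refine (Loc.atom i j (fun V G u v => G.Adj u v) ?_).congr ?_
    · intro V G u v h
      simp [Near, SimpleGraph.edist_eq_one_iff_adj.2 h]
    · intro V G a
      letI := G.structure
      have : ∀ f : Fin 2 → V, Language.Structure.RelMap (L := Language.graph) (n := 2) Language.graphRel.adj f ↔
        G.Adj (f 0) (f 1) := fun f => Iff.rfl
      simp only [Real, Language.BoundedFormula.Realize]
      rw [this, hi, hj]
      cases i <;> cases j <;> simp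
  | imp φ ψ h1 h2 => exact h1.imp h2
  | @all n φ ih =>
    let e : α ⊕ Fin (n + 1) → Option (α ⊕ Fin n) :=
      Sum.elim (fun i => some (Sum.inl i))
        (fun j => Fin.lastCases (motive := fun _ => Option (α ⊕ Fin n)) none
          (fun j => some (Sum.inr j)) j)
    refine ((ih.reindex e).all).congr fun V G a => ?_
    refine forall_congr' fun y => ?_
    have h2 : (ext a y ∘ e) ∘ Sum.inr = Fin.snoc (α := fun _ => V) (a ∘ Sum.inr) y := by
      funext j
      refine Fin.lastCases ?_ (fun j => ?_) j <;> simp [e, ext]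
    unfold Real
    rw [h2]
    rfl

end GaifmanAux

/-- For every first-order formula `φ(x,y)` in the language of graphs there
exist `r, t : ℕ` such that every finite graph `G` admits a coloring `c : V → Fin t` with:
for all vertices `u, v, u', v'` with `dist_G(u,v) > r`, `dist_G(u',v') > r`, `c u = c u'`,
`c v = c v'`, one has `G ⊨ φ(u,v) ↔ G ⊨ φ(u',v')`. -/
theorem gaifman_coloring (φ : Language.graph.Formula (Fin 2)) :
    ∃ r t : ℕ, ∀ (V : Type) [Fintype V] (G : SimpleGraph V),
      letI := G.structure
      ∃ c : V → Fin t, ∀ u v u' v' : V,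
        (r : ℕ∞) < G.edist u v → (r : ℕ∞) < G.edist u' v' →
        c u = c u' → c v = c v' →
        (φ.Realize ![u, v] ↔ φ.Realize ![u', v']) := by
  obtain ⟨r, K, hK, h⟩ := GaifmanAux.loc_real φ
  refine ⟨r, Nat.card (K × K), fun V _ G => ?_⟩
  obtain ⟨C, hC⟩ := h V G
  let p : Fin 2 ⊕ Fin 0 → ℕ := Sum.elim (fun i => (i : ℕ)) (fun _ => 0)
  let tup : V → V → Fin 2 ⊕ Fin 0 → V := fun u v => Sum.elim ![u, v] (fun j => j.elim0)
  refine ⟨fun u => Finite.equivFin (K × K)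
    (C (GaifmanAux.mask p 0 (tup u u)), C (GaifmanAux.mask p 1 (tup u u))), ?_⟩
  intro u v u' v' huv huv' hu hv
  have hu1 := (Prod.ext_iff.1 ((Finite.equivFin (K × K)).injective hu)).1
  have hv1 := (Prod.ext_iff.1 ((Finite.equivFin (K × K)).injective hv)).2
  have m0 : ∀ u v : V, GaifmanAux.mask p 0 (tup u v) = GaifmanAux.mask p 0 (tup u u) := by
    intro u v
    funext i
    rcases i with i | i
    · fin_cases i <;> simp [GaifmanAux.mask, p, tup]
    · exact i.elim0
  have m1 : ∀ u v : V, GaifmanAux.mask p 1 (tup u v) = GaifmanAux.mask p 1 (tup v v) := by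
    intro u v
    funext i
    rcases i with i | i
    · fin_cases i <;> simp [GaifmanAux.mask, p, tup]
    · exact i.elim0
  have m2 : ∀ (k : ℕ) (u v : V), GaifmanAux.mask p (k + 2) (tup u v) = fun _ => none := by
    intro k u v
    funext i
    rcases i with i | i
    · fin_cases i <;> simp [GaifmanAux.mask, p]
    · exact i.elim0
  have sep : ∀ u v : V, (r : ℕ∞) < G.edist u v → ∀ i j, p i ≠ p j →
      ¬ GaifmanAux.Near G r (tup u v i) (tup u v j) := by
    intro u v huv i j hij hn
    have h1 : ¬ GaifmanAux.Near G r u v := not_le.2 huv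
    rcases i with i | i
    · rcases j with j | j
      · fin_cases i <;> fin_cases j
        · exact hij rfl
        · exact h1 hn
        · exact h1 hn.symm
        · exact hij rfl
      · exact j.elim0
    · exact i.elim0
  have key := hC p (tup u v) (tup u' v') (sep u v huv) (sep u' v' huv') (by
    intro k
    match k with
    | 0 => rw [m0 u v, m0 u' v']; exact hu1
    | 1 => rw [m1 u v, m1 u' v']; exact hv1
    | k + 2 => rw [m2, m2])
  have e : ∀ u v : V, GaifmanAux.Real φ V G (tup u v) ↔
      @Language.Formula.Realize Language.graph V G.structure (Fin 2) φ ![u, v] := by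
    intro u v
    unfold GaifmanAux.Real Language.Formula.Realize
    have h0 : tup u v ∘ Sum.inr = (default : Fin 0 → V) := Subsingleton.elim _ _
    rw [h0]
    rfl
  rw [← e, ← e]
  exact key
end

section
/- For every natural number d there is a natural number k such that the following holds: for all finite sets A and B and every binary relation E ⊆ A × B of VC-dimension at most d, the relation E has a duality of order k, i.e., either (a) there is a set A' ⊆ A with |A'| ≤ k such that for every b ∈ B there is some a ∈ A' with ¬E(a,b), or (b) there is a set B' ⊆ B with |B'| ≤ k such that for every a ∈ A there is some b ∈ B' with E(a,b). -/
/-- A binary relation `E ⊆ A × B` has VC-dimension at most `d`: there is no sequence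
`a : Fin (d+1) → A` shattered by the sets `{a : E a b}`, `b ∈ B`. -/
def RelVCDimLE {A B : Type*} (E : A → B → Prop) (d : ℕ) : Prop :=
  ¬ ∃ (a : Fin (d + 1) → A) (b : Finset (Fin (d + 1)) → B),
      ∀ (i : Fin (d + 1)) (I : Finset (Fin (d + 1))), E (a i) (b I) ↔ i ∈ I

open Classical in
lemma vcd_card_le {X Y J : Type} [Fintype J] (R : X → Y → Prop) (D : ℕ)
    (hR : RelVCDimLE R D) (z : J → X) :
    (Finset.univ.filter (fun t : Finset J =>
      ∃ y : Y, t = Finset.univ.filter (fun j => R (z j) y))).card ≤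
      ∑ k ∈ Finset.Iic D, (Fintype.card J).choose k := by
  set 𝒜 := Finset.univ.filter (fun t : Finset J =>
      ∃ y : Y, t = Finset.univ.filter (fun j => R (z j) y)) with h𝒜
  have hvc : 𝒜.vcDim ≤ D := by
    refine Finset.sup_le fun s hs => ?_
    rw [Finset.mem_shatterer] at hs
    by_contra hlt
    obtain ⟨s', hsub0, hcard⟩ := Finset.exists_subset_card_eq (show D + 1 ≤ s.card by omega)
    have hs' := hs.mono_right hsub0
    let e := (Finset.equivFinOfCardEq hcard).symm
    have key : ∀ I : Finset (Fin (D + 1)), ∃ y : Y, ∀ i, R (z (e i)) y ↔ i ∈ I := by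
      intro I
      have hsub : I.image (fun i => (e i : J)) ⊆ s' := by
        intro j hj
        obtain ⟨i, -, rfl⟩ := Finset.mem_image.1 hj
        exact (e i).2
      obtain ⟨u, hu, hsu⟩ := hs' hsub
      obtain ⟨y, rfl⟩ := (Finset.mem_filter.1 hu).2
      refine ⟨y, fun i => ?_⟩
      have h1 := Finset.ext_iff.1 hsu (e i)
      simp only [Finset.mem_inter, (e i).2, true_and, Finset.mem_filter, Finset.mem_univ,
        Finset.mem_image] at h1
      rw [h1]
      constructor
      · rintro ⟨i', hi', h⟩
        have := e.injective (Subtype.ext h)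
        rwa [← this]
      · intro hi
        exact ⟨i, hi, rfl⟩
    choose b hb using key
    exact hR ⟨fun i => z (e i), b, fun i I => hb I i⟩
  calc 𝒜.card ≤ 𝒜.shatterer.card := Finset.card_le_card_shatterer 𝒜
    _ ≤ _ := Finset.card_shatterer_le_sum_vcDim
    _ ≤ _ := Finset.sum_le_sum_of_subset (Finset.Iic_subset_Iic.2 hvc)

/-- swapping coordinates -/
def vcdSwap {X : Type} {m : ℕ} (σ : Fin m → Bool) : (Fin m → X × X) ≃ (Fin m → X × X) :=
  Equiv.piCongrRight fun i => if σ i then Equiv.refl _ else Equiv.prodComm X X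

open Classical in
lemma vcd_net {X Y : Type} [Fintype X] (R : X → Y → Prop) (D m : ℕ)
    (hR : RelVCDimLE R D) (w : X → ℝ) (hw0 : ∀ x, 0 ≤ w x) (hw1 : ∑ x, w x = 1)
    (hw : ∀ y, 1 / 2 ≤ ∑ x, if R x y then w x else 0)
    (hm : ((∑ k ∈ Finset.Iic D, (m * 2).choose k : ℕ) : ℝ) < (3 / 2 : ℝ) ^ m) :
    ∃ x : Fin m → X, ∀ y, ∃ i, R (x i) y := by
  by_contra hcon
  push Not at hcon
  choose y hy using hcon
  set N : ℕ := ∑ k ∈ Finset.Iic D, (m * 2).choose k with hN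
  let G : (Fin m → X × X) → ℝ := fun z =>
    ∏ i, (if R (z i).2 (y fun i => (z i).1) then (2 : ℝ) else 1)
  let W : (Fin m → X × X) → ℝ := fun z => ∏ i, (w (z i).1 * w (z i).2)
  have hW0 : ∀ z, 0 ≤ W z := fun z =>
    Finset.prod_nonneg fun i _ => mul_nonneg (hw0 _) (hw0 _)
  have hW1 : ∑ z, W z = 1 := by
    have := Fintype.sum_pow (fun p : X × X => w p.1 * w p.2) m
    simp only [W]
    rw [← this, Fintype.sum_prod_type]
    simp [← Finset.mul_sum, hw1]
  have lower : (3 / 2 : ℝ) ^ m ≤ ∑ z, W z * G z := by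
    rw [← (Equiv.arrowProdEquivProdArrow (Fin m) (fun _ => X) (fun _ => X)).symm.sum_comp,
      Fintype.sum_prod_type]
    have h1 : ∀ x : Fin m → X, (∏ i, w (x i)) * (3 / 2 : ℝ) ^ m ≤ ∑ q : Fin m → X,
        (∏ i, (w (x i) * w (q i))) * ∏ i, (if R (q i) (y x) then (2 : ℝ) else 1) := by
      intro x
      have h2 : ∑ q : Fin m → X,
        (∏ i, (w (x i) * w (q i))) * ∏ i, (if R (q i) (y x) then (2 : ℝ) else 1)
        = (∏ i, w (x i)) * (∑ a, w a * (if R a (y x) then (2 : ℝ) else 1)) ^ m := by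
        rw [Fintype.sum_pow, Finset.mul_sum]
        refine Finset.sum_congr rfl fun q _ => ?_
        rw [Finset.prod_mul_distrib, Finset.prod_mul_distrib, mul_assoc]
      rw [h2]
      refine mul_le_mul_of_nonneg_left ?_ (Finset.prod_nonneg fun i _ => hw0 _)
      refine pow_le_pow_left₀ (by norm_num) ?_ m
      have h3 : ∑ a, w a * (if R a (y x) then (2 : ℝ) else 1)
          = ∑ a, w a + ∑ a, if R a (y x) then w a else 0 := by
        rw [← Finset.sum_add_distrib]
        refine Finset.sum_congr rfl fun a _ => ?_
        split_ifs <;> ring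
      rw [h3, hw1]
      linarith [hw (y x)]
    calc (3 / 2 : ℝ) ^ m = ∑ x : Fin m → X, (∏ i, w (x i)) * (3 / 2 : ℝ) ^ m := by
          rw [← Finset.sum_mul, ← Fintype.sum_pow, hw1]; simp
      _ ≤ _ := Finset.sum_le_sum fun x _ => h1 x
  have hGs : ∀ z, ∑ σ : Fin m → Bool, G (vcdSwap σ z) ≤ N * 2 ^ m := by
    intro z
    let zz : Fin m × Bool → X := fun j => if j.2 then (z j.1).2 else (z j.1).1
    let tr : Y → Finset (Fin m × Bool) := fun y' => Finset.univ.filter (fun j => R (zz j) y')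
    set 𝒜 := Finset.univ.filter (fun t : Finset (Fin m × Bool) => ∃ y' : Y, t = tr y') with h𝒜
    have hcard : 𝒜.card ≤ N := by
      have := vcd_card_le R D hR zz
      simpa [𝒜, tr, N] using this
    let h : Finset (Fin m × Bool) → Fin m → Bool → ℝ := fun t i b =>
      if (i, !b) ∈ t then 0 else if (i, b) ∈ t then 2 else 1
    have hh0 : ∀ t i b, 0 ≤ h t i b := by
      intro t i b
      simp only [h]
      split_ifs <;> norm_num
    have hsum : ∀ t, ∑ σ : Fin m → Bool, ∏ i, h t i (σ i) ≤ 2 ^ m := by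
      intro t
      rw [← Fintype.prod_sum]
      calc ∏ i, ∑ b, h t i b ≤ ∏ i : Fin m, (2 : ℝ) := by
            refine Finset.prod_le_prod (fun i _ => Finset.sum_nonneg fun b _ => hh0 _ _ _) ?_
            intro i _
            rw [Fintype.sum_bool]
            simp only [h, Bool.not_true, Bool.not_false]
            split_ifs <;> norm_num
        _ = 2 ^ m := by simp
    have hG : ∀ σ, G (vcdSwap σ z) ≤ ∑ t ∈ 𝒜, ∏ i, h t i (σ i) := by
      intro σ
      set y' := y (fun i => (vcdSwap σ z i).1) with hy'
      have hmem : tr y' ∈ 𝒜 := Finset.mem_filter.2 ⟨Finset.mem_univ _, y', rfl⟩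
      have hz1 : ∀ i, (vcdSwap σ z i).1 = zz (i, !(σ i)) := by
        intro i
        simp only [vcdSwap, zz]
        cases hσ : σ i <;> simp [hσ]
      have hz2 : ∀ i, (vcdSwap σ z i).2 = zz (i, σ i) := by
        intro i
        simp only [vcdSwap, zz]
        cases hσ : σ i <;> simp [hσ]
      have heq : G (vcdSwap σ z) = ∏ i, h (tr y') i (σ i) := by
        refine Finset.prod_congr rfl fun i _ => ?_
        have hn : ¬ R (zz (i, !(σ i))) y' := by
          rw [← hz1]
          exact hy (fun i => (vcdSwap σ z i).1) i
        simp only [h, tr, Finset.mem_filter, Finset.mem_univ, true_and, hn, if_false]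
        rw [hz2]
      rw [heq]
      exact Finset.single_le_sum (f := fun t => ∏ i, h t i (σ i))
        (fun t _ => Finset.prod_nonneg fun i _ => hh0 _ _ _) hmem
    calc ∑ σ : Fin m → Bool, G (vcdSwap σ z)
        ≤ ∑ σ : Fin m → Bool, ∑ t ∈ 𝒜, ∏ i, h t i (σ i) := Finset.sum_le_sum fun σ _ => hG σ
      _ = ∑ t ∈ 𝒜, ∑ σ : Fin m → Bool, ∏ i, h t i (σ i) := Finset.sum_comm
      _ ≤ ∑ t ∈ 𝒜, (2 : ℝ) ^ m := Finset.sum_le_sum fun t _ => hsum t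
      _ = 𝒜.card * 2 ^ m := by simp
      _ ≤ N * 2 ^ m := by
        have : (𝒜.card : ℝ) ≤ N := by exact_mod_cast hcard
        gcongr
  have hWs : ∀ (σ : Fin m → Bool) z, W (vcdSwap σ z) = W z := by
    intro σ z
    refine Finset.prod_congr rfl fun i _ => ?_
    simp only [vcdSwap]
    cases hσ : σ i <;> simp [hσ, mul_comm]
  have upper : (2 : ℝ) ^ m * ∑ z, W z * G z ≤ N * 2 ^ m := by
    calc (2 : ℝ) ^ m * ∑ z, W z * G z = ∑ σ : Fin m → Bool, ∑ z, W z * G z := by simp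
      _ = ∑ σ : Fin m → Bool, ∑ z, W z * G (vcdSwap σ z) := by
        refine Finset.sum_congr rfl fun σ _ => ?_
        rw [← (vcdSwap σ).sum_comp]
        simp only [hWs]
      _ = ∑ z, W z * ∑ σ : Fin m → Bool, G (vcdSwap σ z) := by
        rw [Finset.sum_comm]
        simp only [Finset.mul_sum]
      _ ≤ ∑ z, W z * (N * 2 ^ m) :=
        Finset.sum_le_sum fun z _ => mul_le_mul_of_nonneg_left (hGs z) (hW0 z)
      _ = N * 2 ^ m := by rw [← Finset.sum_mul, hW1, one_mul]
  have h2 : (0 : ℝ) < 2 ^ m := by positivity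
  nlinarith

lemma vcd_growth (D : ℕ) :
    ∃ m : ℕ, ((∑ k ∈ Finset.Iic D, (m * 2).choose k : ℕ) : ℝ) < (3 / 2 : ℝ) ^ m := by
  have ht := tendsto_pow_const_div_const_pow_of_one_lt D (r := (3 / 2 : ℝ)) (by norm_num)
  have hpos : (0 : ℝ) < 1 / ((D + 1) * 3 ^ D) := by positivity
  have hev := (ht.eventually (gt_mem_nhds hpos)).and (Filter.eventually_ge_atTop 1)
  obtain ⟨m, hm, hm1⟩ := hev.exists
  refine ⟨m, ?_⟩
  have hnat : (∑ k ∈ Finset.Iic D, (m * 2).choose k : ℕ) ≤ (D + 1) * (m * 3) ^ D := by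
    calc (∑ k ∈ Finset.Iic D, (m * 2).choose k : ℕ) ≤ ∑ k ∈ Finset.Iic D, (m * 3) ^ D := by
          refine Finset.sum_le_sum fun k hk => ?_
          calc (m * 2).choose k ≤ (m * 2) ^ k := Nat.choose_le_pow _ _
            _ ≤ (m * 3) ^ k := Nat.pow_le_pow_left (by omega) _
            _ ≤ (m * 3) ^ D := Nat.pow_le_pow_right (by omega) (Finset.mem_Iic.1 hk)
      _ = _ := by simp
  have h3 : ((∑ k ∈ Finset.Iic D, (m * 2).choose k : ℕ) : ℝ) ≤ (D + 1) * (m * 3) ^ D := by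
    exact_mod_cast hnat
  refine h3.trans_lt ?_
  rw [div_lt_div_iff₀ (by positivity) (by positivity)] at hm
  rw [mul_pow]
  linarith

open Classical in
lemma vcd_minimax {A B : Type} [Fintype A] [Fintype B] [Nonempty B] (E : A → B → Prop) :
    (∃ μ : A → ℝ, (∀ a, 0 ≤ μ a) ∧ ∑ a, μ a = 1 ∧
      ∀ b, 1 / 2 ≤ ∑ a, if ¬ E a b then μ a else 0) ∨
    (∃ ν : B → ℝ, (∀ b, 0 ≤ ν b) ∧ ∑ b, ν b = 1 ∧
      ∀ a, 1 / 2 ≤ ∑ b, if E a b then ν b else 0) := by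
  let v : B → A → ℝ := fun b a => if E a b then 1 / 2 else - (1 / 2)
  let L : (B → ℝ) →ₗ[ℝ] (A → ℝ) := Fintype.linearCombination ℝ v
  let C : Set (A → ℝ) := L '' stdSimplex ℝ B
  have hC : IsCompact C := (isCompact_stdSimplex ℝ B).image L.continuous_of_finiteDimensional
  have hCc : Convex ℝ C := (convex_stdSimplex ℝ B).linear_image L
  by_cases hdis : Disjoint C (Set.Ici 0)
  · left
    obtain ⟨f, u, t, h1, h2, h3⟩ :=
      geometric_hahn_banach_compact_closed hCc hC (convex_Ici 0) isClosed_Ici hdis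
    have ht : t < 0 := by simpa using h3 0 (by simp)
    let c : A → ℝ := fun a => f (Pi.single a 1)
    have hf : ∀ x : A → ℝ, f x = ∑ a, x a * c a := by
      intro x
      conv_lhs => rw [pi_eq_sum_univ' x]
      rw [map_sum]
      refine Finset.sum_congr rfl fun a _ => ?_
      rw [map_smul, smul_eq_mul]
    have hc0 : ∀ a, 0 ≤ c a := by
      intro a
      by_contra hneg
      push Not at hneg
      have hmem : (t / c a) • (Pi.single a 1 : A → ℝ) ∈ Set.Ici (0 : A → ℝ) := by
        rw [Set.mem_Ici]
        refine smul_nonneg (div_nonneg_of_nonpos ht.le hneg.le) ?_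
        exact Pi.single_nonneg.2 zero_le_one
      have := h3 _ hmem
      rw [map_smul, smul_eq_mul] at this
      change t < t / c a * c a at this
      rw [div_mul_cancel₀ _ hneg.ne] at this
      exact lt_irrefl _ this
    have hv : ∀ b, ∑ a, v b a * c a < 0 := by
      intro b
      rw [← hf]
      have : v b ∈ C := ⟨Pi.single b 1, single_mem_stdSimplex ℝ b, by
        simp [L, Fintype.linearCombination_apply_single]⟩
      linarith [h1 _ this]
    have hid : ∀ b, ∑ a, v b a * c a = (1 / 2) * ∑ a, c a - ∑ a, if ¬ E a b then c a else 0 := by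
      intro b
      rw [Finset.mul_sum, ← Finset.sum_sub_distrib]
      refine Finset.sum_congr rfl fun a _ => ?_
      by_cases h : E a b <;> simp [v, h]
      ring
    have hS : 0 < ∑ a, c a := by
      refine lt_of_le_of_ne (Finset.sum_nonneg fun a _ => hc0 a) fun h0 => ?_
      have hz := (Finset.sum_eq_zero_iff_of_nonneg fun a _ => hc0 a).1 h0.symm
      obtain ⟨b⟩ := ‹Nonempty B›
      have := hv b
      rw [Finset.sum_eq_zero] at this
      · exact lt_irrefl _ this
      · intro a ha
        rw [hz a ha, mul_zero]
    refine ⟨fun a => c a / ∑ a, c a, fun a => div_nonneg (hc0 a) hS.le, ?_, fun b => ?_⟩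
    · rw [← Finset.sum_div, div_self hS.ne']
    · have : (∑ a, if ¬ E a b then c a / ∑ a, c a else 0)
          = (∑ a, if ¬ E a b then c a else 0) / ∑ a, c a := by
        rw [Finset.sum_div]
        refine Finset.sum_congr rfl fun a _ => ?_
        split_ifs <;> simp
      rw [this, le_div_iff₀ hS]
      linarith [hv b, hid b]
  · right
    obtain ⟨x, ⟨ν, hν, rfl⟩, hx⟩ := Set.not_disjoint_iff.1 hdis
    refine ⟨ν, hν.1, hν.2, fun a => ?_⟩
    have h0 : 0 ≤ L ν a := hx a
    have h1 : L ν a = (∑ b, if E a b then ν b else 0) - (1 / 2) * ∑ b, ν b := by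
      simp only [L, Fintype.linearCombination_apply, Finset.sum_apply, Pi.smul_apply, smul_eq_mul]
      rw [Finset.mul_sum, ← Finset.sum_sub_distrib]
      refine Finset.sum_congr rfl fun b _ => ?_
      by_cases h : E a b <;> simp [v, h] <;> ring
    rw [hν.2] at h1
    linarith

lemma vcd_compl {A B : Type} (E : A → B → Prop) (d : ℕ) (h : RelVCDimLE E d) :
    RelVCDimLE (fun a b => ¬ E a b) d := by
  rintro ⟨a, b, hab⟩
  refine h ⟨a, fun I => b Iᶜ, fun i I => ?_⟩
  have := hab i Iᶜ
  rw [Finset.mem_compl] at this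
  tauto

lemma vcd_dual {A B : Type} (E : A → B → Prop) (d : ℕ) (h : RelVCDimLE E d) :
    RelVCDimLE (fun b a => E a b) (2 ^ (d + 1)) := by
  classical
  rintro ⟨b, a, hab⟩
  have hc : Fintype.card (Finset (Fin (d + 1))) ≤ Fintype.card (Fin (2 ^ (d + 1) + 1)) := by
    simp
  obtain ⟨g⟩ := Function.Embedding.nonempty_of_card_le hc
  refine h ⟨fun i => a ((Finset.univ.filter fun J => i ∈ J).map g), fun J => b (g J), ?_⟩
  intro i I
  refine (hab (g I) _).trans ?_
  simp


/-- For every `d` there is `k` such that every binary relation `E`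
between finite sets `A` and `B` of VC-dimension at most `d` has a duality of order `k`:
either (a) there is `A' ⊆ A`, `|A'| ≤ k`, such that every `b ∈ B` satisfies `¬E a b` for
some `a ∈ A'`, or (b) there is `B' ⊆ B`, `|B'| ≤ k`, such that every `a ∈ A` satisfies
`E a b` for some `b ∈ B'`. -/
theorem vc_duality (d : ℕ) :
    ∃ k : ℕ, ∀ (A B : Type) [Finite A] [Finite B] (E : A → B → Prop),
      RelVCDimLE E d →
      ((∃ A' : Finset A, A'.card ≤ k ∧ ∀ b : B, ∃ a ∈ A', ¬ E a b) ∨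
       (∃ B' : Finset B, B'.card ≤ k ∧ ∀ a : A, ∃ b ∈ B', E a b)) := by
  classical
  obtain ⟨m₁, hm₁⟩ := vcd_growth d
  obtain ⟨m₂, hm₂⟩ := vcd_growth (2 ^ (d + 1))
  refine ⟨max m₁ m₂, fun A B _ _ E hE => ?_⟩
  have := Fintype.ofFinite A
  have := Fintype.ofFinite B
  rcases isEmpty_or_nonempty B with hB | hB
  · exact Or.inl ⟨∅, by simp, fun b => hB.elim b⟩
  rcases vcd_minimax E with ⟨μ, h0, h1, h2⟩ | ⟨ν, h0, h1, h2⟩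
  · left
    obtain ⟨x, hx⟩ := vcd_net (fun a b => ¬ E a b) d m₁ (vcd_compl E d hE) μ h0 h1
      (fun b => by convert h2 b) hm₁
    refine ⟨Finset.univ.image x, ?_, fun b => ?_⟩
    · exact Finset.card_image_le.trans (by simp)
    · obtain ⟨i, hi⟩ := hx b
      exact ⟨x i, Finset.mem_image_of_mem _ (Finset.mem_univ _), hi⟩
  · right
    obtain ⟨x, hx⟩ := vcd_net (fun b a => E a b) _ m₂ (vcd_dual E d hE) ν h0 h1
      (fun b => by convert h2 b) hm₂
    refine ⟨Finset.univ.image x, ?_, fun b => ?_⟩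
    · exact Finset.card_image_le.trans (by simp)
    · obtain ⟨i, hi⟩ := hx b
      exact ⟨x i, Finset.mem_image_of_mem _ (Finset.mem_univ _), hi⟩
end

section
/- For all natural numbers k and t there exists a natural number s (one may take s = O(k·t²)) such that the following holds for every natural number r. Let V be a finite set equipped with: a binary relation E ⊆ V × V such that for all A ⊆ V and B ⊆ V the relation E ∩ (A × B) has a duality of order k; a pseudometric dist on V; and a partition 𝒫 of V with |𝒫| ≤ t, such that for all u,v with dist(u,v) > r the truth of E(u,v) depends only on C(u) and C(v). Then there is a set S ⊆ V with |S| ≤ s such that for all u, v, u', v' ∈ V with dist(u,v) > 5r, dist(u',v') > 5r, E(u,S) = E(u',S) and E(S,v) = E(S,v'), one has E(u,v) if and only if E(u',v'). -/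
open scoped ENNReal

theorem aux_tri {V : Type} {dist : V → V → ℝ≥0∞}
    (htri : ∀ u v w, dist u w ≤ dist u v + dist v w) (m n l : ℕ) (hl : m + n ≤ l) {u v w : V}
    (h1 : (l : ℝ≥0∞) < dist u v) (h2 : dist w v ≤ (n : ℝ≥0∞)) : (m : ℝ≥0∞) < dist u w := by
  by_contra h
  push Not at h
  have h3 := (htri u w v).trans (add_le_add h h2)
  have h4 : ((m : ℝ≥0∞) + n) ≤ l := by exact_mod_cast hl
  exact absurd (h3.trans h4) (not_le.mpr h1)

theorem aux_scatter {V : Type} {dist : V → V → ℝ≥0∞}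
    (P : V → Prop) (R : ℝ≥0∞) :
    ∃ T : Finset V, T.card ≤ 3 ∧ (∀ x ∈ T, P x) ∧
      ((∃ x ∈ T, ∃ y ∈ T, ∃ z ∈ T, R < dist x y ∧ R < dist x z ∧ R < dist y z) ∨
        ∀ v, P v → ∃ b ∈ T, dist b v ≤ R) := by
  classical
  by_cases h1 : ∃ x, P x
  swap
  · exact ⟨∅, by simp, by simp, Or.inr fun v hv => absurd ⟨v, hv⟩ h1⟩
  obtain ⟨x, hx⟩ := h1
  by_cases h2 : ∃ y, P y ∧ R < dist x y
  swap
  · push Not at h2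
    exact ⟨{x}, by simp, by simpa using hx, Or.inr fun v hv => ⟨x, by simp, h2 v hv⟩⟩
  obtain ⟨y, hy, hxy⟩ := h2
  by_cases h3 : ∃ z, P z ∧ R < dist x z ∧ R < dist y z
  swap
  · push Not at h3
    refine ⟨{x, y}, Finset.card_le_two.trans (by norm_num), by simp [hx, hy], Or.inr fun v hv => ?_⟩
    by_cases h : R < dist x v
    · exact ⟨y, by simp, h3 v hv h⟩
    · exact ⟨x, by simp, not_lt.mp h⟩
  obtain ⟨z, hz, hxz, hyz⟩ := h3
  exact ⟨{x, y, z}, Finset.card_le_three, by simp [hx, hy, hz],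
    Or.inl ⟨x, by simp, y, by simp, z, by simp, hxy, hxz, hyz⟩⟩

theorem aux_half (k t r : ℕ) (V : Type)
      (E : V → V → Prop) (dist : V → V → ℝ≥0∞) (c : V → Fin t) (F : Fin t → Fin t → Prop)
      (hsymm : ∀ u v, dist u v = dist v u)
      (htri : ∀ u v w, dist u w ≤ dist u v + dist v w)
      (hdual : ∀ A B : Set V,
        (∃ A' : Finset V, (A' : Set V) ⊆ A ∧ A'.card ≤ k ∧ ∀ b ∈ B, ∃ a ∈ A', ¬ E a b) ∨
        (∃ B' : Finset V, (B' : Set V) ⊆ B ∧ B'.card ≤ k ∧ ∀ a ∈ A, ∃ b ∈ B', E a b))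
      (hF : ∀ u v : V, (r : ℝ≥0∞) < dist u v → (E u v ↔ F (c u) (c v))) :
      ∃ S : Finset V, S.card ≤ t * (3 + 3 * (t * k)) ∧
        ∀ u v u' v' : V,
          ((5 * r : ℕ) : ℝ≥0∞) < dist u v → ((5 * r : ℕ) : ℝ≥0∞) < dist u' v' →
          (∀ w ∈ S, E u w ↔ E u' w) → (∀ w ∈ S, E w v ↔ E w v') →
          E u v → ¬ E u' v' → ¬ F (c u) (c v') := by
  classical
  choose T hT3 hTc hT using fun β : Fin t =>
    aux_scatter (dist := dist) (fun v => c v = β) ((2 * r : ℕ) : ℝ≥0∞)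
  have hD : ∀ (b : V) (α β : Fin t), ∃ D : Finset V, D.card ≤ k ∧
      (((D : Set V) ⊆ {x | c x = α ∧ dist x b ≤ (r : ℝ≥0∞)} ∧
        ∀ y, c y = β → dist b y ≤ ((2 * r : ℕ) : ℝ≥0∞) → ∃ x ∈ D, ¬ E x y) ∨
       ((D : Set V) ⊆ {y | c y = β ∧ dist b y ≤ ((2 * r : ℕ) : ℝ≥0∞)} ∧
        ∀ x, c x = α → dist x b ≤ (r : ℝ≥0∞) → ∃ y ∈ D, E x y)) := by
    intro b α β
    rcases hdual {x | c x = α ∧ dist x b ≤ (r : ℝ≥0∞)}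
      {y | c y = β ∧ dist b y ≤ ((2 * r : ℕ) : ℝ≥0∞)} with ⟨D, h1, h2, h3⟩ | ⟨D, h1, h2, h3⟩
    · exact ⟨D, h2, Or.inl ⟨h1, fun y hy hy' => h3 y ⟨hy, hy'⟩⟩⟩
    · exact ⟨D, h2, Or.inr ⟨h1, fun y hy hy' => h3 y ⟨hy, hy'⟩⟩⟩
  choose D hDk hD using hD
  refine ⟨Finset.univ.biUnion fun β => T β ∪
    (T β).biUnion fun b => Finset.univ.biUnion fun α => D b α β, ?_, ?_⟩
  · refine (Finset.card_biUnion_le_card_mul _ _ (3 + 3 * (t * k)) fun β _ => ?_).trans (by simp)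
    refine (Finset.card_union_le _ _).trans (add_le_add (hT3 β) ?_)
    refine (Finset.card_biUnion_le_card_mul _ _ (t * k) fun b _ => ?_).trans
      (Nat.mul_le_mul_right _ (hT3 β))
    exact (Finset.card_biUnion_le_card_mul _ _ k fun α _ => hDk b α β).trans (by simp)
  intro u v u' v' huv huv' hu hv hE hE' hFF
  have hr5 : ∀ {x y : V}, ((5 * r : ℕ) : ℝ≥0∞) < dist x y → (r : ℝ≥0∞) < dist x y := by
    intro x y h
    refine lt_of_le_of_lt ?_ h
    exact_mod_cast (by omega : r ≤ 5 * r)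
  have hr3 : ∀ {x y : V}, ((3 * r : ℕ) : ℝ≥0∞) < dist x y → (r : ℝ≥0∞) < dist x y := by
    intro x y h
    refine lt_of_le_of_lt ?_ h
    exact_mod_cast (by omega : r ≤ 3 * r)
  have hFuv := (hF u v (hr5 huv)).1 hE
  have hFuv' : ¬ F (c u') (c v') := fun h => hE' ((hF u' v' (hr5 huv')).2 h)
  have huT : ∀ w ∈ T (c v'), E u w ↔ E u' w := fun w hw => hu w (by
    simp only [Finset.mem_biUnion, Finset.mem_union, Finset.mem_univ, true_and]
    exact ⟨_, Or.inl hw⟩)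
  have hmemD : ∀ b ∈ T (c v'), ∀ α, ∀ w ∈ D b α (c v'), w ∈ (Finset.univ.biUnion fun β => T β ∪
    (T β).biUnion fun b => Finset.univ.biUnion fun α => D b α β) := by
    intro b hb α w hw
    simp only [Finset.mem_biUnion, Finset.mem_union, Finset.mem_univ, true_and]
    exact ⟨c v', Or.inr ⟨b, hb, α, hw⟩⟩
  rcases hT (c v') with ⟨x, hx, y, hy, z, hz, hxy, hxz, hyz⟩ | hcov
  · skip
    have key : ∀ w ∈ T (c v'), dist u w ≤ (r : ℝ≥0∞) ∨ dist u' w ≤ (r : ℝ≥0∞) := by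
      intro w hw
      by_contra h
      push Not at h
      have h1 := hF u w h.1
      have h2 := hF u' w h.2
      rw [hTc _ w hw] at h1 h2
      exact hFuv' (h2.1 ((huT w hw).1 (h1.2 hFF)))
    have no2 : ∀ a p q : V, ((2 * r : ℕ) : ℝ≥0∞) < dist p q → dist a p ≤ (r : ℝ≥0∞) →
        dist a q ≤ (r : ℝ≥0∞) → False := by
      intro a p q h h1 h2
      have := aux_tri htri r r (2 * r) (by omega) h h2
      rw [hsymm] at this
      exact absurd h1 (not_le.mpr this)
    have n1 := no2 u x y hxy
    have n2 := no2 u x z hxz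
    have n3 := no2 u y z hyz
    have n4 := no2 u' x y hxy
    have n5 := no2 u' x z hxz
    have n6 := no2 u' y z hyz
    have k1 := key x hx
    have k2 := key y hy
    have k3 := key z hz
    tauto
  · obtain ⟨b, hb, hbv⟩ := hcov v' rfl
    have hu'b : ((3 * r : ℕ) : ℝ≥0∞) < dist u' b :=
      aux_tri htri (3 * r) (2 * r) (5 * r) (by omega) huv' hbv
    have hub : dist u b ≤ (r : ℝ≥0∞) := by
      by_contra h
      push Not at h
      have h1 := hF u b h
      have h2 := hF u' b (hr3 hu'b)
      rw [hTc _ b hb] at h1 h2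
      exact hFuv' (h2.1 ((huT b hb).1 (h1.2 hFF)))
    rcases hD b (c u) (c v') with ⟨hsub, h⟩ | ⟨hsub, h⟩
    · obtain ⟨x, hx, hxE⟩ := h v' rfl hbv
      obtain ⟨hxc, hxb⟩ := hsub hx
      have hvb : ((4 * r : ℕ) : ℝ≥0∞) < dist v b := by
        rw [hsymm] at huv hub
        exact aux_tri htri (4 * r) r (5 * r) (by omega) huv (by rwa [hsymm] at hub ⊢)
      have hvx : ((3 * r : ℕ) : ℝ≥0∞) < dist v x :=
        aux_tri htri (3 * r) r (4 * r) (by omega) hvb hxb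
      have := hF x v (by rw [hsymm]; exact hr3 hvx)
      rw [hxc] at this
      exact hxE ((hv x (hmemD b hb _ x hx)).1 (this.2 hFuv))
    · obtain ⟨y, hy, hyE⟩ := h u rfl hub
      obtain ⟨hyc, hyb⟩ := hsub hy
      have h1 : (r : ℝ≥0∞) < dist u' y :=
        aux_tri htri r (2 * r) (3 * r) (by omega) hu'b (by rwa [hsymm])
      have := hF u' y h1
      rw [hyc] at this
      exact hFuv' (this.1 ((hu y (hmemD b hb _ y hy)).1 hyE))


/-- Theorem 11 of the paper. For all `k, t` there is `s = O(k t²)` such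
that for every `r`: if a finite set `V` carries a binary relation `E` all of whose
restrictions `E ∩ (A × B)` have a duality of order `k`, a pseudometric `dist`, and a
partition into at most `t` classes (given by a coloring `c : V → Fin t`) such that
`E u v` depends only on the classes of `u` and `v` whenever `dist u v > r`, then there
is `S ⊆ V` with `|S| ≤ s` such that `E u v` depends only on `E(u,S)` and `E(S,v)` for
all `u, v` with `dist u v > 5r`. -/
theorem independence_nip (k t : ℕ) :
    ∃ s : ℕ, ∀ (r : ℕ) (V : Type) [Fintype V]
      (E : V → V → Prop) (dist : V → V → ℝ≥0∞) (c : V → Fin t),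
      (∀ u v, dist u v = dist v u) →
      (∀ v, dist v v = 0) →
      (∀ u v w, dist u w ≤ dist u v + dist v w) →
      (∀ A B : Set V,
        (∃ A' : Finset V, (A' : Set V) ⊆ A ∧ A'.card ≤ k ∧ ∀ b ∈ B, ∃ a ∈ A', ¬ E a b) ∨
        (∃ B' : Finset V, (B' : Set V) ⊆ B ∧ B'.card ≤ k ∧ ∀ a ∈ A, ∃ b ∈ B', E a b)) →
      (∀ u v u' v' : V, (r : ℝ≥0∞) < dist u v → (r : ℝ≥0∞) < dist u' v' →
        c u = c u' → c v = c v' → (E u v ↔ E u' v')) →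
      ∃ S : Finset V, S.card ≤ s ∧
        ∀ u v u' v' : V,
          ((5 * r : ℕ) : ℝ≥0∞) < dist u v → ((5 * r : ℕ) : ℝ≥0∞) < dist u' v' →
          (∀ w ∈ S, E u w ↔ E u' w) → (∀ w ∈ S, E w v ↔ E w v') →
          (E u v ↔ E u' v') := by
  classical
  refine ⟨t * (3 + 3 * (t * k)) + t * (3 + 3 * (t * k)), ?_⟩
  intro r V _ E dist c hsymm _ htri hdual hcol
  let F : Fin t → Fin t → Prop := fun a b =>
    ∃ u v, c u = a ∧ c v = b ∧ (r : ℝ≥0∞) < dist u v ∧ E u v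
  have hF : ∀ u v : V, (r : ℝ≥0∞) < dist u v → (E u v ↔ F (c u) (c v)) := by
    intro u v h
    constructor
    · exact fun hE => ⟨u, v, rfl, rfl, h, hE⟩
    · rintro ⟨u', v', hu, hv, h', hE⟩
      exact (hcol u' v' u v h' h hu hv).1 hE
  obtain ⟨S1, hS1, H1⟩ := aux_half k t r V E dist c F hsymm htri hdual hF
  obtain ⟨S2, hS2, H2⟩ := aux_half k t r V (fun x y => ¬ E y x) dist c (fun a b => ¬ F b a)
    hsymm htri
    (by
      intro A B
      rcases hdual B A with ⟨D, h1, h2, h3⟩ | ⟨D, h1, h2, h3⟩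
      · exact Or.inr ⟨D, h1, h2, h3⟩
      · exact Or.inl ⟨D, h1, h2, fun b hb => by simpa using h3 b hb⟩)
    (fun u v h => not_congr (hF v u (by rwa [hsymm])))
  have main : ∀ u v u' v' : V,
      ((5 * r : ℕ) : ℝ≥0∞) < dist u v → ((5 * r : ℕ) : ℝ≥0∞) < dist u' v' →
      (∀ w ∈ S1 ∪ S2, E u w ↔ E u' w) → (∀ w ∈ S1 ∪ S2, E w v ↔ E w v') →
      E u v → E u' v' := by
    intro u v u' v' h h' hu hv hE
    by_contra hE'
    have a1 := H1 u v u' v' h h' (fun w hw => hu w (Finset.mem_union_left _ hw))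
      (fun w hw => hv w (Finset.mem_union_left _ hw)) hE hE'
    have a2 := H2 v' u' v u (by rwa [hsymm]) (by rwa [hsymm])
      (fun w hw => not_congr (hv w (Finset.mem_union_right _ hw)).symm)
      (fun w hw => not_congr (hu w (Finset.mem_union_right _ hw)).symm) hE' (not_not.mpr hE)
    exact a2 a1
  refine ⟨S1 ∪ S2, (Finset.card_union_le _ _).trans (add_le_add hS1 hS2), ?_⟩
  intro u v u' v' h h' hu hv
  exact ⟨main u v u' v' h h' hu hv, main u' v' u v h' h (fun w hw => (hu w hw).symm)
    (fun w hw => (hv w hw).symm)⟩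
end

section
/- Let V be a finite set with a binary relation E ⊆ V × V, a pseudometric dist, a partition 𝒫 of V, and a number r such that for all u,v with dist(u,v) > r the truth of E(u,v) depends only on C(u) and C(v). Let S ⊆ V, let u', v', v ∈ V, and suppose: (i) there are three elements s_1, s_2, s_3 ∈ S ∩ C(u') with pairwise distances greater than 2r; (ii) ¬E generically holds between C(u') and C(v'), i.e., there exist c ∈ C(u') and d ∈ C(v') with dist(c,d) > r and ¬E(c,d); (iii) E(S,v) = E(S,v'). Then ¬E generically holds between C(u') and C(v); in particular, ¬E(c,w) holds for all c ∈ C(u') and w ∈ C(v) with dist(c,w) > r. -/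
open scoped ENNReal

/-- Claim 1 in the paper. Let `V` be a finite set with a relation `E`,
a pseudometric `dist`, a partition (given as an equivalence relation `P`, so that the
class `C(v)` is `{w | P w v}`), and `r` such that `E u v` depends only on the classes of
`u` and `v` whenever `dist u v > r`. Let `S ⊆ V` and `u', v', v ∈ V` with:
(i) there are `s₁, s₂, s₃ ∈ S ∩ C(u')` with pairwise distances `> 2r`;
(ii) `¬E` generically holds between `C(u')` and `C(v')`;
(iii) `E(S, v) = E(S, v')`.
Then `¬E` generically holds between `C(u')` and `C(v)`; in particular `¬E c w` for all
`c ∈ C(u')`, `w ∈ C(v)` with `dist c w > r`. -/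
theorem claim_large {V : Type*} [Fintype V]
    (E : V → V → Prop) (dist : V → V → ℝ≥0∞) (P : V → V → Prop)
    (hequiv : Equivalence P)
    (hsymm : ∀ u v, dist u v = dist v u)
    (hrefl : ∀ v, dist v v = 0)
    (htri : ∀ u v w, dist u w ≤ dist u v + dist v w)
    (r : ℝ≥0∞)
    (hdep : ∀ u v u' v' : V, r < dist u v → r < dist u' v' →
      P u u' → P v v' → (E u v ↔ E u' v'))
    (S : Set V) (u' v' v : V)
    (hlarge : ∃ s₁ ∈ S, ∃ s₂ ∈ S, ∃ s₃ ∈ S, P s₁ u' ∧ P s₂ u' ∧ P s₃ u' ∧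
      2 * r < dist s₁ s₂ ∧ 2 * r < dist s₁ s₃ ∧ 2 * r < dist s₂ s₃)
    (hgen : ∃ c d, P c u' ∧ P d v' ∧ r < dist c d ∧ ¬ E c d)
    (hSv : ∀ w ∈ S, E w v ↔ E w v') :
    (∃ c w, P c u' ∧ P w v ∧ r < dist c w ∧ ¬ E c w) ∧
    (∀ c w, P c u' → P w v → r < dist c w → ¬ E c w) := by
  obtain ⟨s₁, h1, s₂, h2, s₃, h3, p1, p2, p3, d12, d13, d23⟩ := hlarge
  obtain ⟨c, d, hc, hd, hcd, hE⟩ := hgen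
  have key : ∀ a b x, 2 * r < dist a b → r < dist a x ∨ r < dist b x := by
    intro a b x h
    by_contra hn
    rw [not_or, not_lt, not_lt] at hn
    have h4 : dist a b ≤ r + r :=
      (htri a x b).trans (add_le_add hn.1 (by rw [hsymm]; exact hn.2))
    rw [← two_mul] at h4
    exact absurd h (not_lt.mpr h4)
  have hs : ∃ s ∈ S, P s u' ∧ r < dist s v ∧ r < dist s v' := by
    have a1 := key s₁ s₂ v d12
    have a2 := key s₁ s₃ v d13
    have a3 := key s₂ s₃ v d23
    have b1 := key s₁ s₂ v' d12
    have b2 := key s₁ s₃ v' d13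
    have b3 := key s₂ s₃ v' d23
    by_cases e1 : r < dist s₁ v ∧ r < dist s₁ v'
    · exact ⟨s₁, h1, p1, e1⟩
    by_cases e2 : r < dist s₂ v ∧ r < dist s₂ v'
    · exact ⟨s₂, h2, p2, e2⟩
    exact ⟨s₃, h3, p3, by tauto⟩
  obtain ⟨s, hS, ps, sv, sv'⟩ := hs
  have n1 : ¬ E s v' := fun h =>
    hE ((hdep s v' c d sv' hcd (hequiv.trans ps (hequiv.symm hc)) (hequiv.symm hd)).1 h)
  have n2 : ¬ E s v := fun h => n1 ((hSv s hS).1 h)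
  exact ⟨⟨s, v, ps, hequiv.refl v, sv, n2⟩, fun c w hc hw hcw h =>
    n2 ((hdep c w s v hcw sv (hequiv.trans hc (hequiv.symm ps)) hw).1 h)⟩
end

section
/- Let V be a finite set with a binary relation E ⊆ V × V, a pseudometric dist, a partition 𝒫 of V, and a number r such that for all u,v with dist(u,v) > r the truth of E(u,v) depends only on C(u) and C(v). Let S ⊆ V, let u', v', v ∈ V with u' ∈ C(u'), and suppose: (i) the class C(u') is small, i.e., there is c_0 ∈ C(u') with dist(c,c_0) ≤ 2r for all c ∈ C(u'); (ii) dist(u',v') > 5r; (iii) ¬E generically holds between C(u') and C(v'); (iv) E(S,v) = E(S,v'). Then ¬E(s,v) holds for every s ∈ S ∩ C(u'). -/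
open scoped ENNReal

/-- Claim 2 in the paper. Let `V` be a finite set with a relation `E`,
a pseudometric `dist`, a partition (given as an equivalence relation `P`, the class
`C(v)` being `{w | P w v}`), and `r` such that `E u v` depends only on the classes of
`u` and `v` whenever `dist u v > r`. Let `S ⊆ V` and `u', v', v ∈ V` with:
(i) `C(u')` is small, i.e. some `c₀ ∈ C(u')` has `dist c c₀ ≤ 2r` for all `c ∈ C(u')`;
(ii) `dist u' v' > 5r`;
(iii) `¬E` generically holds between `C(u')` and `C(v')`;
(iv) `E(S, v) = E(S, v')`.
Then `¬E s v` for every `s ∈ S ∩ C(u')`. -/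
theorem claim_small {V : Type*} [Fintype V]
    (E : V → V → Prop) (dist : V → V → ℝ≥0∞) (P : V → V → Prop)
    (hequiv : Equivalence P)
    (hsymm : ∀ u v, dist u v = dist v u)
    (hrefl : ∀ v, dist v v = 0)
    (htri : ∀ u v w, dist u w ≤ dist u v + dist v w)
    (r : ℝ≥0∞)
    (hdep : ∀ u v u' v' : V, r < dist u v → r < dist u' v' →
      P u u' → P v v' → (E u v ↔ E u' v'))
    (S : Set V) (u' v' v : V)
    (hsmall : ∃ c₀, P c₀ u' ∧ ∀ c, P c u' → dist c c₀ ≤ 2 * r)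
    (hfar : 5 * r < dist u' v')
    (hgen : ∃ c d, P c u' ∧ P d v' ∧ r < dist c d ∧ ¬ E c d)
    (hSv : ∀ w ∈ S, E w v ↔ E w v') :
    ∀ s ∈ S, P s u' → ¬ E s v := by
  intro s hs hsu hE
  obtain ⟨c₀, _, hc⟩ := hsmall
  obtain ⟨c, d, hcu, hdv, hcd, hn⟩ := hgen
  have hE' : E s v' := (hSv s hs).1 hE
  have hsv : r < dist s v' := by
    by_contra hle
    have hle : dist s v' ≤ r := not_lt.1 hle
    refine absurd hfar (not_lt.2 ?_)
    calc dist u' v' ≤ dist u' c₀ + dist c₀ v' := htri _ _ _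
      _ ≤ dist u' c₀ + (dist c₀ s + dist s v') := by gcongr; exact htri _ _ _
      _ ≤ 2 * r + (2 * r + r) := by
        gcongr
        · exact hc u' (hequiv.refl u')
        · rw [hsymm]; exact hc s hsu
      _ = 5 * r := by ring
  exact hn ((hdep s v' c d hsv hcd (hequiv.trans hsu (hequiv.symm hcu))
    (hequiv.symm hdv)).1 hE')
end

section
/- For every first-order formula φ(x,y) in the language of graphs and every natural number d there exist natural numbers s and r such that the following holds. For every finite graph G on which φ has VC-dimension at most d, and every set U ⊆ V(G), there is a set S ⊆ U with |S| ≤ s such that for all u, v, u', v' ∈ U satisfying dist^G(u,v) > r, dist^G(u',v') > r, φ(u,S) = φ(u',S) and φ(S,v) = φ(S,v'), one has G ⊨ φ(u,v) if and only if G ⊨ φ(u',v'). -/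
open FirstOrder

namespace ML

def Nr {V : Type} (G : SimpleGraph V) (k : ℕ) (u v : V) : Prop := G.edist u v ≤ (k : ℕ∞)

section
variable {V : Type} {G : SimpleGraph V}

theorem Nr.symm {k : ℕ} {u v : V} (h : Nr G k u v) : Nr G k v u := by
  unfold Nr at *; rwa [SimpleGraph.edist_comm]

theorem Nr.mono {k l : ℕ} {u v : V} (h : Nr G k u v) (hl : k ≤ l) : Nr G l u v :=
  le_trans h (by exact_mod_cast hl)

theorem Nr.trans {k l m : ℕ} {u v w : V} (h : Nr G k u v) (h' : Nr G l v w) (hm : k + l ≤ m) :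
    Nr G m u w := by
  refine Nr.mono (k := k + l) ?_ hm
  unfold Nr at *
  push_cast
  exact le_trans (SimpleGraph.edist_triangle (v := v)) (add_le_add h h')

theorem Nr.refl (k : ℕ) (u : V) : Nr G k u u := by
  simp [Nr]

theorem Nr_zero {u v : V} : Nr G 0 u v ↔ u = v := by
  simp [Nr]

theorem Nr_one {u v : V} : Nr G 1 u v ↔ u = v ∨ G.Adj u v := by
  constructor
  · intro h
    by_cases huv : u = v
    · exact Or.inl huv
    · right
      rw [← SimpleGraph.edist_eq_one_iff_adj]
      refine le_antisymm (by simpa [Nr] using h) ?_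
      rw [Order.one_le_iff_ne_zero]
      simpa using huv
  · rintro (rfl | h)
    · exact Nr.refl _ _
    · have := SimpleGraph.edist_eq_one_iff_adj.2 h
      simp [Nr, this]

/-- distances up to `m` are preserved -/
def Dp (G : SimpleGraph V) (m : ℕ) (p : Set (V × V)) : Prop :=
  ∀ x ∈ p, ∀ y ∈ p, ∀ k ≤ m, Nr G k x.1 y.1 ↔ Nr G k x.2 y.2

/-- local back-and-forth equivalence -/
def Loc (G : SimpleGraph V) : ℕ → Set (V × V) → Prop
  | 0, p => Dp G 1 p
  | q + 1, p => Dp G (2 ^ (q + 1)) p ∧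
      (∀ c, (∃ x ∈ p, Nr G (2 ^ q) x.1 c) → ∃ d, Loc G q (insert (c, d) p)) ∧
      (∀ d, (∃ x ∈ p, Nr G (2 ^ q) x.2 d) → ∃ c, Loc G q (insert (c, d) p))

theorem Dp.mono {m n : ℕ} {p r : Set (V × V)} (h : Dp G m p) (hn : n ≤ m) (hr : r ⊆ p) :
    Dp G n r := fun x hx y hy k hk => h x (hr hx) y (hr hy) k (hk.trans hn)

theorem Loc.dp {q : ℕ} {p : Set (V × V)} (h : Loc G q p) : Dp G (2 ^ q) p := by
  cases q with
  | zero => simpa [Loc] using h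
  | succ q => exact h.1

theorem Loc.subset {q : ℕ} : ∀ {p r : Set (V × V)}, Loc G q p → r ⊆ p → Loc G q r := by
  induction q with
  | zero => intro p r h hr; exact Dp.mono h le_rfl hr
  | succ q ih =>
    intro p r h hr
    refine ⟨h.1.mono le_rfl hr, ?_, ?_⟩
    · rintro c ⟨x, hx, hc⟩
      obtain ⟨d, hd⟩ := h.2.1 c ⟨x, hr hx, hc⟩
      exact ⟨d, ih hd (Set.insert_subset_insert hr)⟩
    · rintro c ⟨x, hx, hc⟩
      obtain ⟨d, hd⟩ := h.2.2 c ⟨x, hr hx, hc⟩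
      exact ⟨d, ih hd (Set.insert_subset_insert hr)⟩

theorem Loc.pred {q : ℕ} : ∀ {p : Set (V × V)}, Loc G (q + 1) p → Loc G q p := by
  induction q with
  | zero => intro p h; exact Dp.mono h.1 (by norm_num) subset_rfl
  | succ q ih =>
    intro p h
    have hle : 2 ^ q ≤ 2 ^ (q + 1) := Nat.pow_le_pow_right (by norm_num) (by omega)
    refine ⟨h.1.mono (Nat.pow_le_pow_right (by norm_num) (by omega)) subset_rfl, ?_, ?_⟩
    · rintro c ⟨x, hx, hc⟩
      obtain ⟨d, hd⟩ := h.2.1 c ⟨x, hx, hc.mono hle⟩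
      exact ⟨d, ih hd⟩
    · rintro c ⟨x, hx, hc⟩
      obtain ⟨d, hd⟩ := h.2.2 c ⟨x, hx, hc.mono hle⟩
      exact ⟨d, ih hd⟩

theorem Loc.mono {q q' : ℕ} {p : Set (V × V)} (h : Loc G q' p) (hq : q ≤ q') : Loc G q p := by
  induction q', hq using Nat.le_induction with
  | base => exact h
  | succ n hn ih => exact ih h.pred

theorem Loc.swap {q : ℕ} : ∀ {p : Set (V × V)}, Loc G q p → Loc G q (Prod.swap ⁻¹' p) := by
  induction q with
  | zero => intro p h x hx y hy k hk; exact (h x.swap hx y.swap hy k hk).symm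
  | succ q ih =>
    intro p h
    have key : ∀ c d : V, (Prod.swap ⁻¹' (insert (d, c) p) : Set (V × V))
        = insert (c, d) (Prod.swap ⁻¹' p) := by
      intro c d; ext ⟨a, b⟩; simp [and_comm]
    refine ⟨fun x hx y hy k hk => (h.1 x.swap hx y.swap hy k hk).symm, ?_, ?_⟩
    · rintro c ⟨x, hx, hc⟩
      obtain ⟨d, hd⟩ := h.2.2 c ⟨x.swap, hx, hc⟩
      exact ⟨d, by rw [← key]; exact ih hd⟩
    · rintro c ⟨x, hx, hc⟩
      obtain ⟨d, hd⟩ := h.2.1 c ⟨x.swap, hx, hc⟩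
      exact ⟨d, by rw [← key]; exact ih hd⟩

theorem Loc.diag {q : ℕ} : ∀ {p : Set (V × V)}, (∀ x ∈ p, x.1 = x.2) → Loc G q p := by
  induction q with
  | zero => intro p h x hx y hy k hk; rw [h x hx, h y hy]
  | succ q ih =>
    intro p h
    have key : ∀ c, ∀ x ∈ insert (c, c) p, x.1 = x.2 := by
      rintro c x (rfl | hx)
      · rfl
      · exact h x hx
    exact ⟨fun x hx y hy k hk => by rw [h x hx, h y hy],
      fun c _ => ⟨c, ih (key c)⟩, fun c _ => ⟨c, ih (key c)⟩⟩

theorem Loc.comp {q : ℕ} : ∀ {p p' r : Set (V × V)}, Loc G q p → Loc G q p' →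
    (∀ x ∈ r, ∃ b, (x.1, b) ∈ p ∧ (b, x.2) ∈ p') → Loc G q r := by
  induction q with
  | zero =>
    intro p p' r h h' hr x hx y hy k hk
    obtain ⟨b, hb, hb'⟩ := hr x hx
    obtain ⟨e, he, he'⟩ := hr y hy
    exact (h _ hb _ he k hk).trans (h' _ hb' _ he' k hk)
  | succ q ih =>
    intro p p' r h h' hr
    have key : ∀ a b c, ∀ x ∈ insert (a, c) r,
        ∃ e, (x.1, e) ∈ insert (a, b) p ∧ (e, x.2) ∈ insert (b, c) p' := by
      rintro a b c x (rfl | hx)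
      · exact ⟨b, by simp, by simp⟩
      · obtain ⟨e, he, he'⟩ := hr x hx
        exact ⟨e, Or.inr he, Or.inr he'⟩
    refine ⟨?_, ?_, ?_⟩
    · intro x hx y hy k hk
      obtain ⟨b, hb, hb'⟩ := hr x hx
      obtain ⟨e, he, he'⟩ := hr y hy
      exact (h.1 _ hb _ he k hk).trans (h'.1 _ hb' _ he' k hk)
    · rintro c ⟨x, hx, hc⟩
      obtain ⟨b, hb, hb'⟩ := hr x hx
      obtain ⟨d, hd⟩ := h.2.1 c ⟨_, hb, hc⟩
      have : Nr G (2 ^ q) b d :=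
        (hd.dp (x.1, b) (Or.inr hb) (c, d) (Or.inl rfl) _ le_rfl).1 hc
      obtain ⟨e, he⟩ := h'.2.1 d ⟨_, hb', this⟩
      exact ⟨e, ih hd he (key _ _ _)⟩
    · rintro c ⟨x, hx, hc⟩
      obtain ⟨b, hb, hb'⟩ := hr x hx
      obtain ⟨d, hd⟩ := h'.2.2 c ⟨_, hb', hc⟩
      have : Nr G (2 ^ q) b d :=
        (hd.dp (b, x.2) (Or.inr hb') (d, c) (Or.inl rfl) _ le_rfl).2 hc
      obtain ⟨e, he⟩ := h.2.2 d ⟨_, hb, this⟩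
      exact ⟨e, ih he hd (key _ _ _)⟩

theorem Loc.union {q : ℕ} : ∀ {p p' : Set (V × V)}, Loc G q p → Loc G q p' →
    (∀ x ∈ p, ∀ y ∈ p', ¬ Nr G (2 ^ q) x.1 y.1) →
    (∀ x ∈ p, ∀ y ∈ p', ¬ Nr G (2 ^ q) x.2 y.2) → Loc G q (p ∪ p') := by
  have dpu : ∀ {m : ℕ} {p p' : Set (V × V)}, Dp G m p → Dp G m p' →
    (∀ x ∈ p, ∀ y ∈ p', ¬ Nr G m x.1 y.1) →
    (∀ x ∈ p, ∀ y ∈ p', ¬ Nr G m x.2 y.2) → Dp G m (p ∪ p') := by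
    intro m p p' h h' h1 h2 x hx y hy k hk
    rcases hx with hx | hx <;> rcases hy with hy | hy
    · exact h x hx y hy k hk
    · exact iff_of_false (fun hn => h1 x hx y hy (hn.mono hk))
        (fun hn => h2 x hx y hy (hn.mono hk))
    · exact iff_of_false (fun hn => h1 y hy x hx (hn.mono hk).symm)
        (fun hn => h2 y hy x hx (hn.mono hk).symm)
    · exact h' x hx y hy k hk
  induction q with
  | zero =>
    intro p p' h h' h1 h2
    exact dpu h h' (by simpa using h1) (by simpa using h2)
  | succ q ih =>
    have e2 : 2 ^ q + 2 ^ q ≤ 2 ^ (q + 1) := by rw [pow_succ]; omega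
    have e1 : 2 ^ q ≤ 2 ^ (q + 1) := Nat.pow_le_pow_right (by norm_num) (by omega)
    -- adding a pair on the left side
    have main : ∀ {p p' : Set (V × V)}, Loc G (q + 1) p' →
        (∀ x ∈ p, ∀ y ∈ p', ¬ Nr G (2 ^ (q + 1)) x.1 y.1) →
        (∀ x ∈ p, ∀ y ∈ p', ¬ Nr G (2 ^ (q + 1)) x.2 y.2) →
        ∀ c d x, x ∈ p → (Nr G (2 ^ q) x.1 c ∨ Nr G (2 ^ q) x.2 d) →
        Loc G q (insert (c, d) p) → Loc G q (insert (c, d) (p ∪ p')) := by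
      intro p p' h' h1 h2 c d x hx hc hd
      have hc1 : Nr G (2 ^ q) x.1 c ∧ Nr G (2 ^ q) x.2 d := by
        have := hd.dp x (Or.inr hx) (c, d) (Or.inl rfl) _ le_rfl
        tauto
      rw [← Set.insert_union]
      refine ih hd h'.pred ?_ ?_
      · rintro y (rfl | hy) z hz hn
        · exact h1 x hx z hz (hc1.1.trans hn e2)
        · exact h1 y hy z hz (hn.mono e1)
      · rintro y (rfl | hy) z hz hn
        · exact h2 x hx z hz (hc1.2.trans hn e2)
        · exact h2 y hy z hz (hn.mono e1)
    intro p p' h h' h1 h2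
    have h1' : ∀ x ∈ p', ∀ y ∈ p, ¬ Nr G (2 ^ (q + 1)) x.1 y.1 :=
      fun x hx y hy hn => h1 y hy x hx hn.symm
    have h2' : ∀ x ∈ p', ∀ y ∈ p, ¬ Nr G (2 ^ (q + 1)) x.2 y.2 :=
      fun x hx y hy hn => h2 y hy x hx hn.symm
    refine ⟨dpu h.1 h'.1 h1 h2, ?_, ?_⟩
    · rintro c ⟨x, hx | hx, hc⟩
      · obtain ⟨d, hd⟩ := h.2.1 c ⟨x, hx, hc⟩
        exact ⟨d, main h' h1 h2 c d x hx (Or.inl hc) hd⟩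
      · obtain ⟨d, hd⟩ := h'.2.1 c ⟨x, hx, hc⟩
        exact ⟨d, by rw [Set.union_comm]; exact main h h1' h2' c d x hx (Or.inl hc) hd⟩
    · rintro d ⟨x, hx | hx, hc⟩
      · obtain ⟨c, hd⟩ := h.2.2 d ⟨x, hx, hc⟩
        exact ⟨c, main h' h1 h2 c d x hx (Or.inr hc) hd⟩
      · obtain ⟨c, hd⟩ := h'.2.2 d ⟨x, hx, hc⟩
        exact ⟨c, by rw [Set.union_comm]; exact main h h1' h2' c d x hx (Or.inr hc) hd⟩

/-- answering several moves near the range -/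
theorem Loc.many {q0 : ℕ} : ∀ (m : ℕ) (Y : Finset V) (p : Set (V × V)), Y.card ≤ m →
    Loc G (q0 + m) p → (∀ y ∈ Y, ∃ x ∈ p, Nr G (2 ^ q0) x.2 y) →
    ∃ f : V → V, Loc G q0 (p ∪ (fun y => (f y, y)) '' (Y : Set V)) := by
  classical
  intro m
  induction m with
  | zero =>
    intro Y p hY h _
    have : Y = ∅ := by simpa using hY
    subst this
    exact ⟨id, by simpa using h⟩
  | succ m ih =>
    intro Y p hY h hn
    rcases Y.eq_empty_or_nonempty with rfl | ⟨y, hy⟩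
    · exact ⟨id, by simpa using h.mono (by omega)⟩
    obtain ⟨x, hx, hxy⟩ := hn y hy
    obtain ⟨c, hc⟩ := Loc.mono (q := (q0 + m) + 1) h (by omega) |>.2.2 y
      ⟨x, hx, hxy.mono (Nat.pow_le_pow_right (by norm_num) (by omega))⟩
    obtain ⟨f, hf⟩ := ih (Y.erase y) (insert (c, y) p)
      (by rw [Finset.card_erase_of_mem hy]; omega) hc (by
        intro z hz
        obtain ⟨x, hx, hh⟩ := hn z (Finset.mem_of_mem_erase hz)
        exact ⟨x, Or.inr hx, hh⟩)
    refine ⟨Function.update f y c, hf.subset ?_⟩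
    rintro w (hw | ⟨z, hz, rfl⟩)
    · exact Or.inl (Or.inr hw)
    · by_cases hzy : z = y
      · subst hzy; left; left; simp
      · right
        exact ⟨z, by simpa [hzy] using hz, by simp [Function.update_of_ne hzy]⟩

theorem Loc.trans_single {q : ℕ} {a b c : V} (h : Loc G q {(a, b)}) (h' : Loc G q {(b, c)}) :
    Loc G q {(a, c)} := by
  refine Loc.comp h h' ?_
  rintro x rfl
  exact ⟨b, by simp, by simp⟩

theorem Loc.symm_single {q : ℕ} {a b : V} (h : Loc G q {(a, b)}) : Loc G q {(b, a)} := by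
  have := h.swap
  refine this.subset ?_
  rintro x rfl
  simp

theorem Loc.forth [Finite V] (N q : ℕ) (p : Set (V × V)) (hp : p.ncard ≤ N)
    (h : Loc G (q + 3 + N) p) (c : V) : ∃ d, Loc G q (insert (c, d) p) := by
  classical
  have := Fintype.ofFinite V
  by_cases hnear : ∃ x ∈ p, Nr G (2 ^ (q + 2)) x.1 c
  · obtain ⟨d, hd⟩ := (Loc.mono (q := q + 2 + 1) h (by omega)).2.1 c hnear
    exact ⟨d, hd.mono (by omega)⟩
  by_contra hcon
  have e0 : 0 < 2 ^ q := by positivity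
  have e1 : 2 ^ (q + 1) = 2 ^ q + 2 ^ q := by rw [pow_succ]; omega
  have e2 : 2 ^ (q + 2) = 2 ^ q + 2 ^ q + 2 ^ q + 2 ^ q := by rw [pow_succ, e1]; omega
  -- all elements of the type of `c` are near the range of `p`
  have hW : ∀ d, Loc G q {(c, d)} → ∃ x ∈ p, Nr G (2 ^ q) x.2 d := by
    intro d hd
    by_contra hfar
    apply hcon
    refine ⟨d, ?_⟩
    rw [Set.insert_eq]
    refine Loc.union hd (h.mono (by omega)) ?_ ?_
    · rintro x rfl y hy hn
      exact hnear ⟨y, hy, hn.symm.mono (by omega)⟩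
    · rintro x rfl y hy hn
      exact hfar ⟨y, hy, hn.symm⟩
  let P : Finset V → Prop := fun Y => (∀ y ∈ Y, Loc G q {(c, y)}) ∧
    ∀ y ∈ Y, ∀ z ∈ Y, y ≠ z → ¬ Nr G (2 ^ (q + 1)) y z
  obtain ⟨Y, hY, hmax⟩ := Finset.exists_max_image (Finset.univ.filter P) Finset.card
    ⟨∅, by simp [P]⟩
  have hYP : P Y := by simpa using hY
  have hcard : Y.card ≤ N := by
    refine le_trans ?_ hp
    have hg : ∀ y, ∃ x : V × V, y ∈ Y → x ∈ p ∧ Nr G (2 ^ q) x.2 y := by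
      intro y
      by_cases hy : y ∈ Y
      · obtain ⟨x, hx, hn⟩ := hW y (hYP.1 y hy)
        exact ⟨x, fun _ => ⟨hx, hn⟩⟩
      · exact ⟨(c, c), fun h => absurd h hy⟩
    choose g hg using hg
    rw [Set.ncard_eq_toFinset_card p (Set.toFinite p)]
    refine Finset.card_le_card_of_injOn g ?_ ?_
    · intro y hy; simpa using (hg y hy).1
    · intro y hy z hz hyz
      by_contra hne
      refine hYP.2 y hy z hz hne ((hg y hy).2.symm.trans ?_ e1.symm.le)
      rw [hyz]; exact (hg z hz).2
  obtain ⟨f, hf⟩ := Loc.many (q0 := q + 1) N Y p hcard (h.mono (by omega)) (by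
    intro y hy
    obtain ⟨x, hx, hn⟩ := hW y (hYP.1 y hy)
    exact ⟨x, hx, hn.mono (by omega)⟩)
  have hfy : ∀ y ∈ Y, (f y, y) ∈ (p ∪ (fun y => (f y, y)) '' (Y : Set V)) :=
    fun y hy => Or.inr ⟨y, hy, rfl⟩
  have hfar : ∀ y ∈ Y, ∀ z ∈ Y, y ≠ z → ¬ Nr G (2 ^ (q + 1)) (f y) (f z) := by
    intro y hy z hz hne hn
    exact hYP.2 y hy z hz hne ((hf.dp _ (hfy y hy) _ (hfy z hz) _ le_rfl).1 hn)
  have hcf : ∀ y ∈ Y, ¬ Nr G (2 ^ (q + 1)) c (f y) := by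
    intro y hy hn
    obtain ⟨x, hx, hxy⟩ := hW y (hYP.1 y hy)
    have := (hf.dp x (Or.inl hx) _ (hfy y hy) (2 ^ q) (by omega)).2 hxy
    exact hnear ⟨x, hx, this.trans hn.symm (by omega)⟩
  have hinj : Set.InjOn f Y := by
    intro y hy z hz hyz
    by_contra hne
    apply hfar y hy z hz hne
    rw [hyz]; exact Nr.refl _ _
  have hnot : c ∉ Y.image f := by
    intro hc
    obtain ⟨y, hy, rfl⟩ := Finset.mem_image.1 hc
    exact hcf y hy (Nr.refl _ _)
  have hPX : P (insert c (Y.image f)) := by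
    constructor
    · intro y hy
      rcases Finset.mem_insert.1 hy with rfl | hy
      · exact Loc.diag (by rintro x rfl; rfl)
      · obtain ⟨z, hz, rfl⟩ := Finset.mem_image.1 hy
        refine (hYP.1 z hz).trans_single (Loc.symm_single ?_)
        refine (hf.pred).subset ?_
        rintro x rfl
        exact hfy z hz
    · intro y hy z hz hne
      rcases Finset.mem_insert.1 hy with hy1 | hy1 <;> rcases Finset.mem_insert.1 hz with hz1 | hz1
      · exact absurd (hy1.trans hz1.symm) hne
      · obtain ⟨z, hz2, rfl⟩ := Finset.mem_image.1 hz1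
        rw [hy1]; exact hcf z hz2
      · obtain ⟨y, hy2, rfl⟩ := Finset.mem_image.1 hy1
        rw [hz1]; exact fun hn => hcf y hy2 hn.symm
      · obtain ⟨z, hz2, rfl⟩ := Finset.mem_image.1 hz1
        obtain ⟨y, hy2, rfl⟩ := Finset.mem_image.1 hy1
        exact hfar y hy2 z hz2 (fun h => hne (by rw [h]))
  have := hmax _ (by simpa using hPX)
  rw [Finset.card_insert_of_notMem hnot, Finset.card_image_of_injOn hinj] at this
  omega

/-- the set of pairs given by two assignments -/
def pr {n : ℕ} (v v' : Fin 2 → V) (xs xs' : Fin n → V) : Set (V × V) :=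
  Set.range (fun i => (v i, v' i)) ∪ Set.range (fun i => (xs i, xs' i))

theorem pr_ncard {n : ℕ} (v v' : Fin 2 → V) (xs xs' : Fin n → V) :
    (pr v v' xs xs').ncard ≤ 2 + n := by
  refine (Set.ncard_union_le _ _).trans (add_le_add ?_ ?_)
  · rw [← Set.image_univ]
    exact (Set.ncard_image_le Set.finite_univ).trans (by simp [Set.ncard_univ])
  · rw [← Set.image_univ]
    exact (Set.ncard_image_le Set.finite_univ).trans (by simp [Set.ncard_univ])

theorem pr_swap {n : ℕ} (v v' : Fin 2 → V) (xs xs' : Fin n → V) :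
    (Prod.swap ⁻¹' pr v v' xs xs') = pr v' v xs' xs := by
  ext ⟨a, b⟩
  simp [pr, and_comm]

theorem pr_snoc {n : ℕ} (v v' : Fin 2 → V) (xs xs' : Fin n → V) (c d : V) :
    pr v v' (Fin.snoc xs c : Fin (n + 1) → V) (Fin.snoc xs' d : Fin (n + 1) → V)
      = insert (c, d) (pr v v' xs xs') := by
  ext ⟨a, b⟩
  simp [pr, Fin.exists_fin_succ', Fin.snoc_castSucc, Fin.snoc_last]
  rw [eq_comm (a := a), eq_comm (a := b) (b := d)]
  exact Iff.of_eq (by ac_rfl)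

theorem pr_term {n : ℕ} (v v' : Fin 2 → V) (xs xs' : Fin n → V) (G : SimpleGraph V)
    (t : Language.graph.Term (Fin 2 ⊕ Fin n)) :
    letI := G.structure
    (t.realize (Sum.elim v xs), t.realize (Sum.elim v' xs')) ∈ pr v v' xs xs' := by
  letI := G.structure
  cases t with
  | var i =>
    cases i with
    | inl i => left; exact ⟨i, rfl⟩
    | inr i => right; exact ⟨i, rfl⟩
  | func f ts => exact isEmptyElim f

end

theorem formula_local {n : ℕ} (ψ : Language.graph.BoundedFormula (Fin 2) n) :
    ∃ q, ∀ (V : Type) [Fintype V] (G : SimpleGraph V),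
      letI := G.structure
      ∀ (v v' : Fin 2 → V) (xs xs' : Fin n → V), Loc G q (pr v v' xs xs') →
        (ψ.Realize v xs ↔ ψ.Realize v' xs') := by
  induction ψ with
  | falsum => exact ⟨0, fun V _ G v v' xs xs' _ => Iff.rfl⟩
  | equal t₁ t₂ =>
    refine ⟨0, fun V _ G => ?_⟩
    letI := G.structure
    intro v v' xs xs' h
    have := h _ (pr_term v v' xs xs' G t₁) _ (pr_term v v' xs xs' G t₂) 0 (by norm_num)
    rw [Nr_zero, Nr_zero] at this
    exact this
  | rel R ts =>
    refine ⟨0, fun V _ G => ?_⟩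
    letI := G.structure
    intro v v' xs xs' h
    cases R
    have h0 := h _ (pr_term v v' xs xs' G (ts 0)) _ (pr_term v v' xs xs' G (ts 1)) 0 (by norm_num)
    have h1 := h _ (pr_term v v' xs xs' G (ts 0)) _ (pr_term v v' xs xs' G (ts 1)) 1 (by norm_num)
    rw [Nr_zero, Nr_zero] at h0
    rw [Nr_one, Nr_one] at h1
    simp only at h0 h1
    have key : ∀ a b : V, G.Adj a b ↔ (a = b ∨ G.Adj a b) ∧ ¬ a = b := by
      intro a b
      constructor
      · intro h; exact ⟨Or.inr h, h.ne⟩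
      · tauto
    have goal := (key _ _).trans ((and_congr h1 (not_congr h0)).trans (key _ _).symm)
    exact goal
  | imp f g ihf ihg =>
    obtain ⟨q1, h1⟩ := ihf
    obtain ⟨q2, h2⟩ := ihg
    refine ⟨max q1 q2, fun V _ G => ?_⟩
    letI := G.structure
    intro v v' xs xs' h
    rw [Language.BoundedFormula.realize_imp, Language.BoundedFormula.realize_imp,
      h1 V G v v' xs xs' (h.mono (le_max_left _ _)), h2 V G v v' xs xs' (h.mono (le_max_right _ _))]
  | @all n f ih =>
    obtain ⟨q, hq⟩ := ih
    refine ⟨q + 3 + (2 + n), fun V _ G => ?_⟩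
    letI := G.structure
    have key : ∀ (v v' : Fin 2 → V) (xs xs' : Fin n → V),
        Loc G (q + 3 + (2 + n)) (pr v v' xs xs') → f.all.Realize v' xs' → f.all.Realize v xs := by
      intro v v' xs xs' h hr
      rw [Language.BoundedFormula.realize_all] at hr ⊢
      intro c
      obtain ⟨d, hd⟩ := Loc.forth (2 + n) q _ (pr_ncard _ _ _ _) h c
      rw [← pr_snoc] at hd
      exact (hq V G _ _ _ _ hd).2 (hr d)
    intro v v' xs xs' h
    refine ⟨key _ _ _ _ ?_, key _ _ _ _ h⟩
    rw [← pr_swap]; exact h.swap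

theorem coloring (q : ℕ) : ∀ n : ℕ, ∃ (T : Type) (_ : Finite T), ∀ (V : Type) (G : SimpleGraph V),
    ∃ col : (Fin n → V) → T, ∀ a b, col a = col b → Loc G q (Set.range fun i => (a i, b i)) := by
  induction q with
  | zero =>
    intro n
    refine ⟨Fin n → Fin n → Fin 2 → Prop, inferInstance, fun V G => ?_⟩
    refine ⟨fun a i j k => Nr G k (a i) (a j), fun a b h => ?_⟩
    rintro _ ⟨i, rfl⟩ _ ⟨j, rfl⟩ k hk
    have := congrFun (congrFun (congrFun h i) j) ⟨k, by omega⟩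
    simpa using this
  | succ q ih =>
    intro n
    obtain ⟨T, _, hT⟩ := ih (n + 1)
    refine ⟨(Fin n → Fin n → Fin (2 ^ (q + 1) + 1) → Prop) × Set T, inferInstance, fun V G => ?_⟩
    obtain ⟨col, hcol⟩ := hT V G
    refine ⟨fun a => (fun i j k => Nr G k (a i) (a j),
      {t | ∃ c, (∃ i, Nr G (2 ^ q) (a i) c) ∧ t = col (Fin.snoc a c : Fin (n + 1) → V)}), ?_⟩
    intro a b h
    rw [Prod.mk.injEq] at h
    obtain ⟨h1, h2⟩ := h
    have hs : ∀ c d, (Set.range fun i => ((Fin.snoc a c : Fin (n + 1) → V) i,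
        (Fin.snoc b d : Fin (n + 1) → V) i)) = insert (c, d) (Set.range fun i => (a i, b i)) := by
      intro c d
      ext ⟨x, y⟩
      simp [Fin.exists_fin_succ', Fin.snoc_castSucc, Fin.snoc_last]
      rw [eq_comm (a := x) (b := c), eq_comm (a := y) (b := d)]
      exact Iff.of_eq (by ac_rfl)
    refine ⟨?_, ?_, ?_⟩
    · rintro _ ⟨i, rfl⟩ _ ⟨j, rfl⟩ k hk
      have := congrFun (congrFun (congrFun h1 i) j) ⟨k, by omega⟩
      simpa using this
    · rintro c ⟨_, ⟨i, rfl⟩, hc⟩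
      have : col (Fin.snoc a c : Fin (n + 1) → V) ∈ {t | ∃ c, (∃ i, Nr G (2 ^ q) (a i) c) ∧ t = col (Fin.snoc a c : Fin (n + 1) → V)} :=
        ⟨c, ⟨i, hc⟩, rfl⟩
      rw [h2] at this
      obtain ⟨d, -, hd⟩ := this
      exact ⟨d, by rw [← hs]; exact hcol _ _ hd⟩
    · rintro d ⟨_, ⟨i, rfl⟩, hc⟩
      have : col (Fin.snoc b d : Fin (n + 1) → V) ∈ {t | ∃ c, (∃ i, Nr G (2 ^ q) (b i) c) ∧ t = col (Fin.snoc b c : Fin (n + 1) → V)} :=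
        ⟨d, ⟨i, hc⟩, rfl⟩
      rw [← h2] at this
      obtain ⟨c, -, hd⟩ := this
      exact ⟨c, by rw [← hs]; exact hcol _ _ hd.symm⟩

/-- The consequence of locality used below. -/
theorem locality (φ : Language.graph.Formula (Fin 2)) :
    ∃ (r k : ℕ), ∀ (V : Type) [Fintype V] (G : SimpleGraph V),
      letI := G.structure
      ∃ col : V → Fin k, ∀ u v u' v', col u = col u' → col v = col v' →
        ¬ Nr G r u v → ¬ Nr G r u' v' → (φ.Realize ![u, v] ↔ φ.Realize ![u', v']) := by
  obtain ⟨q, hq⟩ := formula_local φ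
  obtain ⟨T, _, hT⟩ := coloring q 1
  obtain ⟨k, ⟨e⟩⟩ := Finite.exists_equiv_fin T
  refine ⟨2 ^ q, k, fun V _ G => ?_⟩
  letI := G.structure
  obtain ⟨col, hcol⟩ := hT V G
  refine ⟨fun v => e (col fun _ => v), ?_⟩
  intro u v u' v' hu hv h h'
  refine hq V G _ _ _ _ ?_
  have hu := hcol _ _ (e.injective hu)
  have hv := hcol _ _ (e.injective hv)
  refine (Loc.union hu hv ?_ ?_).subset ?_
  · rintro _ ⟨i, rfl⟩ _ ⟨j, rfl⟩; exact h
  · rintro _ ⟨i, rfl⟩ _ ⟨j, rfl⟩; exact h'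
  · rintro x (⟨i, rfl⟩ | ⟨i, rfl⟩)
    · fin_cases i
      · left; exact ⟨0, rfl⟩
      · right; exact ⟨0, rfl⟩
    · exact i.elim0

end ML
namespace ML

theorem minimax (X Y : Type) [Fintype X] [Fintype Y] [Nonempty X] [Nonempty Y]
    (M : X → Y → Prop) [∀ x y, Decidable (M x y)] :
    (∃ p : Y → ℝ, (∀ y, 0 ≤ p y) ∧ ∑ y, p y = 1 ∧
      ∀ x, 1 / 2 ≤ ∑ y, if ¬ M x y then p y else 0) ∨
    (∃ p : X → ℝ, (∀ x, 0 ≤ p x) ∧ ∑ x, p x = 1 ∧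
      ∀ y, 1 / 2 ≤ ∑ x, if M x y then p x else 0) := by
  classical
  let row : X → Y → ℝ := fun x y => if M x y then 1 else 0
  let C : Set (Y → ℝ) := (Fintype.linearCombination ℝ row) '' (stdSimplex ℝ X)
  let D : Set (Y → ℝ) := Set.univ.pi (fun _ => Set.Ioi (1 / 2 : ℝ))
  have hC : Convex ℝ C := (convex_stdSimplex ℝ X).linear_image _
  have hD : Convex ℝ D := convex_pi (fun _ _ => convex_Ioi _)
  have hDo : IsOpen D := isOpen_set_pi Set.finite_univ (fun _ _ => isOpen_Ioi)
  by_cases hdis : Disjoint D C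
  · left
    obtain ⟨f, u, hf, hu⟩ := geometric_hahn_banach_open hD hDo hC hdis
    let c : Y → ℝ := fun y => - f (Pi.single y 1)
    have hfc : ∀ g : Y → ℝ, f g = - ∑ y, c y * g y := by
      intro g
      have hg : g = ∑ y, g y • (Pi.single y (1 : ℝ) : Y → ℝ) := by
        ext z
        simp [Finset.sum_apply, Pi.single_apply]
      conv_lhs => rw [hg]
      rw [map_sum, ← Finset.sum_neg_distrib]
      refine Finset.sum_congr rfl fun y _ => ?_
      rw [map_smul]
      simp [c, mul_comm]
    have hc0 : ∀ y, 0 ≤ c y := by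
      intro y
      by_contra hneg
      push Not at hneg
      have hb : ∀ t : ℝ, 0 ≤ t → (∑ z, c z) + c y * t > - u := by
        intro t ht
        have := hf (fun z => 1 + if z = y then t else 0) (by
          intro z _
          simp only [Set.mem_Ioi]
          split_ifs <;> linarith)
        rw [hfc] at this
        simp only [mul_add, mul_one, Finset.sum_add_distrib, mul_ite, mul_zero,
          Finset.sum_ite_eq', Finset.mem_univ, if_true] at this
        linarith
      have h0 := hb 0 le_rfl
      have h1 := hb (((∑ z, c z) + u) / (- c y)) (div_nonneg (by linarith) (by linarith))
      have : c y * (((∑ z, c z) + u) / (- c y)) = -((∑ z, c z) + u) := by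
        have hne := hneg.ne
        field_simp
      linarith
    have hx : ∀ x, ∑ y, c y * row x y ≤ - u := by
      intro x
      have := hu (row x) ⟨Pi.single x 1, single_mem_stdSimplex _ _, by
        simp [Fintype.linearCombination_apply_single]⟩
      rw [hfc] at this
      linarith
    have hhalf : - u ≤ 1 / 2 * ∑ y, c y := by
      refine le_of_forall_pos_le_add fun ε hε => ?_
      have hs : 0 ≤ ∑ y, c y := Finset.sum_nonneg fun y _ => hc0 y
      have := hf (fun _ => 1 / 2 + ε / (∑ y, c y + 1)) (by
        intro z _
        simp only [Set.mem_Ioi]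
        have : 0 < ε / (∑ y, c y + 1) := by positivity
        linarith)
      rw [hfc, ← Finset.sum_mul] at this
      have h2 : (∑ y, c y) * (ε / (∑ y, c y + 1)) ≤ ε := by
        rw [mul_div_assoc', div_le_iff₀ (by linarith)]
        nlinarith
      nlinarith
    have hpos : 0 < ∑ y, c y := by
      rcases (Finset.sum_nonneg fun y (_ : y ∈ Finset.univ) => hc0 y).lt_or_eq with h | h
      · exact h
      exfalso
      have hz : ∀ y, c y = 0 := by
        intro y
        exact (Finset.sum_eq_zero_iff_of_nonneg fun y _ => hc0 y).1 h.symm y (Finset.mem_univ y)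
      have h1 := hf (fun _ => 1) (by intro z _; simp only [Set.mem_Ioi]; norm_num)
      rw [hfc] at h1
      have h2 := hx (Classical.arbitrary X)
      simp [hz] at h1 h2
      linarith
    refine ⟨fun y => c y / ∑ z, c z, fun y => div_nonneg (hc0 y) hpos.le, ?_, ?_⟩
    · rw [← Finset.sum_div, div_self hpos.ne']
    · intro x
      have h1 := hx x
      have h2 : (∑ y, if ¬ M x y then c y / ∑ z, c z else 0)
          = (∑ y, c y - ∑ y, c y * row x y) / ∑ z, c z := by
        rw [← Finset.sum_sub_distrib, Finset.sum_div]
        refine Finset.sum_congr rfl fun y _ => ?_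
        by_cases h : M x y <;> simp [row, h]
      rw [h2, le_div_iff₀ hpos]
      linarith
  · right
    rw [Set.not_disjoint_iff] at hdis
    obtain ⟨g, hgD, ⟨p, hp, rfl⟩⟩ := hdis
    refine ⟨p, hp.1, hp.2, fun y => ?_⟩
    have := hgD y (Set.mem_univ y)
    simp only [Set.mem_Ioi, Fintype.linearCombination_apply, Finset.sum_apply, Pi.smul_apply,
      smul_eq_mul, row, mul_ite, mul_one, mul_zero] at this
    exact this.le

theorem growth (n : ℕ) : ∃ m : ℕ, (∑ k ∈ Finset.Iic n, ((2 * m).choose k : ℝ)) < (3 / 2) ^ m := by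
  have ht := tendsto_pow_const_div_const_pow_of_one_lt n (r := 3 / 2) (by norm_num)
  have hpos : (0 : ℝ) < 1 / ((n + 1) * 2 ^ n) := by positivity
  obtain ⟨m, hm, hm1⟩ := ((ht.eventually (gt_mem_nhds hpos)).and
    (Filter.eventually_ge_atTop 1)).exists
  refine ⟨m, ?_⟩
  have h1 : (∑ k ∈ Finset.Iic n, ((2 * m).choose k : ℝ)) ≤ ∑ k ∈ Finset.Iic n, (2 * m : ℝ) ^ n := by
    refine Finset.sum_le_sum fun k hk => ?_
    have : (2 * m).choose k ≤ (2 * m) ^ n :=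
      (Nat.choose_le_pow _ _).trans (Nat.pow_le_pow_right (by omega) (Finset.mem_Iic.1 hk))
    exact_mod_cast this
  refine h1.trans_lt ?_
  rw [Finset.sum_const, Nat.card_Iic, nsmul_eq_mul, mul_pow]
  rw [div_lt_div_iff₀ (by positivity) (by positivity)] at hm
  push_cast
  linarith

section net
variable {Ω ι : Type} [Fintype Ω] [Fintype ι] {m : ℕ}

/-- swapping of coordinates -/
def sw (σ : Fin m → Bool) : Fin m ⊕ Fin m → Fin m ⊕ Fin m :=
  Sum.elim (fun k => if σ k then Sum.inr k else Sum.inl k)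
    (fun k => if σ k then Sum.inl k else Sum.inr k)

theorem sw_invol (σ : Fin m → Bool) : Function.Involutive (sw σ) := by
  rintro (k | k) <;> cases h : σ k <;> simp [sw, h]

open Classical in
/-- traces -/
noncomputable def tr (R : ι → Ω → Prop) (z : Fin m ⊕ Fin m → Ω) : Finset (Finset (Fin m ⊕ Fin m)) :=
  Finset.univ.image (fun i => Finset.univ.filter (fun j => R i (z j)))

open Classical in
noncomputable def hh (τ : Finset (Fin m ⊕ Fin m)) (k : Fin m) : ℝ :=
  if Sum.inl k ∈ τ then 0 else if Sum.inr k ∈ τ then 2 else 1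

theorem hh_nonneg (τ : Finset (Fin m ⊕ Fin m)) (k : Fin m) : 0 ≤ hh τ k := by
  unfold hh; split_ifs <;> norm_num

noncomputable def psi (R : ι → Ω → Prop) (z : Fin m ⊕ Fin m → Ω) : ℝ :=
  ∑ τ ∈ tr R z, ∏ k, hh τ k

theorem psi_swap (R : ι → Ω → Prop) (z : Fin m ⊕ Fin m → Ω) :
    ∑ σ : Fin m → Bool, psi R (z ∘ sw σ) ≤ 2 ^ m * (tr R z).card := by
  classical
  have h1 : ∀ σ : Fin m → Bool, psi R (z ∘ sw σ)
      = ∑ τ ∈ tr R z, ∏ k, hh (Finset.univ.filter (fun j => sw σ j ∈ τ)) k := by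
    intro σ
    have : tr R (z ∘ sw σ) = (tr R z).image (fun τ => Finset.univ.filter (fun j => sw σ j ∈ τ)) := by
      unfold tr
      rw [Finset.image_image]
      refine Finset.image_congr fun i _ => ?_
      ext j
      simp
    rw [psi, this, Finset.sum_image]
    intro τ _ τ' _ h
    ext j
    have := congrArg (fun s => sw σ j ∈ s) h
    simpa [sw_invol σ j] using this
  simp_rw [h1]
  rw [Finset.sum_comm]
  have h2 : ∀ τ ∈ tr R z, ∑ σ : Fin m → Bool,
      ∏ k, hh (Finset.univ.filter (fun j => sw σ j ∈ τ)) k ≤ 2 ^ m := by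
    intro τ _
    let g : Fin m → Bool → ℝ := fun k b =>
      if (if b then Sum.inr k else Sum.inl k) ∈ τ then 0 else
        if (if b then Sum.inl k else Sum.inr k) ∈ τ then 2 else 1
    have h3 : ∀ (σ : Fin m → Bool) k,
        hh (Finset.univ.filter (fun j => sw σ j ∈ τ)) k = g k (σ k) := by
      intro σ k
      have ha : Sum.inl k ∈ (Finset.univ.filter (fun j => sw σ j ∈ τ)) ↔
          (if σ k then Sum.inr k else Sum.inl k) ∈ τ := by
        rw [Finset.mem_filter]; simp [sw]
      have hb : Sum.inr k ∈ (Finset.univ.filter (fun j => sw σ j ∈ τ)) ↔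
          (if σ k then Sum.inl k else Sum.inr k) ∈ τ := by
        rw [Finset.mem_filter]; simp [sw]
      exact if_congr ha rfl (if_congr hb rfl rfl)
    simp_rw [h3]
    rw [← Fintype.prod_sum]
    calc ∏ k, ∑ b, g k b ≤ ∏ _k : Fin m, (2 : ℝ) := by
          refine Finset.prod_le_prod (fun k _ => Finset.sum_nonneg fun b _ => ?_) fun k _ => ?_
          · simp only [g]; split_ifs <;> norm_num
          · rw [Fintype.sum_bool]
            by_cases ha : Sum.inl k ∈ τ <;> by_cases hb : Sum.inr k ∈ τ <;>
              simp [g, ha, hb] <;> norm_num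
      _ = 2 ^ m := by simp
  calc _ ≤ ∑ τ ∈ tr R z, (2 : ℝ) ^ m := Finset.sum_le_sum h2
    _ = _ := by rw [Finset.sum_const, nsmul_eq_mul, mul_comm]

theorem tr_card (n : ℕ) (R : ι → Ω → Prop)
    (hR : ¬ ∃ w : Fin n → Ω, ∀ I : Finset (Fin n), ∃ i, ∀ k, R i (w k) ↔ k ∈ I)
    (z : Fin m ⊕ Fin m → Ω) :
    (tr R z).card ≤ ∑ k ∈ Finset.Iic n, (2 * m).choose k := by
  classical
  have h := (Finset.card_le_card_shatterer (tr R z)).trans Finset.card_shatterer_le_sum_vcDim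
  rw [Fintype.card_sum, Fintype.card_fin, ← two_mul] at h
  refine h.trans (Finset.sum_le_sum_of_subset (Finset.Iic_subset_Iic.2 ?_))
  refine Finset.sup_le fun s hs => ?_
  rw [Finset.mem_shatterer] at hs
  by_contra hlt
  push Not at hlt
  apply hR
  have hcard : Fintype.card (Fin n) ≤ Fintype.card s := by simpa using hlt.le
  obtain ⟨e⟩ := Function.Embedding.nonempty_of_card_le hcard
  refine ⟨fun k => z (e k), fun I => ?_⟩
  obtain ⟨u, hu, hsu⟩ := hs (t := I.image (fun k => (e k : Fin m ⊕ Fin m))) (by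
    intro j hj
    obtain ⟨k, _, rfl⟩ := Finset.mem_image.1 hj
    exact (e k).2)
  obtain ⟨i, _, rfl⟩ := Finset.mem_image.1 hu
  refine ⟨i, fun k => ?_⟩
  have := congrArg (fun s => (e k : Fin m ⊕ Fin m) ∈ s) hsu
  simpa [Subtype.coe_inj] using this

end net

theorem net (n : ℕ) : ∃ N : ℕ, ∀ (Ω ι : Type) [Fintype Ω] [Fintype ι] (R : ι → Ω → Prop)
    [∀ i ω, Decidable (R i ω)] (p : Ω → ℝ),
    (∀ ω, 0 ≤ p ω) → ∑ ω, p ω = 1 → (∀ i, 1 / 2 ≤ ∑ ω, if R i ω then p ω else 0) →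
    (¬ ∃ w : Fin n → Ω, ∀ I : Finset (Fin n), ∃ i, ∀ k, R i (w k) ↔ k ∈ I) →
    ∃ S : Finset Ω, S.card ≤ N ∧ ∀ i, ∃ ω ∈ S, R i ω := by
  obtain ⟨m, hm⟩ := growth n
  refine ⟨m, ?_⟩
  intro Ω ι _ _ R _ p hp0 hp1 hhalf hR
  classical
  by_contra hcon
  push Not at hcon
  have hi : ∀ x : Fin m → Ω, ∃ i, ∀ k, ¬ R i (x k) := by
    intro x
    obtain ⟨i, hi⟩ := hcon (Finset.univ.image x) (Finset.card_image_le.trans (by simp))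
    exact ⟨i, fun k => hi _ (Finset.mem_image_of_mem _ (Finset.mem_univ k))⟩
  choose i hi using hi
  let W : (Fin m ⊕ Fin m → Ω) → ℝ := fun z => ∏ j, p (z j)
  have hW0 : ∀ z, 0 ≤ W z := fun z => Finset.prod_nonneg fun j _ => hp0 _
  have hW1 : ∑ z, W z = 1 := by
    simp only [W]
    rw [← Fintype.prod_sum (fun (_ : Fin m ⊕ Fin m) => p)]
    simp [hp1]
  have hPx : ∑ x : Fin m → Ω, ∏ k, p (x k) = 1 := by
    rw [← Fintype.prod_sum (fun (_ : Fin m) => p)]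
    simp [hp1]
  -- upper bound
  have hup : 2 ^ m * ∑ z, W z * psi R z ≤ 2 ^ m * ∑ k ∈ Finset.Iic n, ((2 * m).choose k : ℝ) := by
    have h1 : ∀ σ : Fin m → Bool, ∑ z, W z * psi R z = ∑ z, W z * psi R (z ∘ sw σ) := by
      intro σ
      let e : (Fin m ⊕ Fin m) ≃ (Fin m ⊕ Fin m) := (sw_invol σ).toPerm
      rw [← Equiv.sum_comp (Equiv.arrowCongr e (Equiv.refl Ω))]
      refine Finset.sum_congr rfl fun z _ => ?_
      have hz : (Equiv.arrowCongr e (Equiv.refl Ω)) z = z ∘ sw σ := by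
        ext j; rfl
      rw [hz]
      congr 1
      exact Equiv.prod_comp e (fun j => p (z j))
    calc 2 ^ m * ∑ z, W z * psi R z = ∑ σ : Fin m → Bool, ∑ z, W z * psi R z := by
          rw [Finset.sum_const]; simp
      _ = ∑ σ : Fin m → Bool, ∑ z, W z * psi R (z ∘ sw σ) :=
          Finset.sum_congr rfl fun σ _ => h1 σ
      _ = ∑ z, W z * ∑ σ : Fin m → Bool, psi R (z ∘ sw σ) := by
          rw [Finset.sum_comm]
          exact Finset.sum_congr rfl fun z _ => (Finset.mul_sum _ _ _).symm
      _ ≤ ∑ z, W z * (2 ^ m * ∑ k ∈ Finset.Iic n, ((2 * m).choose k : ℝ)) := by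
          refine Finset.sum_le_sum fun z _ => mul_le_mul_of_nonneg_left ?_ (hW0 z)
          refine (psi_swap R z).trans (mul_le_mul_of_nonneg_left ?_ (by positivity))
          exact_mod_cast tr_card n R hR z
      _ = _ := by rw [← Finset.sum_mul, hW1, one_mul]
  -- lower bound
  have hlow : (3 / 2 : ℝ) ^ m ≤ ∑ z, W z * psi R z := by
    have h1 : ∀ x y : Fin m → Ω, (∏ k, if R (i x) (y k) then (2 : ℝ) else 1)
        ≤ psi R (Sum.elim x y) := by
      intro x y
      have hmem : (Finset.univ.filter (fun j => R (i x) (Sum.elim x y j))) ∈ tr R (Sum.elim x y) := by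
        unfold tr
        refine Finset.mem_image.2 ⟨i x, Finset.mem_univ _, ?_⟩
        ext j; simp
      refine le_trans (le_of_eq ?_) (Finset.single_le_sum
        (f := fun τ => ∏ k, hh τ k) (fun τ _ => Finset.prod_nonneg fun k _ => hh_nonneg τ k) hmem)
      refine Finset.prod_congr rfl fun k _ => ?_
      simp [hh, hi x k]
    calc (3 / 2 : ℝ) ^ m = ∑ x : Fin m → Ω, (∏ k, p (x k)) * (3 / 2 : ℝ) ^ m := by
          rw [← Finset.sum_mul, hPx, one_mul]
      _ ≤ ∑ x : Fin m → Ω, (∏ k, p (x k)) *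
            ∑ y : Fin m → Ω, ∏ k, (p (y k) * if R (i x) (y k) then (2 : ℝ) else 1) := by
          refine Finset.sum_le_sum fun x _ => mul_le_mul_of_nonneg_left ?_
            (Finset.prod_nonneg fun k _ => hp0 _)
          rw [← Fintype.prod_sum (fun (_ : Fin m) ω => p ω * if R (i x) ω then (2 : ℝ) else 1)]
          rw [Finset.prod_const, Finset.card_univ, Fintype.card_fin]
          refine pow_le_pow_left₀ (by norm_num) ?_ _
          have : ∑ ω, (p ω * if R (i x) ω then (2 : ℝ) else 1)
              = ∑ ω, p ω + ∑ ω, if R (i x) ω then p ω else 0 := by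
            rw [← Finset.sum_add_distrib]
            refine Finset.sum_congr rfl fun ω _ => ?_
            split_ifs <;> ring
          rw [this, hp1]
          linarith [hhalf (i x)]
      _ ≤ ∑ x : Fin m → Ω, ∑ y : Fin m → Ω, W (Sum.elim x y) * psi R (Sum.elim x y) := by
          refine Finset.sum_le_sum fun x _ => ?_
          rw [Finset.mul_sum]
          refine Finset.sum_le_sum fun y _ => ?_
          rw [Finset.prod_mul_distrib, ← mul_assoc]
          have : W (Sum.elim x y) = (∏ k, p (x k)) * ∏ k, p (y k) := by
            simp [W, Fintype.prod_sum_type]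
          rw [← this]
          exact mul_le_mul_of_nonneg_left (h1 x y) (hW0 _)
      _ = ∑ z, W z * psi R z := by
          rw [← Equiv.sum_comp (Equiv.sumArrowEquivProdArrow (Fin m) (Fin m) Ω).symm,
            Fintype.sum_prod_type]
          rfl
  have := le_of_mul_le_mul_left hup (by positivity)
  linarith

theorem bip (d : ℕ) : ∃ N : ℕ, ∀ (V : Type) [Fintype V] (E : V → V → Prop),
    (¬ ∃ (a : Fin (d + 1) → V) (b : Finset (Fin (d + 1)) → V),
      ∀ (i : Fin (d + 1)) (I : Finset (Fin (d + 1))), E (a i) (b I) ↔ i ∈ I) →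
    ∀ A' A : Set V, ∃ S : Finset V, (S : Set V) ⊆ A' ∪ A ∧ S.card ≤ N ∧
      ((∀ x ∈ A', ∃ w ∈ S, w ∈ A ∧ ¬ E x w) ∨ (∀ y ∈ A, ∃ w ∈ S, w ∈ A' ∧ E w y)) := by
  obtain ⟨N1, h1⟩ := net (Fintype.card (Finset (Fin (d + 1))))
  obtain ⟨N2, h2⟩ := net (d + 1)
  refine ⟨max N1 N2, ?_⟩
  intro V _ E hE A' A
  classical
  rcases A'.eq_empty_or_nonempty with rfl | hA'
  · exact ⟨∅, by simp, by simp, Or.inl (by simp)⟩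
  rcases A.eq_empty_or_nonempty with rfl | hA
  · exact ⟨∅, by simp, by simp, Or.inr (by simp)⟩
  have := hA'.to_subtype
  have := hA.to_subtype
  rcases minimax A' A (fun x y => E x y) with ⟨p, hp0, hp1, hp⟩ | ⟨p, hp0, hp1, hp⟩
  · obtain ⟨S, hS, hS'⟩ := h1 A A' (fun x y => ¬ E x y) p hp0 hp1 hp (by
      rintro ⟨w, hw⟩
      apply hE
      let e := Fintype.equivFin (Finset (Fin (d + 1)))
      choose a ha using fun i : Fin (d + 1) => hw (Finset.univ.filter fun k => i ∉ e.symm k)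
      refine ⟨fun i => a i, fun I => w (e I), fun i I => ?_⟩
      have := ha i (e I)
      simp only [Finset.mem_filter, Finset.mem_univ, true_and, Equiv.symm_apply_apply] at this
      tauto)
    refine ⟨S.image Subtype.val, ?_, Finset.card_image_le.trans (hS.trans (le_max_left _ _)), Or.inl ?_⟩
    · intro x hx
      obtain ⟨y, -, rfl⟩ := Finset.mem_image.1 (Finset.mem_coe.1 hx)
      exact Or.inr y.2
    · intro x hx
      obtain ⟨w, hw, hxw⟩ := hS' ⟨x, hx⟩
      exact ⟨w, Finset.mem_image_of_mem _ hw, w.2, hxw⟩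
  · obtain ⟨S, hS, hS'⟩ := h2 A' A (fun y x => E x y) p hp0 hp1 hp (by
      rintro ⟨w, hw⟩
      apply hE
      choose b hb using hw
      exact ⟨fun i => w i, fun I => b I, fun i I => hb I i⟩)
    refine ⟨S.image Subtype.val, ?_, Finset.card_image_le.trans (hS.trans (le_max_right _ _)), Or.inr ?_⟩
    · intro x hx
      obtain ⟨y, -, rfl⟩ := Finset.mem_image.1 (Finset.mem_coe.1 hx)
      exact Or.inl y.2
    · intro x hx
      obtain ⟨w, hw, hxw⟩ := hS' ⟨x, hx⟩
      exact ⟨w, Finset.mem_image_of_mem _ hw, w.2, hxw⟩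

end ML
namespace ML

theorem scat {V : Type} [Fintype V] (G : SimpleGraph V) (r : ℕ) (C : Set V) :
    ∃ X : Finset V, (X : Set V) ⊆ C ∧ X.card ≤ 3 ∧
      ((∀ a b, ∃ w ∈ X, ¬ Nr G r a w ∧ ¬ Nr G r b w) ∨
        (∀ y ∈ C, ∃ z ∈ X, Nr G (2 * r) z y)) := by
  classical
  let P : Finset V → Prop := fun X => (X : Set V) ⊆ C ∧ X.card ≤ 3 ∧
    ∀ y ∈ X, ∀ z ∈ X, y ≠ z → ¬ Nr G (2 * r) y z
  obtain ⟨X, hX, hmax⟩ := Finset.exists_max_image (Finset.univ.filter P) Finset.card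
    ⟨∅, by simp [P]⟩
  have hXP : P X := by simpa using hX
  refine ⟨X, hXP.1, hXP.2.1, ?_⟩
  by_cases h3 : X.card = 3
  · left
    obtain ⟨x, y, z, hxy, hxz, hyz, rfl⟩ := Finset.card_eq_three.1 h3
    have f : ∀ c s t, s ∈ ({x, y, z} : Finset V) → t ∈ ({x, y, z} : Finset V) → s ≠ t →
        Nr G r c s → ¬ Nr G r c t := fun c s t hs ht hne h1 h2 =>
      hXP.2.2 s hs t ht hne (h1.symm.trans h2 (by omega))
    intro a b
    have fa := f a
    have fb := f b
    by_contra hcon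
    push Not at hcon
    have c1 := hcon x (by simp)
    have c2 := hcon y (by simp)
    have c3 := hcon z (by simp)
    have a1 := fa x y (by simp) (by simp) hxy
    have a2 := fa x z (by simp) (by simp) hxz
    have a3 := fa y z (by simp) (by simp) hyz
    have b1 := fb x y (by simp) (by simp) hxy
    have b2 := fb x z (by simp) (by simp) hxz
    have b3 := fb y z (by simp) (by simp) hyz
    by_cases hax : Nr G r a x
    · exact b3 (c2 (a1 hax)) (c3 (a2 hax))
    · have hbx := c1 hax
      have hay : Nr G r a y := by
        by_contra h
        exact b1 hbx (c2 h)
      have haz : Nr G r a z := by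
        by_contra h
        exact b2 hbx (c3 h)
      exact a3 hay haz
  · right
    intro y hy
    by_contra hcon
    push Not at hcon
    have hyX : y ∉ X := fun h => hcon y h (Nr.refl _ _)
    have hP : P (insert y X) := by
      refine ⟨?_, ?_, ?_⟩
      · intro x hx
        rcases Finset.mem_insert.1 (Finset.mem_coe.1 hx) with rfl | hx
        · exact hy
        · exact hXP.1 hx
      · rw [Finset.card_insert_of_notMem hyX]
        have := hXP.2.1
        omega
      · intro s hs t ht hne
        rcases Finset.mem_insert.1 hs with hs1 | hs1 <;>
          rcases Finset.mem_insert.1 ht with ht1 | ht1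
        · exact absurd (hs1.trans ht1.symm) hne
        · rw [hs1]; exact fun h => hcon t ht1 h.symm
        · rw [ht1]; exact hcon s hs1
        · exact hXP.2.2 s hs1 t ht1 hne
    have := hmax _ (by simpa using hP)
    rw [Finset.card_insert_of_notMem hyX] at this
    omega

theorem combine (d r k : ℕ) : ∃ s : ℕ, ∀ (V : Type) [Fintype V] (G : SimpleGraph V)
    (E : V → V → Prop) (col : V → Fin k),
    (∀ u v u' v', col u = col u' → col v = col v' →
        ¬ Nr G r u v → ¬ Nr G r u' v' → (E u v ↔ E u' v')) →
    (¬ ∃ (a : Fin (d + 1) → V) (b : Finset (Fin (d + 1)) → V),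
      ∀ (i : Fin (d + 1)) (I : Finset (Fin (d + 1))), E (a i) (b I) ↔ i ∈ I) →
    ∀ U : Set V, ∃ S : Finset V, (S : Set V) ⊆ U ∧ S.card ≤ s ∧
        ∀ u v u' v' : V, u ∈ U → v ∈ U → u' ∈ U → v' ∈ U →
          ¬ Nr G (5 * r) u v → ¬ Nr G (5 * r) u' v' →
          (∀ w ∈ S, E u w ↔ E u' w) → (∀ w ∈ S, E w v ↔ E w v') → E u v → E u' v' := by
  obtain ⟨N, hN⟩ := bip d
  refine ⟨k * 3 + k * (3 * (k * (k * N))), ?_⟩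
  intro V _ G E col hcol hE U
  classical
  choose X hXU hX3 hX using fun t : Fin k => scat G r {x | x ∈ U ∧ col x = t}
  let A : V → Fin k → Set V := fun z t => {x | x ∈ U ∧ Nr G (2 * r) z x ∧ col x = t}
  choose B hBU hBN hB using fun (z : V) (t t' : Fin k) => hN V E hE (A z t) (A z t')
  let S1 : Finset V := Finset.univ.biUnion X
  let S2 : Finset V := Finset.univ.biUnion fun t => (X t).biUnion fun z =>
    Finset.univ.biUnion fun t1 => Finset.univ.biUnion fun t2 => B z t1 t2
  have hS1 : ∀ t, ∀ z ∈ X t, z ∈ S1 ∪ S2 := fun t z hz =>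
    Finset.mem_union_left _ (Finset.mem_biUnion.2 ⟨t, Finset.mem_univ _, hz⟩)
  have hS2 : ∀ t, ∀ z ∈ X t, ∀ t1 t2, ∀ w ∈ B z t1 t2, w ∈ S1 ∪ S2 := fun t z hz t1 t2 w hw =>
    Finset.mem_union_right _ (Finset.mem_biUnion.2 ⟨t, Finset.mem_univ _,
      Finset.mem_biUnion.2 ⟨z, hz, Finset.mem_biUnion.2 ⟨t1, Finset.mem_univ _,
        Finset.mem_biUnion.2 ⟨t2, Finset.mem_univ _, hw⟩⟩⟩⟩)
  refine ⟨S1 ∪ S2, ?_, ?_, ?_⟩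
  · intro w hw
    rcases Finset.mem_union.1 (Finset.mem_coe.1 hw) with hw | hw
    · obtain ⟨t, -, ht⟩ := Finset.mem_biUnion.1 hw
      exact (hXU t ht).1
    · obtain ⟨t, -, hw⟩ := Finset.mem_biUnion.1 hw
      obtain ⟨z, -, hw⟩ := Finset.mem_biUnion.1 hw
      obtain ⟨t1, -, hw⟩ := Finset.mem_biUnion.1 hw
      obtain ⟨t2, -, hw⟩ := Finset.mem_biUnion.1 hw
      rcases hBU z t1 t2 hw with h | h
      · exact h.1
      · exact h.1
  · refine (Finset.card_union_le _ _).trans (add_le_add ?_ ?_)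
    · refine (Finset.card_biUnion_le_card_mul _ _ 3 fun t _ => hX3 t).trans ?_
      simp
    · refine (Finset.card_biUnion_le_card_mul _ _ (3 * (k * (k * N))) fun t _ => ?_).trans (by simp)
      refine (Finset.card_biUnion_le_card_mul _ _ (k * (k * N)) fun z _ => ?_).trans
        (Nat.mul_le_mul_right _ (hX3 t))
      refine (Finset.card_biUnion_le_card_mul _ _ (k * N) fun t1 _ => ?_).trans (by simp)
      refine (Finset.card_biUnion_le_card_mul _ _ N fun t2 _ => hBN z t1 t2).trans (by simp)
  · intro u v u' v' hu hv hu' hv' huv huv' hS hS' huvE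
    by_contra hE'
    have hclose : ∀ t, ∀ z ∈ X t, Nr G (2 * r) z v → Nr G (2 * r) z u' → False := by
      intro t z hz hzv hzu
      rcases hB z (col u') (col v) with h | h
      · obtain ⟨w, hw, hwA, hn⟩ := h u' ⟨hu', hzu, rfl⟩
        apply hn
        rw [← hS w (hS2 t z hz _ _ w hw)]
        refine (hcol u v u w rfl hwA.2.2.symm ?_ ?_).1 huvE
        · exact fun h => huv (h.mono (by omega))
        · intro h
          have h1 := hwA.2.1.symm.trans hzv (m := 4 * r) (by omega)
          exact huv (h.trans h1 (by omega))
      · obtain ⟨w, hw, hwA, hn⟩ := h v ⟨hv, hzv, rfl⟩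
        apply hE'
        rw [hS' w (hS2 t z hz _ _ w hw)] at hn
        refine (hcol w v' u' v' hwA.2.2 rfl ?_ ?_).1 hn
        · intro h
          have h1 := hzu.symm.trans hwA.2.1 (m := 4 * r) (by omega)
          exact huv' (h1.trans h (by omega))
        · exact fun h => huv' (h.mono (by omega))
    have hw : ∃ w ∈ S1 ∪ S2, col w = col v ∧ ¬ Nr G r u w ∧ ¬ Nr G r u' w := by
      rcases hX (col v) with h | h
      · obtain ⟨w, hw, h1, h2⟩ := h u u'
        exact ⟨w, hS1 _ w hw, (hXU _ hw).2, h1, h2⟩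
      · obtain ⟨z, hz, hzv⟩ := h v ⟨hv, rfl⟩
        refine ⟨z, hS1 _ z hz, (hXU _ hz).2, fun h1 => ?_, fun h1 => ?_⟩
        · exact huv (h1.trans hzv (by omega))
        · exact hclose _ z hz hzv (h1.symm.mono (by omega))
    have hw' : ∃ w ∈ S1 ∪ S2, col w = col u' ∧ ¬ Nr G r v w ∧ ¬ Nr G r v' w := by
      rcases hX (col u') with h | h
      · obtain ⟨w, hw, h1, h2⟩ := h v v'
        exact ⟨w, hS1 _ w hw, (hXU _ hw).2, h1, h2⟩
      · obtain ⟨z, hz, hzv⟩ := h u' ⟨hu', rfl⟩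
        refine ⟨z, hS1 _ z hz, (hXU _ hz).2, fun h1 => ?_, fun h1 => ?_⟩
        · exact hclose _ z hz (h1.symm.mono (by omega)) hzv
        · exact huv' (hzv.symm.trans h1.symm (by omega))
    obtain ⟨w, hwS, hwc, hw1, hw2⟩ := hw
    obtain ⟨x, hxS, hxc, hx1, hx2⟩ := hw'
    have e1 : E u w := (hcol u v u w rfl hwc.symm (fun h => huv (h.mono (by omega))) hw1).1 huvE
    have e2 : E u' w := (hS w hwS).1 e1
    have e3 : E x v := (hcol u' w x v hxc.symm hwc hw2 (fun h => hx1 h.symm)).1 e2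
    have e4 : E x v' := (hS' x hxS).1 e3
    exact hE' ((hcol x v' u' v' hxc rfl (fun h => hx2 h.symm)
      (fun h => huv' (h.mono (by omega)))).1 e4)

end ML




/-- Main Lemma, Lemma 9 of the paper. For every first-order formula
`φ(x,y)` in the language of graphs and every `d` there exist `s, r : ℕ` such that: for
every finite graph `G` on which `φ` has VC-dimension at most `d` and every `U ⊆ V(G)`,
there is `S ⊆ U` with `|S| ≤ s` such that for all `u, v, u', v' ∈ U` with
`dist_G(u,v) > r`, `dist_G(u',v') > r`, `φ(u,S) = φ(u',S)` and `φ(S,v) = φ(S,v')`,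
one has `G ⊨ φ(u,v) ↔ G ⊨ φ(u',v')`. -/
theorem main_lemma (φ : Language.graph.Formula (Fin 2)) (d : ℕ) :
    ∃ s r : ℕ, ∀ (V : Type) [Fintype V] (G : SimpleGraph V),
      letI := G.structure
      (¬ ∃ (a : Fin (d + 1) → V) (b : Finset (Fin (d + 1)) → V),
          ∀ (i : Fin (d + 1)) (I : Finset (Fin (d + 1))),
            φ.Realize ![a i, b I] ↔ i ∈ I) →
      ∀ U : Set V, ∃ S : Finset V, (S : Set V) ⊆ U ∧ S.card ≤ s ∧
        ∀ u v u' v' : V, u ∈ U → v ∈ U → u' ∈ U → v' ∈ U →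
          (r : ℕ∞) < G.edist u v → (r : ℕ∞) < G.edist u' v' →
          (∀ w ∈ S, φ.Realize ![u, w] ↔ φ.Realize ![u', w]) →
          (∀ w ∈ S, φ.Realize ![w, v] ↔ φ.Realize ![w, v']) →
          (φ.Realize ![u, v] ↔ φ.Realize ![u', v']) := by
  obtain ⟨r, k, hloc⟩ := ML.locality φ
  obtain ⟨s, hs⟩ := ML.combine d r k
  refine ⟨s, 5 * r, fun V _ G => ?_⟩
  let _ := G.structure
  intro hvc U
  obtain ⟨col, hcol⟩ := hloc V G
  obtain ⟨S, hSU, hSs, hS⟩ := hs V G (fun u v => φ.Realize ![u, v]) col hcol hvc U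
  refine ⟨S, hSU, hSs, ?_⟩
  intro u v u' v' hu hv hu' hv' huv huv' h1 h2
  exact ⟨hS u v u' v' hu hv hu' hv' (not_le.2 huv) (not_le.2 huv') h1 h2,
    hS u' v' u v hu' hv' hu hv (not_le.2 huv') (not_le.2 huv) (fun w hw => (h1 w hw).symm)
      (fun w hw => (h2 w hw).symm)⟩
end

section
/- For every first-order formula φ(x,y) in the language of graphs, every first-order formula δ(x), and every natural number d, there exist natural numbers s and r such that the following holds. Let G be a finite graph on which φ has VC-dimension at most d and such that G ⊨ φ(u,v) iff G ⊨ φ(v,u) for all u,v; let U = {v ∈ V(G) : G ⊨ δ(v)}, and let H be the graph with vertex set U in which distinct u,v ∈ U are adjacent iff G ⊨ φ(u,v). Then there exist a set S ⊆ U with |S| ≤ s and a symmetric relation R on the powerset of S such that the graph F with vertex set U, in which distinct u,v ∈ U are adjacent iff exactly one of "uv ∈ E(H)" and "(N_H(u) ∩ S, N_H(v) ∩ S) ∈ R" holds, satisfies: every edge uv of F has dist^G(u,v) ≤ r. (Thus F is a 2^s-flip of H guarded by S, all of whose edges join vertices at G-distance at most r.) -/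
open FirstOrder

namespace FlipAux

/-- bounded graph distance -/
def Near {V : Type} (G : SimpleGraph V) (n : ℕ) (u v : V) : Prop := G.edist u v ≤ (n : ℕ∞)

lemma Near.symm {V : Type} {G : SimpleGraph V} {n : ℕ} {u v : V} (h : Near G n u v) :
    Near G n v u := by
  unfold Near at *
  rwa [SimpleGraph.edist_comm]

lemma Near.trans {V : Type} {G : SimpleGraph V} {n m k : ℕ} {u v w : V} (h : Near G n u v)
    (h' : Near G m v w) (hk : n + m ≤ k) : Near G k u w := by
  unfold Near at *
  calc G.edist u w ≤ G.edist u v + G.edist v w := G.edist_triangle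
    _ ≤ (n : ℕ∞) + m := add_le_add h h'
    _ ≤ k := by exact_mod_cast hk

lemma Near.mono {V : Type} {G : SimpleGraph V} {n k : ℕ} {u v : V} (h : Near G n u v)
    (hk : n ≤ k) : Near G k u v := by
  unfold Near at *
  exact h.trans (by exact_mod_cast hk)

lemma Near.refl {V : Type} (G : SimpleGraph V) (n : ℕ) (u : V) : Near G n u u := by
  unfold Near
  simp

/-- Distinct parts of the tuple are far apart. -/
def FarP {V ι : Type} (G : SimpleGraph V) (r : ℕ) (π : ι → ℕ) (x : ι → V) : Prop :=
  ∀ i j, π i ≠ π j → ¬ Near G r (x i) (x j)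

/-- Predicates that, on tuples split in far parts, only depend on boundedly many colours of
the parts. -/
def Good (ι : Type) (P : ∀ (V : Type), SimpleGraph V → (ι → V) → Prop) : Prop :=
  ∃ (r : ℕ) (K : Type), Finite K ∧ ∀ (V : Type) (G : SimpleGraph V),
    ∃ c : Set ι → (ι → V) → K,
      (∀ I x y, (∀ i ∈ I, x i = y i) → c I x = c I y) ∧
      ∀ (π : ι → ℕ) (x y : ι → V), FarP G r π x → FarP G r π y →
        (∀ j, c (π ⁻¹' {j}) x = c (π ⁻¹' {j}) y) → (P V G x ↔ P V G y)

lemma good_atom {ι : Type} (Q : ∀ (V : Type), SimpleGraph V → V → V → Prop)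
    (hQ : ∀ V G u v, Q V G u v → Near G 1 u v) (i j : ι) :
    Good ι (fun V G x => Q V G (x i) (x j)) := by
  refine ⟨1, Prop, inferInstance, fun V G => ⟨fun I x => i ∈ I ∧ j ∈ I ∧ Q V G (x i) (x j),
    ?_, ?_⟩⟩
  · intro I x y h
    apply propext
    constructor
    · rintro ⟨h1, h2, h3⟩
      exact ⟨h1, h2, by rwa [← h i h1, ← h j h2]⟩
    · rintro ⟨h1, h2, h3⟩
      exact ⟨h1, h2, by rwa [h i h1, h j h2]⟩
  · intro π x y hx hy h
    by_cases hij : π i = π j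
    · have := iff_of_eq (h (π i))
      simpa [hij] using this
    · have h1 := fun h => hx i j hij (hQ _ _ _ _ h)
      have h2 := fun h => hy i j hij (hQ _ _ _ _ h)
      exact ⟨fun h => (h1 h).elim, fun h => (h2 h).elim⟩

lemma good_false {ι : Type} : Good ι (fun _ _ _ => False) :=
  ⟨0, Unit, inferInstance, fun _ _ => ⟨fun _ _ => (), by simp, by simp⟩⟩

lemma FarP.mono {V ι : Type} {G : SimpleGraph V} {r s : ℕ} {π : ι → ℕ} {x : ι → V}
    (h : FarP G s π x) (hrs : r ≤ s) : FarP G r π x :=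
  fun i j hij hn => h i j hij (hn.mono hrs)

lemma good_imp {ι : Type} {P Q : ∀ (V : Type), SimpleGraph V → (ι → V) → Prop}
    (hP : Good ι P) (hQ : Good ι Q) : Good ι (fun V G x => P V G x → Q V G x) := by
  obtain ⟨r, K, hK, h⟩ := hP
  obtain ⟨r', K', hK', h'⟩ := hQ
  refine ⟨max r r', K × K', inferInstance, fun V G => ?_⟩
  obtain ⟨c, hc, hc2⟩ := h V G
  obtain ⟨c', hc', hc2'⟩ := h' V G
  refine ⟨fun I x => (c I x, c' I x), ?_, ?_⟩
  · intro I x y hxy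
    simp only [hc I x y hxy, hc' I x y hxy]
  · intro π x y hx hy hxy
    have h1 := hc2 π x y (hx.mono (le_max_left _ _)) (hy.mono (le_max_left _ _))
      (fun j => (Prod.ext_iff.1 (hxy j)).1)
    have h2 := hc2' π x y (hx.mono (le_max_right _ _)) (hy.mono (le_max_right _ _))
      (fun j => (Prod.ext_iff.1 (hxy j)).2)
    exact imp_congr h1 h2

lemma good_comp {ι ι' : Type} (f : ι → ι') {P : ∀ (V : Type), SimpleGraph V → (ι → V) → Prop}
    (hP : Good ι P) : Good ι' (fun V G x => P V G (x ∘ f)) := by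
  obtain ⟨r, K, hK, h⟩ := hP
  refine ⟨r, K, hK, fun V G => ?_⟩
  obtain ⟨c, hc, hc2⟩ := h V G
  refine ⟨fun I x => c (f ⁻¹' I) (x ∘ f), ?_, ?_⟩
  · intro I x y hxy
    exact hc _ _ _ (fun i hi => hxy _ hi)
  · intro π x y hx hy hxy
    exact hc2 (π ∘ f) _ _ (fun i j hij => hx _ _ hij) (fun i j hij => hy _ _ hij) hxy

/-- Scattered set or cover by few sets of small diameter. -/
lemma scatter {V : Type} (G : SimpleGraph V) (r : ℕ) (C : Set V) (n : ℕ) :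
    (∃ f : Fin n → V, (∀ i, f i ∈ C) ∧ ∀ i j, i ≠ j → ¬ Near G (2 * r) (f i) (f j)) ∨
    (∃ B : Fin n → Set V, (∀ p, ∀ a ∈ B p, ∀ b ∈ B p, Near G (4 * r) a b) ∧
      ∀ a ∈ C, ∃ p, a ∈ B p) := by
  induction n with
  | zero => exact Or.inl ⟨Fin.elim0, fun i => i.elim0, fun i => i.elim0⟩
  | succ n ih =>
    rcases ih with ⟨f, hf, hf2⟩ | ⟨B, hB, hB2⟩
    · by_cases h : ∃ a ∈ C, ∀ i, ¬ Near G (2 * r) a (f i)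
      · obtain ⟨a, ha, hai⟩ := h
        left
        refine ⟨Fin.cons a f, ?_, ?_⟩
        · intro i
          refine Fin.cases ?_ ?_ i
          · simpa using ha
          · intro i; simpa using hf i
        · intro i j
          refine Fin.cases ?_ ?_ i
          · refine Fin.cases ?_ ?_ j
            · simp
            · intro j _; simpa using hai j
          · intro i
            refine Fin.cases ?_ ?_ j
            · intro _ hn
              exact hai i (by simpa using hn.symm)
            · intro j hij
              simpa using hf2 i j (by simpa using hij)
      · push Not at h
        right
        refine ⟨Fin.cons ∅ (fun i => {a | Near G (2 * r) a (f i)}), ?_, ?_⟩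
        · intro p
          refine Fin.cases ?_ ?_ p
          · simp
          · intro p a ha b hb
            simp only [Fin.cons_succ, Set.mem_ofPred_eq] at ha hb
            exact ha.trans hb.symm (by omega)
        · intro a ha
          obtain ⟨i, hi⟩ := h a ha
          exact ⟨i.succ, by simpa using hi⟩
    · right
      refine ⟨Fin.cons ∅ B, ?_, ?_⟩
      · intro p
        refine Fin.cases ?_ ?_ p
        · simp
        · intro p a ha b hb
          exact hB p a (by simpa using ha) b (by simpa using hb)
      · intro a ha
        obtain ⟨i, hi⟩ := hB2 a ha
        exact ⟨i.succ, by simpa using hi⟩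

/-- A scattered family with more members than centres has a member far from all centres. -/
lemma scatter_avoid {V ι : Type} [Fintype ι] (G : SimpleGraph V) (r n : ℕ) (hn : Fintype.card ι < n)
    (f : Fin n → V) (hf : ∀ i j, i ≠ j → ¬ Near G (2 * r) (f i) (f j)) (x : ι → V) :
    ∃ p, ∀ i, ¬ Near G r (x i) (f p) := by
  by_contra h
  push Not at h
  choose g hg using h
  obtain ⟨p, q, hpq, he⟩ := Fintype.exists_ne_map_eq_of_card_lt g (by simpa using hn)
  refine hf p q hpq ((hg p).symm.trans (m := r) ?_ (by omega))
  rw [he]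
  exact hg q

/-- extend a tuple -/
def ext {ι V : Type} (x : ι → V) (a : V) : Option ι → V := fun o => o.elim a x

lemma ext_none {ι V : Type} (x : ι → V) (a : V) : ext x a none = a := rfl
lemma ext_some {ι V : Type} (x : ι → V) (a : V) (i : ι) : ext x a (some i) = x i := rfl

lemma good_all {ι : Type} [Fintype ι] {P : ∀ (V : Type), SimpleGraph V → (Option ι → V) → Prop}
    (hP : Good (Option ι) P) : Good ι (fun V G x => ∀ a, P V G (ext x a)) := by
  classical
  obtain ⟨r, K, hK, h⟩ := hP
  set N := Fintype.card ι + 1 with hN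
  refine ⟨6 * r, Set K × Set K × Set (K × Fin N), inferInstance, fun V G => ?_⟩
  obtain ⟨c, hc, hc2⟩ := h V G
  -- colour of a single vertex
  let g : V → K := fun a => c {none} (fun _ => a)
  have hg : ∀ (x : ι → V) a, c {none} (ext x a) = g a := by
    intro x a
    apply hc
    simp [ext]
  have hB : ∀ γ, ∃ B : Fin N → Set V, (∀ p, ∀ a ∈ B p, ∀ b ∈ B p, Near G (4 * r) a b) ∧
      ((∃ f : Fin N → V, (∀ i, g (f i) = γ) ∧ ∀ i j, i ≠ j → ¬ Near G (2 * r) (f i) (f j)) ∨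
        ∀ a, g a = γ → ∃ p, a ∈ B p) := by
    intro γ
    rcases scatter G r {a | g a = γ} N with ⟨f, hf, hf2⟩ | ⟨B, hB, hB2⟩
    · exact ⟨fun _ => ∅, by simp, Or.inl ⟨f, hf, hf2⟩⟩
    · exact ⟨B, hB, Or.inr hB2⟩
  choose B hBd hBc using hB
  let T1 : Set ι → (ι → V) → Set K := fun I x => {k | ∃ a, c (some '' I) (ext x a) = k}
  let T2 : Set ι → (ι → V) → Set K := fun I x =>
    {k | ∃ a, (∃ i ∈ I, Near G r (x i) a) ∧ c (insert none (some '' I)) (ext x a) = k}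
  let T3 : Set ι → (ι → V) → Set (K × Fin N) := fun I x =>
    {q | ∀ a, g a = q.1 → a ∈ B q.1 q.2 → ∃ i ∈ I, Near G r (x i) a}
  have hc1 : ∀ I (x : ι → V) a b, c (some '' I) (ext x a) = c (some '' I) (ext x b) := by
    intro I x a b
    apply hc
    rintro _ ⟨i, hi, rfl⟩
    rfl
  refine ⟨fun I x => (T1 I x, T2 I x, T3 I x), ?_, ?_⟩
  · intro I x y hxy
    have e1 : ∀ a, c (some '' I) (ext x a) = c (some '' I) (ext y a) := by
      intro a
      apply hc
      rintro _ ⟨i, hi, rfl⟩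
      exact hxy i hi
    have e2 : ∀ a, c (insert none (some '' I)) (ext x a)
        = c (insert none (some '' I)) (ext y a) := by
      intro a
      apply hc
      rintro _ (rfl | ⟨i, hi, rfl⟩)
      · rfl
      · exact hxy i hi
    have e3 : ∀ a, (∃ i ∈ I, Near G r (x i) a) ↔ (∃ i ∈ I, Near G r (y i) a) := by
      intro a
      refine exists_congr fun i => and_congr_right fun hi => ?_
      rw [hxy i hi]
    simp only [T1, T2, T3, e1, e2, e3]
  · suffices H : ∀ (π : ι → ℕ) (x y : ι → V), FarP G (6 * r) π x → FarP G (6 * r) π y →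
        (∀ j, (T1 (π ⁻¹' {j}) x, T2 (π ⁻¹' {j}) x, T3 (π ⁻¹' {j}) x)
          = (T1 (π ⁻¹' {j}) y, T2 (π ⁻¹' {j}) y, T3 (π ⁻¹' {j}) y)) →
        (∀ a, P V G (ext x a)) → ∀ b, P V G (ext y b) by
      intro π x y hx hy hxy
      exact ⟨H π x y hx hy hxy, H π y x hy hx (fun j => (hxy j).symm)⟩
    intro π x y hx hy hxy hall b
    have h1 : ∀ j a, c (some '' (π ⁻¹' {j})) (ext x a) = c (some '' (π ⁻¹' {j})) (ext y b) := by
      intro j a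
      have : T1 (π ⁻¹' {j}) x = T1 (π ⁻¹' {j}) y := (Prod.ext_iff.1 (hxy j)).1
      have hm : c (some '' (π ⁻¹' {j})) (ext y b) ∈ T1 (π ⁻¹' {j}) x := by
        rw [this]; exact ⟨b, rfl⟩
      obtain ⟨a', ha'⟩ := hm
      rw [← ha']
      exact hc1 _ _ _ _
    by_cases hnear : ∃ i, Near G r (y i) b
    · obtain ⟨i, hi⟩ := hnear
      have h2 : T2 (π ⁻¹' {π i}) x = T2 (π ⁻¹' {π i}) y :=
        (Prod.ext_iff.1 (Prod.ext_iff.1 (hxy (π i))).2).1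
      have hm : c (insert none (some '' (π ⁻¹' {π i}))) (ext y b) ∈ T2 (π ⁻¹' {π i}) x := by
        rw [h2]; exact ⟨b, ⟨i, by simp, hi⟩, rfl⟩
      obtain ⟨a, ⟨i', hi', hna⟩, hca⟩ := hm
      have hi'' : π i' = π i := by simpa using hi'
      let ρ : Option ι → ℕ := fun o => o.elim (π i) π
      have far : ∀ (z : ι → V) (e : V) (k : ι), FarP G (6 * r) π z → π k = π i →
          Near G r (z k) e → FarP G r ρ (ext z e) := by
        intro z e k hz hk hze
        rintro (_ | p) (_ | q) hpq
        · simp at hpq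
        · intro hn
          simp only [ext_none, ext_some] at hn
          exact hz k q (by rw [hk]; exact hpq) (hze.trans hn (by omega))
        · intro hn
          simp only [ext_none, ext_some] at hn
          exact hz p k (by rw [hk]; exact hpq) (hn.trans hze.symm (by omega))
        · exact fun hn => hz p q hpq (hn.mono (by omega))
      refine (hc2 ρ (ext x a) (ext y b) (far x a i' hx hi'' hna) (far y b i hy rfl hi) ?_).1
        (hall a)
      intro j
      by_cases hj : j = π i
      · have : ρ ⁻¹' {j} = insert none (some '' (π ⁻¹' {π i})) := by
          ext o
          cases o <;> simp [ρ, hj]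
        rw [this]
        exact hca
      · have : ρ ⁻¹' {j} = some '' (π ⁻¹' {j}) := by
          ext o
          cases o
          · simp [ρ, Ne.symm hj]
          · simp [ρ]
        rw [this]
        exact h1 j a
    · push Not at hnear
      have ha : ∃ a, g a = g b ∧ ∀ i, ¬ Near G r (x i) a := by
        rcases hBc (g b) with ⟨f, hf, hf2⟩ | hcov
        · obtain ⟨p, hp⟩ := scatter_avoid G r N (by omega) f hf2 x
          exact ⟨f p, hf p, hp⟩
        · obtain ⟨p, hp⟩ := hcov b rfl
          by_contra hcon
          push Not at hcon
          obtain ⟨i0, hi0⟩ := hcon b rfl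
          have h3 : T3 (π ⁻¹' {π i0}) x = T3 (π ⁻¹' {π i0}) y :=
            (Prod.ext_iff.1 (Prod.ext_iff.1 (hxy (π i0))).2).2
          have hm : (g b, p) ∉ T3 (π ⁻¹' {π i0}) x := by
            rw [h3]
            intro hm
            obtain ⟨i, -, hi⟩ := hm b rfl hp
            exact hnear i hi
          have hm' : ∃ a, g a = g b ∧ a ∈ B (g b) p ∧ ∀ i, π i = π i0 → ¬ Near G r (x i) a := by
            by_contra hno
            push Not at hno
            apply hm
            intro a ha1 ha2
            obtain ⟨i, hi, hi2⟩ := hno a ha1 ha2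
            exact ⟨i, by simpa using hi, hi2⟩
          obtain ⟨a, ha1, ha2, ha3⟩ := hm'
          obtain ⟨i1, hi1⟩ := hcon a ha1
          have hne : π i1 ≠ π i0 := fun e => ha3 i1 e hi1
          exact hx i1 i0 hne ((hi1.trans (hBd _ p a ha2 b hp) le_rfl).trans hi0.symm (by omega))
      obtain ⟨a, hga, hfa⟩ := ha
      let ρ : Option ι → ℕ := fun o => o.elim 0 (fun i => π i + 1)
      have far : ∀ (z : ι → V) (e : V), FarP G (6 * r) π z → (∀ i, ¬ Near G r (z i) e) →
          FarP G r ρ (ext z e) := by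
        intro z e hz hze
        rintro (_ | p) (_ | q) hpq
        · simp at hpq
        · exact fun hn => hze q hn.symm
        · exact fun hn => hze p hn
        · exact fun hn => hz p q (by simpa [ρ] using hpq) (hn.mono (by omega))
      refine (hc2 ρ (ext x a) (ext y b) (far x a hx hfa) (far y b hy hnear) ?_).1 (hall a)
      intro j
      cases j with
      | zero =>
        have : ρ ⁻¹' {0} = {none} := by
          ext o
          cases o <;> simp [ρ]
        rw [this, hg, hg, hga]
      | succ j =>
        have : ρ ⁻¹' {j + 1} = some '' (π ⁻¹' {j}) := by
          ext o
          cases o <;> simp [ρ]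
        rw [this]
        exact h1 j a

lemma term_var {α : Type} (t : Language.graph.Term α) : ∃ i, t = Language.Term.var i := by
  cases t with
  | var i => exact ⟨i, rfl⟩
  | func f _ => exact isEmptyElim f

lemma good_formula {n : ℕ} (φ : Language.graph.BoundedFormula (Fin 2) n) :
    Good (Fin 2 ⊕ Fin n) (fun V G x =>
      letI := G.structure
      φ.Realize (x ∘ Sum.inl) (x ∘ Sum.inr)) := by
  induction φ with
  | falsum => exact good_false
  | @equal n t₁ t₂ =>
    obtain ⟨i, rfl⟩ := term_var t₁
    obtain ⟨j, rfl⟩ := term_var t₂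
    convert good_atom (fun V G u v => u = v) (fun V G u v h => h ▸ Near.refl G 1 u) i j using 4
      with V G x
    change _ = _ ↔ _
    simp
  | @rel n l R ts =>
    cases R
    obtain ⟨i, hi⟩ := term_var (ts 0)
    obtain ⟨j, hj⟩ := term_var (ts 1)
    convert good_atom (fun V G u v => G.Adj u v) (fun V G u v h => ?_) i j using 4
      with V G x
    · change G.Adj _ _ ↔ _
      simp [hi, hj]
    · have := SimpleGraph.edist_le (SimpleGraph.Walk.cons h SimpleGraph.Walk.nil)
      simpa [Near] using this
  | imp f g hf hg => exact good_imp hf hg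
  | @all n f hf =>
    let e : Fin 2 ⊕ Fin (n + 1) → Option (Fin 2 ⊕ Fin n) :=
      Sum.elim (fun i => some (Sum.inl i)) (Fin.snoc (fun i => some (Sum.inr i)) none)
    convert good_all (good_comp e hf) using 4 with V G x
    letI := G.structure
    change (∀ a, _) ↔ _
    refine forall_congr' fun a => ?_
    have e1 : (ext x a ∘ e) ∘ Sum.inl = x ∘ Sum.inl := rfl
    have e2 : (ext x a ∘ e) ∘ Sum.inr = Fin.snoc (x ∘ Sum.inr) a := by
      funext i
      refine Fin.lastCases ?_ ?_ i
      · simp [e, ext]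
      · intro i
        simp [e, ext]
    simp only [e1, e2]

lemma farP_pair {V : Type} {G : SimpleGraph V} {r : ℕ} {u v : V} (h : ¬ Near G r u v) :
    FarP G r (fun i : Fin 2 => i.val) ![u, v] := by
  intro i j hij
  match i, j with
  | 0, 0 => exact absurd rfl hij
  | 1, 1 => exact absurd rfl hij
  | 0, 1 => exact h
  | 1, 0 => exact fun h' => h h'.symm

/-- Locality for binary formulas. -/
lemma locality (φ : Language.graph.Formula (Fin 2)) :
    ∃ (r : ℕ) (K : Type), Finite K ∧ ∀ (V : Type) (G : SimpleGraph V), ∃ c : V → K,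
      letI := G.structure
      ∀ u v u' v', ¬ Near G r u v → ¬ Near G r u' v' → c u = c u' → c v = c v' →
        (φ.Realize ![u, v] ↔ φ.Realize ![u', v']) := by
  obtain ⟨r, K, hK, h⟩ := good_comp (ι' := Fin 2) (Sum.elim id Fin.elim0) (good_formula φ)
  refine ⟨r, K × K, inferInstance, fun V G => ?_⟩
  obtain ⟨c, hc, hc2⟩ := h V G
  refine ⟨fun u => (c {0} (fun _ => u), c {1} (fun _ => u)), ?_⟩
  intro u v u' v' huv huv' hu hv
  have key := hc2 (fun i => i.val) ![u, v] ![u', v'] ?_ ?_ ?_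
  · letI := G.structure
    have aux : ∀ a b : V, (φ.Realize ![a, b] ↔ Language.BoundedFormula.Realize φ
        (((![a, b]) ∘ (Sum.elim id Fin.elim0 : Fin 2 ⊕ Fin 0 → Fin 2)) ∘ Sum.inl)
        (((![a, b]) ∘ (Sum.elim id Fin.elim0 : Fin 2 ⊕ Fin 0 → Fin 2)) ∘ Sum.inr)) := by
      intro a b
      unfold Language.Formula.Realize
      have : (default : Fin 0 → V) = (((![a, b]) ∘
        (Sum.elim id Fin.elim0 : Fin 2 ⊕ Fin 0 → Fin 2)) ∘ Sum.inr) := Subsingleton.elim _ _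
      rw [this]
      rfl
    rw [aux, aux]
    exact key
  · exact farP_pair huv
  · exact farP_pair huv'
  · intro j
    simp only [Prod.mk.injEq] at hu hv
    match j with
    | 0 =>
      have : (fun i : Fin 2 => i.val) ⁻¹' {0} = {0} := by ext i; fin_cases i <;> simp
      rw [this, hc {0} ![u, v] (fun _ => u) (by simp), hc {0} ![u', v'] (fun _ => u') (by simp)]
      exact hu.1
    | 1 =>
      have : (fun i : Fin 2 => i.val) ⁻¹' {1} = {1} := by ext i; fin_cases i <;> simp
      rw [this, hc {1} ![u, v] (fun _ => v) (by simp), hc {1} ![u', v'] (fun _ => v') (by simp)]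
      exact hv.2
    | j + 2 =>
      apply hc
      intro i hi
      simp only [Set.mem_preimage, Set.mem_singleton_iff] at hi
      omega

section VC
open Finset

/-- no shattered `D`-tuple -/
def NoSh {Y V : Type} (R : Y → V → Prop) (D : ℕ) : Prop :=
  ¬ ∃ (a : Fin D → V) (b : Finset (Fin D) → Y), ∀ i I, R (b I) (a i) ↔ i ∈ I

open Classical in
/-- Sauer–Shelah for traces on a finite tuple. -/
lemma trace_card {Y V α : Type} [Fintype Y] [Fintype α] [DecidableEq α] (R : Y → V → Prop) (D : ℕ)
    (hR : NoSh R (D + 1)) (z : α → V) :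
    #((univ : Finset Y).image fun y => (univ : Finset α).filter fun i => R y (z i))
      ≤ (D + 1) * (Fintype.card α + 1) ^ D := by
  set 𝒜 := (univ : Finset Y).image fun y => (univ : Finset α).filter fun i => R y (z i) with h𝒜
  have hvc : 𝒜.vcDim ≤ D := by
    unfold Finset.vcDim
    apply Finset.sup_le
    intro t ht
    rw [mem_shatterer] at ht
    by_contra hcon
    push Not at hcon
    obtain ⟨t', ht', hcard⟩ := Finset.exists_subset_card_eq (Nat.succ_le_of_lt hcon)
    have hsh := ht.mono_right ht'
    let e : Fin (D + 1) ≃ t' := (Fintype.equivFinOfCardEq (by simpa using hcard)).symm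
    have hb : ∀ I : Finset (Fin (D + 1)), ∃ y : Y, ∀ i, R y (z (e i)) ↔ i ∈ I := by
      intro I
      obtain ⟨u, hu, hI⟩ := hsh (t := I.image fun i => (e i : α)) (by
        intro x hx
        obtain ⟨i, -, rfl⟩ := mem_image.1 hx
        exact (e i).2)
      obtain ⟨y, -, rfl⟩ := mem_image.1 hu
      refine ⟨y, fun i => ?_⟩
      have : (e i : α) ∈ (t' ∩ (univ : Finset α).filter fun i => R y (z i)) ↔
          (e i : α) ∈ I.image fun i => (e i : α) := by rw [hI]
      simp only [mem_inter, mem_filter, mem_univ, true_and, mem_image] at this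
      rw [and_iff_right (e i).2] at this
      rw [this]
      constructor
      · rintro ⟨j, hj, hji⟩
        have : j = i := e.injective (Subtype.ext hji)
        exact this ▸ hj
      · exact fun hi => ⟨i, hi, rfl⟩
    choose b hb using hb
    exact hR ⟨fun i => z (e i), b, fun i I => hb I i⟩
  calc #𝒜 ≤ #𝒜.shatterer := card_le_card_shatterer _
    _ ≤ ∑ k ∈ Iic 𝒜.vcDim, (Fintype.card α).choose k := card_shatterer_le_sum_vcDim
    _ ≤ ∑ k ∈ Iic D, (Fintype.card α).choose k :=
        sum_le_sum_of_subset (Iic_subset_Iic.2 hvc)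
    _ ≤ ∑ k ∈ Iic D, (Fintype.card α + 1) ^ D := by
        apply sum_le_sum
        intro k hk
        calc (Fintype.card α).choose k ≤ (Fintype.card α) ^ k := Nat.choose_le_pow _ _
          _ ≤ (Fintype.card α + 1) ^ k := Nat.pow_le_pow_left (by omega) _
          _ ≤ (Fintype.card α + 1) ^ D := Nat.pow_le_pow_right (by omega) (mem_Iic.1 hk)
    _ = (D + 1) * (Fintype.card α + 1) ^ D := by simp

open Classical in
/-- Double sampling argument over an abstract weighted finite space. -/
lemma double_sampling {Y Ω : Type} [Fintype Ω] (k : ℕ) (hk : 0 < k) (ω : Ω → ℝ)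
    (h0 : ∀ x, 0 ≤ ω x) (h1 : ∑ x, ω x = 1) (H : Y → Ω → Prop)
    (hH : ∀ y, 1 - 1 / (2 * k : ℝ) ≤ ∑ x, if H y x then ω x else 0)
    (hcard : ∀ x z : Fin k → Ω, 2 * #((univ : Finset (Fin k → Bool)).filter fun σ =>
      ∃ y, ∀ i, ¬ H y (if σ i then z i else x i) ∧ H y (if σ i then x i else z i)) < 2 ^ k) :
    ∃ x : Fin k → Ω, ∀ y, ∃ i, H y (x i) := by
  by_contra hcon
  push Not at hcon
  choose f hf using hcon
  let W : (Fin k → Ω) → ℝ := fun x => ∏ i, ω (x i)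
  have hW0 : ∀ x, 0 ≤ W x := fun x => prod_nonneg fun i _ => h0 _
  have hW1 : ∑ x, W x = 1 := by
    simp only [W]
    rw [← Fintype.sum_pow, h1, one_pow]
  have hhit : ∀ y, 1 / 2 ≤ ∑ z : Fin k → Ω, if ∀ i, H y (z i) then W z else 0 := by
    intro y
    have e : ∀ z : Fin k → Ω, (if ∀ i, H y (z i) then W z else 0)
        = ∏ i, (if H y (z i) then ω (z i) else 0) := by
      intro z
      split_ifs with h
      · exact prod_congr rfl fun i _ => by simp [h i]
      · push Not at h
        obtain ⟨i, hi⟩ := h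
        rw [prod_eq_zero (mem_univ i)]
        simp [hi]
    rw [sum_congr rfl fun z _ => e z,
      ← Fintype.sum_pow (fun x => if H y x then ω x else 0) k]
    have hkr : (1 : ℝ) ≤ k := by exact_mod_cast hk
    have hle : 1 / (2 * k : ℝ) ≤ 1 := by
      rw [div_le_one (by positivity)]; linarith
    calc (1 : ℝ) / 2 = 1 + k * (-(1 / (2 * k : ℝ))) := by field_simp; norm_num
      _ ≤ (1 + -(1 / (2 * k : ℝ))) ^ k := one_add_mul_le_pow (by linarith) k
      _ ≤ _ := pow_le_pow_left₀ (by linarith) (by have := hH y; linarith) k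
  let Bad : (Fin k → Ω) × (Fin k → Ω) → Prop := fun q => ∃ y, ∀ i, ¬ H y (q.1 i) ∧ H y (q.2 i)
  have hlow : 1 / 2 ≤ ∑ q : (Fin k → Ω) × (Fin k → Ω), if Bad q then W q.1 * W q.2 else 0 := by
    rw [Fintype.sum_prod_type]
    calc (1 : ℝ) / 2 = ∑ x : Fin k → Ω, W x * (1 / 2) := by rw [← sum_mul, hW1, one_mul]
      _ ≤ ∑ x : Fin k → Ω, W x * ∑ z : Fin k → Ω, (if ∀ i, H (f x) (z i) then W z else 0) :=
          sum_le_sum fun x _ => mul_le_mul_of_nonneg_left (hhit _) (hW0 x)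
      _ ≤ _ := by
          refine sum_le_sum fun x _ => ?_
          rw [mul_sum]
          refine sum_le_sum fun z _ => ?_
          by_cases h : ∀ i, H (f x) (z i)
          · have : Bad (x, z) := ⟨f x, fun i => ⟨hf x i, h i⟩⟩
            simp [h, this]
          · rw [if_neg h, mul_zero]
            split_ifs
            · exact mul_nonneg (hW0 _) (hW0 _)
            · exact le_rfl
  let sw : (Fin k → Bool) → (Fin k → Ω) × (Fin k → Ω) → (Fin k → Ω) × (Fin k → Ω) :=
    fun σ q => (fun i => if σ i then q.2 i else q.1 i, fun i => if σ i then q.1 i else q.2 i)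
  have hinv : ∀ σ, Function.Involutive (sw σ) := by
    intro σ q
    simp only [sw]
    ext i
    · dsimp; split_ifs <;> rfl
    · dsimp; split_ifs <;> rfl
  have hWW : ∀ σ q, W (sw σ q).1 * W (sw σ q).2 = W q.1 * W q.2 := by
    intro σ q
    simp only [W, sw]
    rw [← prod_mul_distrib, ← prod_mul_distrib]
    refine prod_congr rfl fun i _ => ?_
    split_ifs
    · exact mul_comm _ _
    · rfl
  have hswap : ∀ σ, ∑ q : (Fin k → Ω) × (Fin k → Ω), (if Bad q then W q.1 * W q.2 else 0)
      = ∑ q : (Fin k → Ω) × (Fin k → Ω), if Bad (sw σ q) then W q.1 * W q.2 else 0 := by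
    intro σ
    rw [← Equiv.sum_comp (hinv σ).toPerm]
    refine sum_congr rfl fun q _ => ?_
    simp only [Function.Involutive.coe_toPerm, hWW]
  have htot : (2 : ℝ) ^ k * ∑ q : (Fin k → Ω) × (Fin k → Ω), (if Bad q then W q.1 * W q.2 else 0)
      = ∑ q : (Fin k → Ω) × (Fin k → Ω), (W q.1 * W q.2) *
        (#((univ : Finset (Fin k → Bool)).filter fun σ => Bad (sw σ q)) : ℝ) := by
    calc _ = ∑ σ : Fin k → Bool, ∑ q : (Fin k → Ω) × (Fin k → Ω),
          (if Bad q then W q.1 * W q.2 else 0) := by simp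
      _ = ∑ σ : Fin k → Bool, ∑ q : (Fin k → Ω) × (Fin k → Ω),
          (if Bad (sw σ q) then W q.1 * W q.2 else 0) := sum_congr rfl fun σ _ => hswap σ
      _ = _ := by
          rw [sum_comm]
          refine sum_congr rfl fun q _ => ?_
          rw [← sum_filter, sum_const, nsmul_eq_mul, mul_comm]
  have hsum1 : ∑ q : (Fin k → Ω) × (Fin k → Ω), W q.1 * W q.2 = 1 := by
    rw [Fintype.sum_prod_type]
    simp only [← mul_sum, hW1, mul_one]
  have hup : ∑ q : (Fin k → Ω) × (Fin k → Ω), (W q.1 * W q.2) *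
        (#((univ : Finset (Fin k → Bool)).filter fun σ => Bad (sw σ q)) : ℝ)
      ≤ (2 ^ k - 1) / 2 := by
    calc _ ≤ ∑ q : (Fin k → Ω) × (Fin k → Ω), (W q.1 * W q.2) * ((2 ^ k - 1) / 2 : ℝ) := by
          refine sum_le_sum fun q _ => mul_le_mul_of_nonneg_left ?_
            (mul_nonneg (hW0 _) (hW0 _))
          have h := hcard q.1 q.2
          have h' : 2 * #((univ : Finset (Fin k → Bool)).filter fun σ => Bad (sw σ q)) + 1
            ≤ 2 ^ k := h
          have h'' : (2 : ℝ) * #((univ : Finset (Fin k → Bool)).filter fun σ => Bad (sw σ q)) + 1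
            ≤ 2 ^ k := by exact_mod_cast h'
          linarith
      _ = _ := by rw [← sum_mul, hsum1, one_mul]
  have hp : (0 : ℝ) < 2 ^ k := by positivity
  have := mul_le_mul_of_nonneg_left hlow hp.le
  rw [htot] at this
  linarith

lemma exists_k (D : ℕ) : ∃ k : ℕ, 0 < k ∧
    2 * ((D + 1) * (k * 2 * (2 * k) + 1) ^ D) < 2 ^ k := by
  have h := (tendsto_pow_const_div_const_pow_of_one_lt (2 * D) (r := 2) (by norm_num)).eventually
    (gt_mem_nhds (show (0 : ℝ) < 1 / (2 * (D + 1) * 5 ^ D) by positivity))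
  obtain ⟨k, hk, hk0⟩ := (h.and (Filter.eventually_gt_atTop 0)).exists
  refine ⟨k, hk0, ?_⟩
  have hk' : 2 * (D + 1) * 5 ^ D * (k : ℝ) ^ (2 * D) < 2 ^ k := by
    rw [div_lt_div_iff₀ (by positivity) (by positivity)] at hk
    linarith
  have hk'' : 2 * (D + 1) * 5 ^ D * k ^ (2 * D) < 2 ^ k := by exact_mod_cast hk'
  refine lt_of_le_of_lt ?_ hk''
  have : (k * 2 * (2 * k) + 1) ^ D ≤ (5 * k ^ 2) ^ D := by
    apply Nat.pow_le_pow_left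
    nlinarith
  calc 2 * ((D + 1) * (k * 2 * (2 * k) + 1) ^ D) ≤ 2 * ((D + 1) * (5 * k ^ 2) ^ D) := by gcongr
    _ = _ := by rw [mul_pow, ← pow_mul]; ring

open Classical in
/-- The ε-net theorem for ε = 1/2. -/
lemma net (D : ℕ) : ∃ s : ℕ, ∀ (V Y : Type) [Fintype V] [Fintype Y] (R : Y → V → Prop),
    NoSh R (D + 1) → ∀ w : V → ℝ, (∀ v, 0 ≤ w v) → ∑ v, w v = 1 →
    (∀ y, 1 / 2 ≤ ∑ v, if R y v then w v else 0) →
    ∃ T : Finset V, #T ≤ s ∧ ∀ y, ∃ v ∈ T, R y v := by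
  obtain ⟨k, hk0, hk⟩ := exists_k D
  refine ⟨k * (2 * k), fun V Y _ _ R hR w hw0 hw1 hw => ?_⟩
  let Ω := Fin (2 * k) → V
  let ω : Ω → ℝ := fun x => ∏ i, w (x i)
  let H : Y → Ω → Prop := fun y x => ∃ l, R y (x l)
  have hA1 : ∀ y, 1 - 1 / (2 * k : ℝ) ≤ ∑ x, if H y x then ω x else 0 := by
    intro y
    have hmiss : ∑ v, (if R y v then 0 else w v) ≤ 1 / 2 := by
      have : ∑ v, (if R y v then 0 else w v) + ∑ v, (if R y v then w v else 0) = 1 := by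
        rw [← sum_add_distrib, ← hw1]
        refine sum_congr rfl fun v _ => ?_
        split_ifs <;> simp
      linarith [hw y]
    have hmiss0 : 0 ≤ ∑ v, (if R y v then 0 else w v) :=
      sum_nonneg fun v _ => by split_ifs; exacts [le_rfl, hw0 v]
    have e : ∑ x : Ω, (if H y x then 0 else ω x) = (∑ v, (if R y v then 0 else w v)) ^ (2 * k) := by
      rw [Fintype.sum_pow]
      refine sum_congr rfl fun x _ => ?_
      split_ifs with h
      · obtain ⟨l, hl⟩ := h
        symm
        exact prod_eq_zero (mem_univ l) (by simp [hl])
      · exact prod_congr rfl fun i _ => by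
          have : ¬ R y (x i) := fun h' => h ⟨i, h'⟩
          simp [this]
    have htot : ∑ x : Ω, (if H y x then 0 else ω x) + ∑ x : Ω, (if H y x then ω x else 0) = 1 := by
      rw [← sum_add_distrib]
      calc _ = ∑ x : Ω, ω x := sum_congr rfl fun v _ => by split_ifs <;> simp
        _ = 1 := by simp only [ω, Ω]; rw [← Fintype.sum_pow, hw1, one_pow]
    have hb : (∑ v, (if R y v then 0 else w v)) ^ (2 * k) ≤ 1 / (2 * k : ℝ) := by
      calc _ ≤ (1 / 2 : ℝ) ^ (2 * k) := pow_le_pow_left₀ hmiss0 hmiss _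
        _ = 1 / 2 ^ (2 * k) := by rw [one_div_pow]
        _ ≤ 1 / (2 * k : ℝ) := by
          apply one_div_le_one_div_of_le
          · have : (0 : ℝ) < k := by exact_mod_cast hk0
            positivity
          · have := (Nat.lt_two_pow_self (n := 2 * k)).le
            exact_mod_cast this
    linarith
  have hA2 : ∀ x z : Fin k → Ω, 2 * #((univ : Finset (Fin k → Bool)).filter fun σ =>
      ∃ y, ∀ i, ¬ H y (if σ i then z i else x i) ∧ H y (if σ i then x i else z i)) < 2 ^ k := by
    intro x z
    let q : Fin k × Bool × Fin (2 * k) → V := fun p => if p.2.1 then z p.1 p.2.2 else x p.1 p.2.2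
    refine lt_of_le_of_lt (Nat.mul_le_mul_left 2 ?_) hk
    have ht := trace_card R D hR q
    have hc : Fintype.card (Fin k × Bool × Fin (2 * k)) = k * 2 * (2 * k) := by
      simp; ring
    rw [hc] at ht
    refine le_trans ?_ ht
    let dec : Finset (Fin k × Bool × Fin (2 * k)) → (Fin k → Bool) :=
      fun t i => decide (¬ ∃ l, (i, true, l) ∈ t)
    refine le_trans (card_le_card ?_) (card_image_le (f := dec))
    intro σ hσ
    obtain ⟨y, hy⟩ := (mem_filter.1 hσ).2
    refine mem_image.2 ⟨_, mem_image.2 ⟨y, mem_univ _, rfl⟩, ?_⟩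
    funext i
    have hyi := hy i
    simp only [dec, q, mem_filter, mem_univ, true_and]
    cases hs : σ i
    · simp only [hs] at hyi
      simp only [decide_eq_false_iff_not, not_not]
      obtain ⟨l, hl⟩ := hyi.2
      exact ⟨l, by simpa using hl⟩
    · simp only [hs] at hyi
      simp only [decide_eq_true_eq]
      rintro ⟨l, hl⟩
      exact hyi.1 ⟨l, by simpa using hl⟩
  obtain ⟨x, hx⟩ := double_sampling k hk0 ω (fun x => prod_nonneg fun i _ => hw0 _)
    (by simp only [ω]; rw [← Fintype.sum_pow, hw1, one_pow]) H
    (fun y => by convert hA1 y) (fun x z => by convert hA2 x z)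
  refine ⟨(univ : Finset (Fin k × Fin (2 * k))).image fun p => x p.1 p.2, ?_, ?_⟩
  · refine card_image_le.trans ?_
    simp
  · intro y
    obtain ⟨i, l, hl⟩ := hx y
    exact ⟨x i l, mem_image.2 ⟨(i, l), mem_univ _, rfl⟩, hl⟩

open Classical in
/-- Finite minimax for 0/1 matrices at value 1/2. -/
lemma minimax {A B : Type} [Fintype A] [Fintype B] [Nonempty A] [Nonempty B]
    (E : A → B → Prop) :
    (∃ w : B → ℝ, (∀ b, 0 ≤ w b) ∧ ∑ b, w b = 1 ∧
      ∀ a, 1 / 2 ≤ ∑ b, if ¬ E a b then w b else 0) ∨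
    (∃ w : A → ℝ, (∀ a, 0 ≤ w a) ∧ ∑ a, w a = 1 ∧
      ∀ b, 1 / 2 ≤ ∑ a, if E a b then w a else 0) := by
  let row : A → B → ℝ := fun a b => if E a b then 1 else 0
  let D : Set (B → ℝ) := {x | ∀ b, 1 / 2 ≤ x b}
  have hDc : Convex ℝ D := by
    intro x hx y hy s t hs ht hst b
    have h1 := mul_le_mul_of_nonneg_left (hx b) hs
    have h2 := mul_le_mul_of_nonneg_left (hy b) ht
    simp only [Pi.add_apply, Pi.smul_apply, smul_eq_mul]
    nlinarith
  have hDcl : IsClosed D := by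
    have : D = ⋂ b, {x | 1 / 2 ≤ x b} := by ext; simp [D]
    rw [this]
    exact isClosed_iInter fun b => isClosed_le continuous_const (continuous_apply b)
  by_cases hdis : Disjoint (convexHull ℝ (Set.range row)) D
  · left
    obtain ⟨f, s, t, h1, hst, h2⟩ := geometric_hahn_banach_compact_closed
      (convex_convexHull ℝ (Set.range row)) ((Set.finite_range row).isCompact_convexHull ℝ)
      hDc hDcl hdis
    let c : B → ℝ := fun b => f (Pi.single b 1)
    have hf : ∀ x : B → ℝ, f x = ∑ b, x b * c b := by
      intro x
      conv_lhs => rw [← Finset.univ_sum_single x]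
      rw [map_sum]
      refine sum_congr rfl fun b _ => ?_
      have : (Pi.single b (x b) : B → ℝ) = x b • Pi.single b 1 := by
        rw [← Pi.single_smul]; simp
      rw [this, map_smul, smul_eq_mul]
    have hhalf : t < ∑ b, (1 / 2 : ℝ) * c b := by
      have := h2 (fun _ => 1 / 2) (fun b => le_rfl)
      rwa [hf] at this
    have hc0 : ∀ b, 0 ≤ c b := by
      intro b
      by_contra hneg
      push Not at hneg
      set S := ∑ b, (1 / 2 : ℝ) * c b
      let M : ℝ := (S - t) / (- c b)
      have hM : 0 ≤ M := div_nonneg (by linarith) (by linarith)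
      have := h2 (fun b' => 1 / 2 + (Pi.single b M : B → ℝ) b') (fun b' => by
        have : 0 ≤ (Pi.single b M : B → ℝ) b' := by
          by_cases h : b' = b
          · subst h; simpa using hM
          · simp [h]
        linarith)
      rw [hf] at this
      simp only [add_mul, sum_add_distrib] at this
      have e : ∑ b', (Pi.single b M : B → ℝ) b' * c b' = M * c b := by
        rw [Finset.sum_eq_single b]
        · simp
        · intro b' _ h; simp [h]
        · simp
      rw [e] at this
      have e2 : M * c b = - (S - t) := by
        simp only [M]; field_simp [hneg.ne]; 
      rw [e2] at this
      linarith
    set S := ∑ b, c b with hS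
    have hrow : ∀ a, ∑ b, row a b * c b < S / 2 := by
      intro a
      have := h1 (row a) (subset_convexHull ℝ _ ⟨a, rfl⟩)
      rw [hf] at this
      rw [← mul_sum] at hhalf
      linarith
    have hSpos : 0 < S := by
      obtain ⟨a⟩ := ‹Nonempty A›
      have : 0 ≤ ∑ b, row a b * c b := sum_nonneg fun b _ => mul_nonneg
        (by simp only [row]; split_ifs <;> norm_num) (hc0 b)
      linarith [hrow a]
    refine ⟨fun b => c b / S, fun b => div_nonneg (hc0 b) hSpos.le, ?_, ?_⟩
    · rw [← sum_div, ← hS, div_self hSpos.ne']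
    · intro a
      have e : ∑ b, (if ¬ E a b then c b / S else 0) = (S - ∑ b, row a b * c b) / S := by
        rw [hS, ← sum_sub_distrib, ← hS, sum_div]
        refine sum_congr rfl fun b _ => ?_
        by_cases h : E a b <;> simp [row, h]
      rw [e, div_le_div_iff₀ (by norm_num) hSpos]
      linarith [hrow a]
  · right
    rw [Set.not_disjoint_iff] at hdis
    obtain ⟨x, hx, hxD⟩ := hdis
    obtain ⟨ι, _, w, z, hw0, hw1, hz, hx⟩ := mem_convexHull_iff_exists_fintype.1 hx
    choose g hg using hz
    refine ⟨fun a => ∑ i with g i = a, w i, fun a => sum_nonneg fun i _ => hw0 i, ?_, ?_⟩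
    · exact (Finset.sum_fiberwise univ g w).trans hw1
    · intro b
      have e : ∑ a, (if E a b then ∑ i with g i = a, w i else 0) = x b := by
        rw [← hx, Finset.sum_apply, ← Finset.sum_fiberwise univ g]
        refine sum_congr rfl fun a _ => ?_
        have : ∀ i ∈ univ.filter (fun i => g i = a), (w i • z i) b = if E a b then w i else 0 := by
          intro i hi
          rw [← hg i, (mem_filter.1 hi).2]
          simp [row]
        rw [sum_congr rfl this]
        split_ifs <;> simp
      rw [e]
      exact hxD b

/-- Dichotomy for relations of bounded VC-dimension. -/
lemma dichotomy (D : ℕ) : ∃ s : ℕ, ∀ (V : Type) [Fintype V] (E : V → V → Prop),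
    (∀ u v, E u v ↔ E v u) → NoSh E (D + 1) → ∀ A B : Set V,
    (∃ T : Finset V, #T ≤ s ∧ (T : Set V) ⊆ B ∧ ∀ a ∈ A, ∃ b ∈ T, ¬ E a b) ∨
    (∃ T : Finset V, #T ≤ s ∧ (T : Set V) ⊆ A ∧ ∀ b ∈ B, ∃ a ∈ T, E a b) := by
  classical
  obtain ⟨s, hs⟩ := net D
  refine ⟨s, fun V _ E hsym hE A B => ?_⟩
  rcases A.eq_empty_or_nonempty with rfl | hA
  · exact Or.inl ⟨∅, by simp, by simp, by simp⟩
  rcases B.eq_empty_or_nonempty with rfl | hB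
  · exact Or.inr ⟨∅, by simp, by simp, by simp⟩
  have := hA.to_subtype
  have := hB.to_subtype
  rcases minimax (fun (a : A) (b : B) => E a b) with ⟨w, h0, h1, h⟩ | ⟨w, h0, h1, h⟩
  · left
    obtain ⟨T, hT, hT2⟩ := hs B A (fun a b => ¬ E a b) (by
      rintro ⟨a, b, hab⟩
      refine hE ⟨fun i => a i, fun I => b Iᶜ, fun i I => ?_⟩
      have := hab i Iᶜ
      simp only [mem_compl] at this
      tauto) w h0 h1 (fun y => by convert h y)
    refine ⟨T.map (Function.Embedding.subtype _), by simpa using hT, ?_, ?_⟩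
    · intro x hx
      simp only [coe_map, Set.mem_image] at hx
      obtain ⟨y, -, rfl⟩ := hx
      exact y.2
    · intro a ha
      obtain ⟨b, hb, hab⟩ := hT2 ⟨a, ha⟩
      exact ⟨b, mem_map_of_mem _ hb, hab⟩
  · right
    obtain ⟨T, hT, hT2⟩ := hs A B (fun b a => E a b) (by
      rintro ⟨a, b, hab⟩
      refine hE ⟨fun i => a i, fun I => b I, fun i I => ?_⟩
      rw [hsym]
      exact hab i I) w h0 h1 h
    refine ⟨T.map (Function.Embedding.subtype _), by simpa using hT, ?_, ?_⟩
    · intro x hx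
      simp only [coe_map, Set.mem_image] at hx
      obtain ⟨y, -, rfl⟩ := hx
      exact y.2
    · intro b hb
      obtain ⟨a, ha, hab⟩ := hT2 ⟨b, hb⟩
      exact ⟨a, mem_map_of_mem _ ha, hab⟩

lemma noSh_not {V : Type} {E : V → V → Prop} {D : ℕ} (h : NoSh E D) :
    NoSh (fun u v => ¬ E u v) D := by
  classical
  rintro ⟨a, b, hab⟩
  refine h ⟨a, fun I => b Iᶜ, fun i I => ?_⟩
  have := hab i Iᶜ
  simp only [mem_compl] at this
  tauto

/-- Removing the diagonal keeps the VC-dimension bounded. -/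
lemma noSh_ne {V : Type} {E : V → V → Prop} {d : ℕ} (h : NoSh E (d + 1)) :
    NoSh (fun u v => E u v ∧ u ≠ v) (d + 1 + (d + 1)) := by
  classical
  rintro ⟨a, b, hab⟩
  have key : ∀ I : Finset (Fin (d + 1)), ∃ y, ∀ i, E y (a (Fin.castAdd _ i)) ↔ i ∈ I := by
    intro I
    let I' : Finset (Fin (d + 1)) → Finset (Fin (d + 1 + (d + 1))) := fun J =>
      univ.filter fun p => Fin.addCases (fun i => i ∈ I) (fun j => j ∈ J) p
    have hl : ∀ J i, Fin.castAdd (d + 1) i ∈ I' J ↔ i ∈ I := by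
      intro J i; simp [I']
    have hr : ∀ J j, Fin.natAdd (d + 1) j ∈ I' J ↔ j ∈ J := by
      intro J i
      simp only [I', mem_filter, mem_univ, true_and, Fin.addCases_right]
    have hinj : Function.Injective fun J => b (I' J) := by
      intro J J' hJ
      ext j
      have h1 := hab (Fin.natAdd (d + 1) j) (I' J)
      have h2 := hab (Fin.natAdd (d + 1) j) (I' J')
      rw [hr] at h1 h2
      rw [← h1, ← h2]
      simp only at hJ
      rw [hJ]
    obtain ⟨J, hJ⟩ : ∃ J, ∀ i, b (I' J) ≠ a (Fin.castAdd _ i) := by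
      by_contra hcon
      push Not at hcon
      choose g hg using hcon
      have hgi : Function.Injective g := by
        intro J J' hJ
        apply hinj
        simp only
        rw [hg J, hg J', hJ]
      have := Fintype.card_le_of_injective g hgi
      simp only [Fintype.card_finset, Fintype.card_fin] at this
      exact absurd this (not_le.2 Nat.lt_two_pow_self)
    refine ⟨b (I' J), fun i => ?_⟩
    rw [← hl J i, ← hab]
    exact ⟨fun h => ⟨h, hJ i⟩, fun h => h.1⟩
  choose y hy using key
  exact h ⟨fun i => a (Fin.castAdd _ i), y, fun i I => hy I i⟩

end VC

section Core

lemma union_fin {V J : Type} [Fintype J] (U : Set V) (P : J → Finset V → Prop)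
    (mono : ∀ j S T, S ⊆ T → P j S → P j T) (n : ℕ)
    (h : ∀ j, ∃ S : Finset V, (S : Set V) ⊆ U ∧ S.card ≤ n ∧ P j S) :
    ∃ S : Finset V, (S : Set V) ⊆ U ∧ S.card ≤ Fintype.card J * n ∧ ∀ j, P j S := by
  classical
  choose S hS hn hP using h
  refine ⟨Finset.univ.biUnion S, ?_, ?_, ?_⟩
  · intro x hx
    simp only [Finset.coe_biUnion, Set.mem_iUnion] at hx
    obtain ⟨j, -, hj⟩ := hx
    exact hS j hj
  · exact Finset.card_biUnion_le_card_mul _ _ _ (fun j _ => hn j)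
  · intro j
    exact mono j _ _ (Finset.subset_biUnion_of_mem S (Finset.mem_univ j)) (hP j)

/-- The dichotomy witnessed inside `S`. -/
def Dich {V : Type} (S : Finset V) (E : V → V → Prop) (A B : Set V) : Prop :=
  (∀ a ∈ A, ∃ b ∈ S, b ∈ B ∧ ¬ E a b) ∨ (∀ b ∈ B, ∃ a ∈ S, a ∈ A ∧ E a b)

lemma Dich.mono {V : Type} {S T : Finset V} {E : V → V → Prop} {A B : Set V} (h : Dich S E A B)
    (hST : S ⊆ T) : Dich T E A B := by
  rcases h with h | h
  · left
    intro a ha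
    obtain ⟨b, hb, h⟩ := h a ha
    exact ⟨b, hST hb, h⟩
  · right
    intro a ha
    obtain ⟨b, hb, h⟩ := h a ha
    exact ⟨b, hST hb, h⟩

/-- Far pairs are determined by colours. -/
def Loc {V K : Type} (G : SimpleGraph V) (r : ℕ) (c : V → K) (E : V → V → Prop) : Prop :=
  ∀ u v u' v', ¬ Near G r u v → ¬ Near G r u' v' → c u = c u' → c v = c v' → (E u v ↔ E u' v')

lemma narrow_case {V K : Type} {G : SimpleGraph V} {r : ℕ} {c : V → K} {E : V → V → Prop}
    (hloc : Loc G r c E) (hsym : ∀ u v, E u v ↔ E v u) {S : Finset V} {u v u' v' : V}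
    (huv : ¬ Near G (20 * r) u v) (huv' : ¬ Near G (20 * r) u' v')
    (hu : ∀ w ∈ S, (E u w ↔ E u' w)) (hv : ∀ w ∈ S, (E v w ↔ E v' w))
    {Q A : Set V} (hvQ : v ∈ Q) (hQc : ∀ a ∈ Q, c a = c v)
    (hQd : ∀ a ∈ Q, ∀ b ∈ Q, Near G (4 * r) a b) (hu'A : u' ∈ A)
    (hAc : ∀ a ∈ A, c a = c u' ∧ ∃ b ∈ Q, Near G (5 * r) a b) (hnear : Near G (5 * r) u' v)
    (hD : Dich S E A Q) (h : E u v) : E u' v' := by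
  rcases hD with hD | hD
  · obtain ⟨b, hbS, hbQ, hb⟩ := hD u' hu'A
    exfalso
    apply hb
    rw [← hu b hbS]
    refine (hloc u v u b (fun h => huv (h.mono (by omega))) (fun h => ?_) rfl (hQc b hbQ).symm).1 h
    exact huv (h.trans (hQd b hbQ v hvQ) (by omega))
  · obtain ⟨a, haS, haA, ha⟩ := hD v hvQ
    rw [hsym, hv a haS, hsym] at ha
    obtain ⟨hac, b, hbQ, hb⟩ := hAc a haA
    refine (hloc a v' u' v' (fun h => ?_) (fun h => huv' (h.mono (by omega))) hac rfl).1 ha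
    refine huv' (((hnear.trans (hQd v hvQ b hbQ) le_rfl).trans hb.symm le_rfl).trans h (by omega))

lemma core (D r : ℕ) (K : Type) [Finite K] : ∃ s : ℕ, ∀ (V : Type) [Fintype V] (G : SimpleGraph V)
    (U : Set V) (E : V → V → Prop) (c : V → K), (∀ u v, E u v ↔ E v u) → NoSh E (D + 1) →
    Loc G r c E →
    ∃ S : Finset V, (S : Set V) ⊆ U ∧ S.card ≤ s ∧ ∀ u ∈ U, ∀ v ∈ U, ∀ u' ∈ U, ∀ v' ∈ U,
      ¬ Near G (20 * r) u v → ¬ Near G (20 * r) u' v' →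
      (∀ w ∈ S, (E u w ↔ E u' w)) → (∀ w ∈ S, (E v w ↔ E v' w)) → E u v → E u' v' := by
  classical
  have := Fintype.ofFinite K
  obtain ⟨s0, hs0⟩ := dichotomy D
  let n := 3 + Fintype.card (Fin 3 × K) * (1 + s0 + s0)
  refine ⟨Fintype.card K * n, fun V _ G U E c hsym hE hloc => ?_⟩
  let Q : K → Set V → Set V := fun γ B => {a | a ∈ U ∧ c a = γ ∧ a ∈ B}
  let A : Set V → K → Set V := fun Q γ' => {a | a ∈ U ∧ c a = γ' ∧ ∃ b ∈ Q, Near G (5 * r) a b}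
  let P2 : Set V → K → Finset V → Prop := fun Q γ' S =>
    (Q.Nonempty → ∃ w ∈ S, w ∈ Q) ∧ Dich S E (A Q γ') Q ∧ Dich S (fun u v => ¬ E u v) (A Q γ') Q
  have P2mono : ∀ Q γ' S T, S ⊆ T → P2 Q γ' S → P2 Q γ' T := by
    rintro Q γ' S T hST ⟨h1, h2, h3⟩
    refine ⟨fun h => ?_, h2.mono hST, h3.mono hST⟩
    obtain ⟨w, hw, hw'⟩ := h1 h
    exact ⟨w, hST hw, hw'⟩
  let P : K → Finset V → Prop := fun γ S =>
    (∀ u u', ∃ w ∈ S, c w = γ ∧ ¬ Near G r u w ∧ ¬ Near G r u' w) ∨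
    ∃ B : Fin 3 → Set V, (∀ p, ∀ a ∈ B p, ∀ b ∈ B p, Near G (4 * r) a b) ∧
      (∀ a ∈ U, c a = γ → ∃ p, a ∈ B p) ∧ ∀ q : Fin 3 × K, P2 (Q γ (B q.1)) q.2 S
  have Pmono : ∀ γ S T, S ⊆ T → P γ S → P γ T := by
    rintro γ S T hST (h | ⟨B, h1, h2, h3⟩)
    · left
      intro u u'
      obtain ⟨w, hw, h⟩ := h u u'
      exact ⟨w, hST hw, h⟩
    · exact Or.inr ⟨B, h1, h2, fun q => P2mono _ _ _ _ hST (h3 q)⟩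
  have dich : ∀ (E : V → V → Prop), (∀ u v, E u v ↔ E v u) → NoSh E (D + 1) → ∀ A B : Set V,
      A ⊆ U → B ⊆ U → ∃ S : Finset V, (S : Set V) ⊆ U ∧ S.card ≤ s0 ∧ Dich S E A B := by
    intro E hsym hE A B hA hB
    rcases hs0 V E hsym hE A B with ⟨T, h1, h2, h3⟩ | ⟨T, h1, h2, h3⟩
    · refine ⟨T, h2.trans hB, h1, Or.inl fun a ha => ?_⟩
      obtain ⟨b, hb, h⟩ := h3 a ha
      exact ⟨b, hb, h2 hb, h⟩
    · refine ⟨T, h2.trans hA, h1, Or.inr fun a ha => ?_⟩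
      obtain ⟨b, hb, h⟩ := h3 a ha
      exact ⟨b, hb, h2 hb, h⟩
  have hP2 : ∀ Q γ', Q ⊆ U → ∃ S : Finset V, (S : Set V) ⊆ U ∧ S.card ≤ 1 + s0 + s0 ∧ P2 Q γ' S := by
    intro Q γ' hQ
    obtain ⟨S1, h1, h1', h1''⟩ := dich E hsym hE (A Q γ') Q (fun a ha => ha.1) hQ
    obtain ⟨S2, h2, h2', h2''⟩ := dich (fun u v => ¬ E u v) (fun u v => not_congr (hsym u v))
      (noSh_not hE) (A Q γ') Q (fun a ha => ha.1) hQ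
    obtain ⟨S3, h3, h3', h3''⟩ : ∃ S : Finset V, (S : Set V) ⊆ U ∧ S.card ≤ 1 ∧
        (Q.Nonempty → ∃ w ∈ S, w ∈ Q) := by
      by_cases h : Q.Nonempty
      · obtain ⟨w, hw⟩ := h
        exact ⟨{w}, by simpa using hQ hw, by simp, fun _ => ⟨w, by simp, hw⟩⟩
      · exact ⟨∅, by simp, by simp, fun h' => absurd h' h⟩
    refine ⟨S3 ∪ S1 ∪ S2, ?_, ?_, ?_, ?_, ?_⟩
    · simp only [Finset.coe_union, Set.union_subset_iff]
      exact ⟨⟨h3, h1⟩, h2⟩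
    · have e1 := Finset.card_union_le (S3 ∪ S1) S2
      have e2 := Finset.card_union_le S3 S1
      omega
    · intro h
      obtain ⟨w, hw, h⟩ := h3'' h
      exact ⟨w, by simp [hw], h⟩
    · exact h1''.mono (fun x hx => by simp [hx])
    · exact h2''.mono (fun x hx => by simp [hx])
  have hP : ∀ γ, ∃ S : Finset V, (S : Set V) ⊆ U ∧ S.card ≤ n ∧ P γ S := by
    intro γ
    rcases scatter G r {a | a ∈ U ∧ c a = γ} 3 with ⟨f, hf, hf2⟩ | ⟨B, hB, hB2⟩
    · refine ⟨Finset.univ.image f, ?_, ?_, Or.inl fun u u' => ?_⟩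
      · intro x hx
        simp only [Finset.coe_image, Finset.coe_univ, Set.image_univ, Set.mem_range] at hx
        obtain ⟨i, rfl⟩ := hx
        exact (hf i).1
      · refine Finset.card_image_le.trans ?_
        simp [n]
      · obtain ⟨p, hp⟩ := scatter_avoid G r 3 (ι := Fin 2) (by simp) f hf2 ![u, u']
        exact ⟨f p, by simp, (hf p).2, hp 0, hp 1⟩
    · obtain ⟨S, h1, h2, h3⟩ := union_fin U (fun q : Fin 3 × K => P2 (Q γ (B q.1)) q.2)
        (fun q S T => P2mono _ _ S T) (1 + s0 + s0) (fun q => hP2 _ _ (fun a ha => ha.1))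
      exact ⟨S, h1, by simp only [n]; omega, Or.inr ⟨B, hB, fun a ha ha' => hB2 a ⟨ha, ha'⟩, h3⟩⟩
  obtain ⟨S, hSU, hSn, hSP⟩ := union_fin U P Pmono n hP
  refine ⟨S, hSU, hSn, ?_⟩
  have rep : ∀ u u' v, u' ∈ U → v ∈ U → ¬ Near G (20 * r) u v →
      (∃ w ∈ S, c w = c v ∧ ¬ Near G r u w ∧ ¬ Near G r u' w) ∨
      (Near G (5 * r) u' v ∧ ∃ Q A : Set V, v ∈ Q ∧ (∀ a ∈ Q, c a = c v) ∧
        (∀ a ∈ Q, ∀ b ∈ Q, Near G (4 * r) a b) ∧ u' ∈ A ∧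
        (∀ a ∈ A, c a = c u' ∧ ∃ b ∈ Q, Near G (5 * r) a b) ∧ Dich S E A Q ∧
        Dich S (fun u v => ¬ E u v) A Q) := by
    intro u u' v hu' hv huv
    rcases hSP (c v) with h | ⟨B, hBd, hBc, h⟩
    · exact Or.inl (h u u')
    · obtain ⟨p, hp⟩ := hBc v hv rfl
      have hvQ : v ∈ Q (c v) (B p) := ⟨hv, rfl, hp⟩
      obtain ⟨h1, h2, h3⟩ := h (p, c u')
      obtain ⟨w, hwS, hwQ⟩ := h1 ⟨v, hvQ⟩
      have hwv : Near G (4 * r) w v := hBd p w hwQ.2.2 v hp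
      by_cases hn : Near G r u' w
      · right
        have hu'v : Near G (5 * r) u' v := hn.trans hwv (by omega)
        exact ⟨hu'v, Q (c v) (B p), A (Q (c v) (B p)) (c u'), hvQ, fun a ha => ha.2.1,
          fun a ha b hb => hBd p a ha.2.2 b hb.2.2, ⟨hu', rfl, v, hvQ, hu'v⟩,
          fun a ha => ha.2, h2, h3⟩
      · left
        exact ⟨w, hwS, hwQ.2.1, fun h => huv (h.trans hwv (by omega)), hn⟩
  intro u hu v hv u' hu' v' hv' huv huv' htu htv hEuv
  have hvu' : ¬ Near G (20 * r) v' u' := fun h => huv' h.symm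
  have hvu : ¬ Near G (20 * r) v u := fun h => huv h.symm
  rcases rep u u' v hu' hv huv with ⟨w, hwS, hwc, hw1, hw2⟩ |
    ⟨hnear, Q, A, a1, a2, a3, a4, a5, a6, a7⟩
  · rcases rep v' v u' hv hu' hvu' with ⟨w', hwS', hwc', hw1', hw2'⟩ |
      ⟨hnear, Q, A, a1, a2, a3, a4, a5, a6, a7⟩
    · have e1 : E u v ↔ E u w :=
        hloc _ _ _ _ (fun h => huv (h.mono (by omega))) hw1 rfl hwc.symm
      have e2 : E u' w ↔ E w' v :=
        hloc _ _ _ _ hw2 (fun h => hw2' h.symm) hwc'.symm hwc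
      have e3 : E v' w' ↔ E v' u' :=
        hloc _ _ _ _ hw1' (fun h => hvu' (h.mono (by omega))) rfl hwc'
      rw [hsym u' v', ← e3, ← htv w' hwS', hsym v w', ← e2, ← htu w hwS, ← e1]
      exact hEuv
    · by_contra hcon
      refine narrow_case (E := fun u v => ¬ E u v)
        (fun a b a' b' h1 h2 h3 h4 => not_congr (hloc a b a' b' h1 h2 h3 h4))
        (fun a b => not_congr (hsym a b)) hvu' hvu (fun w hw => not_congr (htv w hw).symm)
        (fun w hw => not_congr (htu w hw).symm) a1 a2 a3 a4 a5 hnear a7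
        (fun h => hcon ((hsym _ _).1 h)) ((hsym _ _).1 hEuv)
  · exact narrow_case hloc hsym huv huv' htu htv a1 a2 a3 a4 a5 hnear a6 hEuv

end Core

end FlipAux

/-- a step of Lemma 15 of the paper. For every pair of first-order
formulas `φ(x,y)`, `δ(x)` in the language of graphs and every `d` there exist `s, r : ℕ`
such that: for every finite graph `G` on which `φ` is symmetric and has VC-dimension at
most `d`, letting `U = {v : G ⊨ δ(v)}` and `H` be the graph on `U` where distinct `u, v`
are adjacent iff `G ⊨ φ(u,v)`, there are a set `S ⊆ U` with `|S| ≤ s` and a symmetric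
relation `R` on subsets of `S` such that the flip `F` of `H` guarded by `S` determined
by `R` — distinct `u, v ∈ U` adjacent in `F` iff exactly one of `uv ∈ E(H)` and
`(N_H(u) ∩ S, N_H(v) ∩ S) ∈ R` holds — has all its edges joining vertices at
`G`-distance at most `r`. -/
theorem flipping_lemma (φ : Language.graph.Formula (Fin 2))
    (δ : Language.graph.Formula (Fin 1)) (d : ℕ) :
    ∃ s r : ℕ, ∀ (V : Type) [Fintype V] (G : SimpleGraph V),
      letI := G.structure
      (¬ ∃ (a : Fin (d + 1) → V) (b : Finset (Fin (d + 1)) → V),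
          ∀ (i : Fin (d + 1)) (I : Finset (Fin (d + 1))),
            φ.Realize ![a i, b I] ↔ i ∈ I) →
      (∀ u v : V, φ.Realize ![u, v] ↔ φ.Realize ![v, u]) →
      ∃ (S : Finset V) (R : Set V → Set V → Prop),
        (S : Set V) ⊆ {w | δ.Realize ![w]} ∧ S.card ≤ s ∧
        (∀ X Y : Set V, R X Y ↔ R Y X) ∧
        ∀ u v : V, δ.Realize ![u] → δ.Realize ![v] → u ≠ v →
          Xor' (φ.Realize ![u, v])
            (R {w | w ∈ S ∧ w ≠ u ∧ φ.Realize ![u, w]}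
               {w | w ∈ S ∧ w ≠ v ∧ φ.Realize ![v, w]}) →
          G.edist u v ≤ (r : ℕ∞) := by
  obtain ⟨r, K, hK, hloc⟩ := FlipAux.locality φ
  obtain ⟨s, hs⟩ := FlipAux.core (d + 1 + d) r K
  refine ⟨s, 20 * r, fun V _ G => ?_⟩
  intro hvc hsym
  obtain ⟨c, hc⟩ := hloc V G
  letI := G.structure
  let E : V → V → Prop := fun u v => φ.Realize ![u, v] ∧ u ≠ v
  have hEsym : ∀ u v, E u v ↔ E v u := fun u v => and_congr (hsym u v) ne_comm
  have hno : FlipAux.NoSh (fun u v : V => φ.Realize ![u, v]) (d + 1) := by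
    rintro ⟨a, b, hab⟩
    exact hvc ⟨a, b, fun i I => (hsym _ _).trans (hab i I)⟩
  have hne : ∀ u v : V, ¬ FlipAux.Near G r u v → u ≠ v := by
    rintro u v h rfl
    exact h (FlipAux.Near.refl G r u)
  have hE : FlipAux.Loc G r c E := by
    intro u v u' v' h1 h2 h3 h4
    have := hc u v u' v' h1 h2 h3 h4
    simp only [E, this, ne_eq, hne u v h1, hne u' v' h2]
  obtain ⟨S, hSU, hSs, hS⟩ := hs V G {w | δ.Realize ![w]} E c hEsym (FlipAux.noSh_ne hno) hE
  let tr : V → Set V := fun u => {w | w ∈ S ∧ w ≠ u ∧ φ.Realize ![u, w]}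
  have htr : ∀ u u', tr u = tr u' → ∀ w ∈ S, (E u w ↔ E u' w) := by
    intro u u' h w hw
    have h' : w ∈ tr u ↔ w ∈ tr u' := by rw [h]
    have aux : ∀ x, w ∈ tr x ↔ E x w := fun x =>
      ⟨fun h => ⟨h.2.2, h.2.1.symm⟩, fun h => ⟨hw, h.2.symm, h.1⟩⟩
    rwa [aux, aux] at h'
  refine ⟨S, fun X Y => ∃ u v : V, δ.Realize ![u] ∧ δ.Realize ![v] ∧
    ¬ FlipAux.Near G (20 * r) u v ∧ E u v ∧ tr u = X ∧ tr v = Y, hSU, hSs, ?_, ?_⟩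
  · have : ∀ X Y : Set V, (∃ u v : V, δ.Realize ![u] ∧ δ.Realize ![v] ∧
        ¬ FlipAux.Near G (20 * r) u v ∧ E u v ∧ tr u = X ∧ tr v = Y) →
        (∃ u v : V, δ.Realize ![u] ∧ δ.Realize ![v] ∧
        ¬ FlipAux.Near G (20 * r) u v ∧ E u v ∧ tr u = Y ∧ tr v = X) := by
      rintro X Y ⟨u, v, h1, h2, h3, h4, h5, h6⟩
      exact ⟨v, u, h2, h1, fun h => h3 h.symm, (hEsym u v).1 h4, h6, h5⟩
    exact fun X Y => ⟨this X Y, this Y X⟩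
  · intro u v hu hv huv hxor
    by_contra hfar
    have hfar' : ¬ FlipAux.Near G (20 * r) u v := hfar
    rcases hxor with ⟨h1, h2⟩ | ⟨⟨u0, v0, h1, h2, h3, h4, h5, h6⟩, hn⟩
    · exact h2 ⟨u, v, hu, hv, hfar', ⟨h1, huv⟩, rfl, rfl⟩
    · exact hn (hS u0 h1 v0 h2 u hu v hv h3 hfar' (htr u0 u h5) (htr v0 v h6) h4).1
end
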